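/- Let Ω ⊂ ℂⁿ, n ≥ 2, be a bounded simply-connected pseudoconvex domain with C^∞ boundary, and let p ∈ ∂Ω be a strongly pseudoconvex boundary point. Let F : Ω → Ω be a holomorphic map such that F(q) = q for some q ∈ Ω and F(z) = z + o(‖z−p‖²) as z → p within Ω. Then F(z) = z for all z ∈ Ω. -/

import Mathlib

open Complex Topology Filter Metric Set Function

noncomputable section

/-- `ℂⁿ` as a normed space. -/
abbrev En (n : ℕ) : Type := EuclideanSpace ℂ (Fin n)

/-- A domain: a nonempty open connected set. -/
def IsDomain' {n : ℕ} (Ω : Set (En n)) : Prop :=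
  IsOpen Ω ∧ IsConnected Ω

/-- The Levi form of `ρ` at `q` in direction `ξ`:
`(1/4)(H_q(ξ,ξ) + H_q(iξ,iξ))` with `H_q` the second real Fréchet derivative. -/
def LeviForm {n : ℕ} (ρ : En n → ℝ) (q ξ : En n) : ℝ :=
  (1 / 4) * (iteratedFDeriv ℝ 2 ρ q ![ξ, ξ] + iteratedFDeriv ℝ 2 ρ q ![I • ξ, I • ξ])

/-- `ξ` lies in the complex tangent space of `{ρ = 0}` at `q`. -/
def InCplxTangent {n : ℕ} (ρ : En n → ℝ) (q ξ : En n) : Prop :=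
  fderiv ℝ ρ q ξ = 0 ∧ fderiv ℝ ρ q (I • ξ) = 0

/-- `ρ` is a `C^m` defining function for `Ω`. -/
def IsDefiningFunction {n : ℕ} (Ω : Set (En n)) (m : ℕ∞) (ρ : En n → ℝ) : Prop :=
  ContDiff ℝ m ρ ∧ Ω = {z | ρ z < 0} ∧ frontier Ω = {z | ρ z = 0} ∧
    ∀ q ∈ frontier Ω, fderiv ℝ ρ q ≠ 0

/-- `q` is a strongly pseudoconvex point with respect to `ρ`. -/
def StronglyPcxAt {n : ℕ} (ρ : En n → ℝ) (q : En n) : Prop :=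
  ∀ ξ : En n, ξ ≠ 0 → InCplxTangent ρ q ξ → 0 < LeviForm ρ q ξ

/-- `Ω` is pseudoconvex with `C^∞` boundary, witnessed by the defining function `ρ`. -/
def IsPcxCinfBoundary {n : ℕ} (Ω : Set (En n)) (ρ : En n → ℝ) : Prop :=
  IsDefiningFunction Ω ⊤ ρ ∧
    ∀ q ∈ frontier Ω, ∀ ξ : En n, InCplxTangent ρ q ξ → 0 ≤ LeviForm ρ q ξ

/-- `F z = z + o(‖z - p‖^k)` as `z → p` within `Ω`. -/
def LittleOh {n : ℕ} (Ω : Set (En n)) (F : En n → En n) (p : En n) (k : ℕ) : Prop :=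
  Tendsto (fun z => ‖F z - z‖ / ‖z - p‖ ^ k) (𝓝[Ω] p) (𝓝 0)

/-- `F` is an automorphism of `Ω`: a holomorphic bijection with holomorphic inverse. -/
def IsAutomorphismOf {n : ℕ} (F : En n → En n) (Ω : Set (En n)) : Prop :=
  DifferentiableOn ℂ F Ω ∧ MapsTo F Ω Ω ∧
    ∃ G : En n → En n, DifferentiableOn ℂ G Ω ∧ MapsTo G Ω Ω ∧
      (∀ z ∈ Ω, G (F z) = z) ∧ (∀ z ∈ Ω, F (G z) = z)

/-- `E` is continuous on `U` and touched from below at every point of `U` by the modulus of a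
holomorphic function; in particular `log E` is subharmonic. -/
def HasHolomorphicSupport (E : ℂ → ℝ) (U : Set ℂ) : Prop :=
  ContinuousOn E U ∧ ∀ c ∈ U, ∃ g : ℂ → ℂ,
    (∀ᶠ z in 𝓝 c, DifferentiableAt ℂ g z ∧ ‖g z‖ ≤ E z) ∧ ‖g c‖ = E c

lemma HasHolomorphicSupport.nonneg {E : ℂ → ℝ} {U : Set ℂ} (h : HasHolomorphicSupport E U)
    {c : ℂ} (hc : c ∈ U) : 0 ≤ E c := by
  obtain ⟨g, -, hg⟩ := h.2 c hc
  exact hg ▸ norm_nonneg _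

lemma HasHolomorphicSupport.comp {E : ℂ → ℝ} {U V : Set ℂ} (h : HasHolomorphicSupport E U)
    (hV : IsOpen V) {φ : ℂ → ℂ} (hφ : DifferentiableOn ℂ φ V) (hm : MapsTo φ V U) :
    HasHolomorphicSupport (fun z => E (φ z)) V := by
  refine ⟨h.1.comp hφ.continuousOn hm, fun c hc => ?_⟩
  obtain ⟨g, hg, hgc⟩ := h.2 _ (hm hc)
  refine ⟨g ∘ φ, ?_, hgc⟩
  have hcont : ContinuousAt φ c := (hφ.continuousOn).continuousAt (hV.mem_nhds hc)
  filter_upwards [hcont.eventually hg, hV.mem_nhds hc] with z hz hzV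
  exact ⟨hz.1.comp z (hφ.differentiableAt (hV.mem_nhds hzV)), hz.2⟩

lemma hasHolomorphicSupport_norm {f : ℂ → ℂ} {U : Set ℂ} (hU : IsOpen U)
    (hf : DifferentiableOn ℂ f U) : HasHolomorphicSupport (fun z => ‖f z‖) U :=
  ⟨hf.continuousOn.norm, fun c hc => ⟨f, by
    filter_upwards [hU.mem_nhds hc] with z hz
    exact ⟨hf.differentiableAt (hU.mem_nhds hz), le_rfl⟩, rfl⟩⟩

/-- Two-circles estimate: if `E ≤ 1` on the unit disc and `E ≤ s ^ α` on the disc of radius `s`,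
then `E z ≤ ‖z‖ ^ α` in between. -/
lemma HasHolomorphicSupport.le_rpow {E : ℂ → ℝ} (h : HasHolomorphicSupport E (ball 0 1))
    (h1 : ∀ z ∈ ball (0 : ℂ) 1, E z ≤ 1) {s α : ℝ} (hs : 0 < s) (hα : 0 ≤ α)
    (hsmall : ∀ z ∈ ball (0 : ℂ) 1, ‖z‖ ≤ s → E z ≤ s ^ α) {z : ℂ} (hz : z ∈ ball (0 : ℂ) 1)
    (hsz : s ≤ ‖z‖) : E z ≤ ‖z‖ ^ α := by
  have hz1 : ‖z‖ < 1 := by simpa using hz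
  have key : ∀ t ∈ Ioo ‖z‖ 1, E z * ‖z‖ ^ (-α) ≤ t ^ (-α) := by
    rintro t ⟨hzt, ht1⟩
    have ht0 : 0 < t := (hs.trans_le hsz).trans hzt
    set K : Set ℂ := {w | s ≤ ‖w‖ ∧ ‖w‖ ≤ t} with hK
    have hKball : K ⊆ ball 0 1 := fun w hw => by
      simpa using hw.2.trans_lt ht1
    have hKcl : IsClosed K :=
      (isClosed_le continuous_const continuous_norm).inter
        (isClosed_le continuous_norm continuous_const)
    have hKc : IsCompact K :=
      (isCompact_closedBall (0 : ℂ) t).of_isClosed_subset hKcl fun w hw => by simpa using hw.2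
    set T : ℂ → ℝ := fun w => E w * ‖w‖ ^ (-α) with hT
    have hTc : ContinuousOn T K := by
      refine (h.1.mono hKball).mul (ContinuousOn.rpow_const continuous_norm.continuousOn ?_)
      intro w hw
      exact Or.inl (hs.trans_le hw.1).ne'
    have hzK : z ∈ K := ⟨hsz, hzt.le⟩
    obtain ⟨w₀, hw₀, hmax₀⟩ := hKc.exists_isMaxOn ⟨z, hzK⟩ hTc
    set A : Set ℂ := K ∩ T ⁻¹' {T w₀} with hA
    have hAc : IsCompact A :=
      hKc.of_isClosed_subset (hTc.preimage_isClosed_of_isClosed hKcl isClosed_singleton)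
        inter_subset_left
    obtain ⟨c, hcA, hcmax⟩ := hAc.exists_isMaxOn ⟨w₀, hw₀, rfl⟩ continuous_norm.continuousOn
    have hcK : c ∈ K := hcA.1
    have hTc' : T c = T w₀ := hcA.2
    have hmax : ∀ w ∈ K, T w ≤ T c := fun w hw => hTc' ▸ hmax₀ hw
    have hc0 : 0 < ‖c‖ := hs.trans_le hcK.1
    have hc0' : c ≠ 0 := norm_pos_iff.1 hc0
    by_contra hlt
    push Not at hlt
    have hTcbig : t ^ (-α) < T c := hlt.trans_le (hmax z hzK)
    have hone : 1 ≤ t ^ (-α) := Real.one_le_rpow_of_pos_of_le_one_of_nonpos ht0 ht1.le (by linarith)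
    have hcs : s < ‖c‖ := by
      refine lt_of_le_of_ne hcK.1 fun heq => ?_
      have : T c ≤ 1 := by
        have h2 := hsmall c (hKball hcK) heq.ge
        calc T c ≤ s ^ α * ‖c‖ ^ (-α) := by
              exact mul_le_mul_of_nonneg_right h2 (by positivity)
          _ = 1 := by
              rw [← heq, ← Real.rpow_add hs]; simp
      linarith
    have hct : ‖c‖ < t := by
      refine lt_of_le_of_ne hcK.2 fun heq => ?_
      have : T c ≤ t ^ (-α) := by
        calc T c ≤ 1 * ‖c‖ ^ (-α) :=
              mul_le_mul_of_nonneg_right (h1 c (hKball hcK)) (by positivity)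
          _ = t ^ (-α) := by rw [heq, one_mul]
      linarith
    obtain ⟨g, hg, hgc⟩ := h.2 c (hKball hcK)
    set G : ℂ → ℂ := fun w => g w * ((w / c) ^ ((-α : ℝ) : ℂ) * ((‖c‖ ^ (-α) : ℝ) : ℂ)) with hG
    have hGn : ∀ w, ‖G w‖ = ‖g w‖ * ‖w‖ ^ (-α) := by
      intro w
      simp only [hG, norm_mul, norm_cpow_real, norm_div, Complex.norm_real, Real.norm_eq_abs]
      rw [abs_of_pos (Real.rpow_pos_of_pos hc0 _), ← Real.mul_rpow (by positivity) (by positivity),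
        div_mul_cancel₀ _ hc0.ne']
    have hKn : ∀ᶠ w in 𝓝 c, w ∈ K := by
      filter_upwards [continuous_norm.continuousAt.eventually (lt_mem_nhds hcs),
        continuous_norm.continuousAt.eventually (gt_mem_nhds hct)] with w h1 h2
      exact ⟨h1.le, h2.le⟩
    have hslit : ∀ᶠ w in 𝓝 c, w / c ∈ slitPlane := by
      have : ContinuousAt (fun w : ℂ => w / c) c := by fun_prop
      refine this.eventually (isOpen_slitPlane.mem_nhds ?_)
      change c / c ∈ slitPlane
      rw [div_self hc0']; exact one_mem_slitPlane
    have hGle : ∀ᶠ w in 𝓝 c, ‖G w‖ ≤ T w := by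
      filter_upwards [hg] with w hw
      rw [hGn]
      exact mul_le_mul_of_nonneg_right hw.2 (by positivity)
    have hGcc : ‖G c‖ = T c := by rw [hGn, hgc]
    have hev := norm_eventually_eq_of_isLocalMax (f := G) (c := c)
      (by
        filter_upwards [hg, hslit] with w hw hws
        refine hw.1.mul (DifferentiableAt.mul ?_ (differentiableAt_const _))
        exact (differentiableAt_id.div_const c).cpow_const hws)
      (by
        filter_upwards [hGle, hKn] with w hw hwK
        simp only [comp_apply]
        rw [hGcc]
        exact hw.trans (hmax w hwK))
    have hconst : ∀ᶠ w in 𝓝 c, w ∈ A := by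
      filter_upwards [hev, hGle, hKn] with w h2 h3 hwK
      refine ⟨hwK, ?_⟩
      have : T w = T c := le_antisymm (hmax w hwK) (by rw [← hGcc, ← h2]; exact h3)
      simp [this, hTc']
    have htend : Tendsto (fun x : ℝ => ((1 + x : ℝ) : ℂ) * c) (𝓝[>] 0) (𝓝 c) := by
      have : Tendsto (fun x : ℝ => ((1 + x : ℝ) : ℂ) * c) (𝓝 0) (𝓝 (((1 + 0 : ℝ) : ℂ) * c)) :=
        (Continuous.tendsto (by fun_prop) 0)
      simp only [add_zero, ofReal_one, one_mul] at this
      exact this.mono_left nhdsWithin_le_nhds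
    obtain ⟨x, hx, hx0⟩ := ((htend.eventually hconst).and self_mem_nhdsWithin).exists
    have hx0' : (0 : ℝ) < x := hx0
    have hle : ‖((1 + x : ℝ) : ℂ) * c‖ ≤ ‖c‖ := hcmax hx
    rw [norm_mul, Complex.norm_real, Real.norm_eq_abs, abs_of_pos (by linarith)] at hle
    nlinarith
  have hlim : E z * ‖z‖ ^ (-α) ≤ 1 := by
    have : Tendsto (fun t : ℝ => t ^ (-α)) (𝓝[<] 1) (𝓝 (1 ^ (-α))) :=
      (Real.continuousAt_rpow_const 1 (-α) (Or.inl one_ne_zero)).tendsto.mono_left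
        nhdsWithin_le_nhds
    rw [Real.one_rpow] at this
    refine ge_of_tendsto this ?_
    filter_upwards [Ioo_mem_nhdsLT hz1] with t ht using key t ht
  have hz0 : 0 < ‖z‖ := hs.trans_le hsz
  rw [Real.rpow_neg hz0.le] at hlim
  have := Real.rpow_pos_of_pos hz0 α
  rwa [← div_eq_mul_inv, div_le_one this] at hlim

/-- Exponential form of the two-circles estimate. -/
lemma HasHolomorphicSupport.le_exp {E : ℂ → ℝ} (h : HasHolomorphicSupport E (ball 0 1))
    (h1 : ∀ z ∈ ball (0 : ℂ) 1, E z ≤ 1) {L M : ℝ} (hL : 1 ≤ L) (hM : 0 ≤ M)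
    (hsmall : ∀ z ∈ ball (0 : ℂ) 1, ‖z‖ ≤ Real.exp (-L) → E z ≤ Real.exp (-M)) {z : ℂ}
    (hz : z ∈ ball (0 : ℂ) 1) : E z ≤ Real.exp (-(M / L * (1 - ‖z‖))) := by
  have hL0 : 0 < L := by linarith
  have hML : 0 ≤ M / L := by positivity
  rcases le_total ‖z‖ (Real.exp (-L)) with hle | hle
  · refine (hsmall z hz hle).trans (Real.exp_le_exp.2 ?_)
    have h2 : M / L ≤ M := div_le_self hM hL
    nlinarith [norm_nonneg z]
  · have hz0 : 0 < ‖z‖ := (Real.exp_pos _).trans_le hle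
    refine (h.le_rpow h1 (Real.exp_pos (-L)) hML ?_ hz hle).trans ?_
    · intro w hw hws
      refine (hsmall w hw hws).trans_eq ?_
      rw [← Real.exp_mul]
      congr 1
      field_simp
    · rw [Real.rpow_def_of_pos hz0]
      apply Real.exp_le_exp.2
      nlinarith [Real.log_le_sub_one_of_pos hz0]

/-- The absolute constant in the disc estimate centred off the origin. -/
lemma exp_neg_four_le : Real.exp (-4) ≤ 1 / 32 := by
  rw [Real.exp_neg, inv_eq_one_div]
  have h := Real.exp_one_gt_d9
  have : Real.exp 4 = Real.exp 1 ^ 4 := by rw [← Real.exp_nat_mul]; norm_num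
  apply one_div_le_one_div_of_le (by norm_num)
  rw [this]
  calc (32 : ℝ) ≤ 2.7 ^ 4 := by norm_num
    _ ≤ _ := by gcongr; linarith

/-- Disc estimate centred at a point `a` of `[0, 1)`: smallness on the disc of radius `(1 - a) / 8`
around `a` propagates with a Poisson-kernel-like loss. -/
lemma HasHolomorphicSupport.le_exp_poisson {E : ℂ → ℝ} (h : HasHolomorphicSupport E (ball 0 1))
    (h1 : ∀ z ∈ ball (0 : ℂ) 1, E z ≤ 1) {a M : ℝ} (ha0 : 0 ≤ a) (ha1 : a < 1) (hM : 0 ≤ M)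
    (hsmall : ∀ z ∈ ball (0 : ℂ) 1, ‖z - a‖ ≤ (1 - a) / 8 → E z ≤ Real.exp (-M)) {z : ℂ}
    (hz : z ∈ ball (0 : ℂ) 1) :
    E z ≤ Real.exp (-(M / 8 * ((1 - a ^ 2) * (1 - ‖z‖ ^ 2) / ‖1 - a * z‖ ^ 2))) := by
  have hz1 : ‖z‖ < 1 := by simpa using hz
  have hne : ∀ w : ℂ, ‖w‖ < 1 → (1 + a * w : ℂ) ≠ 0 := by
    intro w hw h0
    have h2 : (a : ℂ) * w = -1 := by linear_combination h0
    have : ‖(a : ℂ) * w‖ = 1 := by rw [h2]; simp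
    rw [norm_mul, Complex.norm_real, Real.norm_eq_abs, abs_of_nonneg ha0] at this
    nlinarith [norm_nonneg w]
  have hne' : (1 - a * z : ℂ) ≠ 0 := by
    have := hne (-z) (by simpa using hz1)
    simpa [sub_eq_add_neg] using this
  have ident : ∀ w : ℂ, ‖1 + a * w‖ ^ 2 - ‖w + a‖ ^ 2 = (1 - a ^ 2) * (1 - ‖w‖ ^ 2) := by
    intro w
    simp only [← Complex.normSq_eq_norm_sq, Complex.normSq_apply]
    simp
    ring
  have hmaps : MapsTo (fun w : ℂ => (w + a) / (1 + a * w)) (ball 0 1) (ball 0 1) := by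
    intro w hw
    have hw1 : ‖w‖ < 1 := by simpa using hw
    have hd : 0 < ‖1 + a * w‖ := norm_pos_iff.2 (hne w hw1)
    have := ident w
    have h3 : 0 < (1 - a ^ 2) * (1 - ‖w‖ ^ 2) := by
      apply mul_pos <;> nlinarith [norm_nonneg w]
    simp only [mem_ball_zero_iff, norm_div]
    rw [div_lt_one hd]
    exact lt_of_pow_lt_pow_left₀ 2 hd.le (by linarith)
  have hcomp := h.comp isOpen_ball (φ := fun w : ℂ => (w + a) / (1 + a * w)) (V := ball 0 1)
    (fun w hw => by
      have : (1 + a * w : ℂ) ≠ 0 := hne w (by simpa using hw)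
      have : DifferentiableAt ℂ (fun w : ℂ => (w + a) / (1 + a * w)) w := by
        fun_prop (disch := assumption)
      exact this.differentiableWithinAt) hmaps
  set b : ℂ := (z - a) / (1 - a * z) with hb
  have hd : 0 < ‖1 - a * z‖ := norm_pos_iff.2 hne'
  have hid : ‖1 - a * z‖ ^ 2 - ‖z - a‖ ^ 2 = (1 - a ^ 2) * (1 - ‖z‖ ^ 2) := by
    have := ident (-z)
    rw [norm_neg, show (-z + a : ℂ) = -(z - a) by ring, norm_neg,
      show (1 + a * -z : ℂ) = 1 - a * z by ring] at this
    exact this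
  have h3 : 0 < (1 - a ^ 2) * (1 - ‖z‖ ^ 2) := by
    apply mul_pos <;> nlinarith [norm_nonneg z]
  have hb2 : 1 - ‖b‖ ^ 2 = (1 - a ^ 2) * (1 - ‖z‖ ^ 2) / ‖1 - a * z‖ ^ 2 := by
    rw [hb, norm_div, div_pow, ← hid, sub_div, div_self (by positivity)]
  have hb1 : ‖b‖ < 1 := by
    have : 0 < 1 - ‖b‖ ^ 2 := by rw [hb2]; positivity
    nlinarith [norm_nonneg b]
  have hbz : (b + a) / (1 + a * b) = z := by
    have h4 := hne b hb1
    have h10 : b * (1 - a * z) = z - a := by rw [hb]; exact div_mul_cancel₀ _ hne'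
    rw [div_eq_iff h4]
    linear_combination h10
  have main := hcomp.le_exp (fun w hw => h1 _ (hmaps hw)) (L := 4) (M := M) (by norm_num) hM
    (by
      intro w hw hwL
      refine hsmall _ (hmaps hw) ?_
      have hw1 : ‖w‖ < 1 := by simpa using hw
      have hw32 : ‖w‖ ≤ 1 / 32 := hwL.trans exp_neg_four_le
      have h5 : (w + a) / (1 + a * w) - a = w * (1 - a ^ 2) / (1 + a * w) := by
        have := hne w hw1
        rw [eq_div_iff this, sub_mul, div_mul_cancel₀ _ this]
        ring
      rw [h5, norm_div, norm_mul]
      have h6 : ‖(1 - a ^ 2 : ℂ)‖ = 1 - a ^ 2 := by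
        rw [← ofReal_pow, ← ofReal_one, ← ofReal_sub, Complex.norm_real, Real.norm_eq_abs,
          abs_of_nonneg (by nlinarith)]
      have h7 : 31 / 32 ≤ ‖1 + a * w‖ := by
        have h8 : ‖(1 : ℂ)‖ - ‖(a : ℂ) * w‖ ≤ ‖1 + a * w‖ := by
          have := norm_sub_norm_le (1 : ℂ) (-(a * w))
          simpa using this
        rw [norm_mul, Complex.norm_real, Real.norm_eq_abs, abs_of_nonneg ha0, norm_one] at h8
        nlinarith [norm_nonneg w]
      rw [h6, div_le_iff₀ (by linarith)]
      have h9 : ‖w‖ * (1 - a ^ 2) ≤ 1 / 32 * (2 * (1 - a)) := by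
        apply mul_le_mul hw32 _ (by nlinarith) (by norm_num)
        nlinarith
      nlinarith)
    (z := b) (by simpa using hb1)
  rw [hbz] at main
  refine main.trans (Real.exp_le_exp.2 ?_)
  rw [← hb2]
  have : (1 - ‖b‖ ^ 2) / 2 ≤ 1 - ‖b‖ := by nlinarith
  nlinarith

section Cauchy

variable {E G : Type*} [NormedAddCommGroup E] [NormedSpace ℂ E] [NormedAddCommGroup G]
  [NormedSpace ℂ G] {f : E → G} {c : E} {R C : ℝ}

lemma norm_fderiv_le_of_norm_le_ball (hR : 0 < R) (hf : DifferentiableOn ℂ f (ball c R))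
    (hC : ∀ z ∈ ball c R, ‖f z‖ ≤ C) : ‖fderiv ℂ f c‖ ≤ 2 * C / R := by
  refine norm_fderiv_le_div_of_mapsTo_ball hf (fun z hz => ?_) hR
  rw [mem_closedBall_iff_norm]
  linarith [norm_sub_le (f z) (f c), hC z hz, hC c (mem_ball_self hR)]

lemma norm_sub_sub_fderiv_le_of_norm_le_ball (hR : 0 < R) (hf : DifferentiableOn ℂ f (ball c R))
    (hC : ∀ z ∈ ball c R, ‖f z‖ ≤ C) {z : E} (hz : z ∈ ball c R) :
    ‖f z - f c - fderiv ℂ f c (z - c)‖ ≤ 4 * C * (‖z - c‖ / R) ^ 2 := by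
  have hfc := (hf.differentiableAt (ball_mem_nhds c hR)).hasFDerivAt
  have h := dist_le_mul_div_pow_of_mapsTo_ball_of_isLittleO (n := 1) (R₂ := 4 * C) (z := z)
    (f := fun w => f w - fderiv ℂ f c (w - c)) (c := c) (R₁ := R)
    (hf.sub (by fun_prop)) ?_ ?_ hz
  · simpa [dist_eq_norm, sub_right_comm] using h
  · intro w hw
    rw [mem_closedBall_iff_norm]
    have h1 : ‖fderiv ℂ f c (w - c)‖ ≤ 2 * C := by
      refine ((fderiv ℂ f c).le_opNorm _).trans ?_
      have hw' : ‖w - c‖ ≤ R := (mem_ball_iff_norm.1 hw).le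
      calc ‖fderiv ℂ f c‖ * ‖w - c‖ ≤ 2 * C / R * R := by
            have h0 := norm_fderiv_le_of_norm_le_ball hR hf hC
            exact mul_le_mul h0 hw' (norm_nonneg _) ((norm_nonneg _).trans h0)
        _ = 2 * C := by field_simp
    have h2 := norm_sub_le (f w - f c) (fderiv ℂ f c (w - c))
    have h3 := norm_sub_le (f w) (f c)
    simp only [sub_self, map_zero, sub_zero, sub_right_comm _ _ (f c)]
    linarith [hC w hw, hC c (mem_ball_self hR)]
  · have h2 := hfc.isLittleO
    simp only [sub_self, map_zero, sub_zero, pow_one]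
    refine (h2.congr (fun w => ?_) (fun w => rfl)).norm_right
    abel

lemma norm_sub_le_of_norm_le_ball (hR : 0 < R) (hf : DifferentiableOn ℂ f (ball c R))
    (hC : ∀ z ∈ ball c R, ‖f z‖ ≤ C) {y z : E} (hy : y ∈ ball c (R / 2)) (hz : z ∈ ball c (R / 2)) :
    ‖f z - f y‖ ≤ 4 * C / R * ‖z - y‖ := by
  have hsub : ∀ x ∈ ball c (R / 2), ball x (R / 2) ⊆ ball c R := fun x hx =>
    ball_subset_ball' (by rw [mem_ball] at hx; linarith)
  refine (convex_ball c (R / 2)).norm_image_sub_le_of_norm_fderiv_le (𝕜 := ℂ)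
    (fun x hx => ?_) (fun x hx => ?_) hy hz
  · exact hf.differentiableAt (mem_of_superset (ball_mem_nhds x (half_pos hR)) (hsub x hx))
  · refine (norm_fderiv_le_of_norm_le_ball (half_pos hR) (hf.mono (hsub x hx))
      fun w hw => hC w (hsub x hx hw)).trans_eq ?_
    field_simp
    ring

lemma norm_fderiv_sub_fderiv_le (hR : 0 < R) (hf : DifferentiableOn ℂ f (ball c R))
    (hC : ∀ z ∈ ball c R, ‖f z‖ ≤ C) {y z : E} (hy : y ∈ ball c (R / 4)) (hz : z ∈ ball c (R / 4)) :
    ‖fderiv ℂ f z - fderiv ℂ f y‖ ≤ 32 * C / R ^ 2 * ‖z - y‖ := by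
  have hd : ∀ x ∈ ball c R, DifferentiableAt ℂ f x := fun x hx =>
    hf.differentiableAt (isOpen_ball.mem_nhds hx)
  have hy' : dist y c < R / 4 := hy
  have hz' : dist z c < R / 4 := hz
  have hm1 : ∀ x ∈ ball y (R / 4), x ∈ ball c (R / 2) := fun x hx => by
    rw [mem_ball] at *
    linarith [dist_triangle x y c]
  have hm2 : ∀ x ∈ ball y (R / 4), x + (z - y) ∈ ball c (R / 2) := fun x hx => by
    have h1 : dist (x + (z - y)) z = dist x y := by
      rw [dist_eq_norm, dist_eq_norm]; congr 1; abel
    rw [mem_ball] at *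
    linarith [dist_triangle (x + (z - y)) z c]
  have hsub : ball c (R / 2) ⊆ ball c R := ball_subset_ball (by linarith)
  set g : E → G := fun x => f (x + (z - y)) - f x with hg
  have hgd : ∀ x ∈ ball y (R / 4), HasFDerivAt g (fderiv ℂ f (x + (z - y)) - fderiv ℂ f x) x := by
    intro x hx
    have h1 := (hd _ (hsub (hm2 x hx))).hasFDerivAt
    have h2 := h1.comp x ((hasFDerivAt_id x).add_const (z - y))
    rw [ContinuousLinearMap.comp_id] at h2
    exact h2.sub (hd _ (hsub (hm1 x hx))).hasFDerivAt
  have h3 := norm_fderiv_le_of_norm_le_ball (f := g) (c := y) (R := R / 4)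
    (C := 4 * C / R * ‖z - y‖) (by linarith)
    (fun x hx => (hgd x hx).differentiableAt.differentiableWithinAt)
    (fun x hx => by
      have := norm_sub_le_of_norm_le_ball hR hf hC (hm1 x hx) (hm2 x hx)
      simpa using this)
  rw [(hgd y (mem_ball_self (by linarith))).fderiv, add_sub_cancel] at h3
  refine h3.trans_eq ?_
  field_simp
  ring

/-- The derivative of a holomorphic map is holomorphic along complex lines. -/
lemma differentiableOn_fderiv_line [CompleteSpace G] {U : Set E} (hU : IsOpen U)
    (hf : DifferentiableOn ℂ f U) (x v w : E) :
    DifferentiableOn ℂ (fun ζ : ℂ => fderiv ℂ f (x + ζ • v) w) {ζ : ℂ | x + ζ • v ∈ U} := by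
  intro ζ₀ hζ₀
  refine DifferentiableAt.differentiableWithinAt ?_
  have hline : Continuous fun ζ : ℂ => x + ζ • v := by fun_prop
  have hbd : ∀ᶠ y in 𝓝 (x + ζ₀ • v), y ∈ U ∧ ‖f y‖ ≤ ‖f (x + ζ₀ • v)‖ + 1 := by
    have hc : ContinuousAt (fun y => ‖f y‖) (x + ζ₀ • v) :=
      (hf.continuousOn.continuousAt (hU.mem_nhds hζ₀)).norm
    filter_upwards [hU.mem_nhds hζ₀, hc.eventually (gt_mem_nhds (lt_add_one _))] with y h1 h2
    exact ⟨h1, h2.le⟩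
  obtain ⟨R, hR, hball⟩ := Metric.eventually_nhds_iff_ball.1 hbd
  set C := ‖f (x + ζ₀ • v)‖ + 1
  have hC0 : 0 ≤ C := by positivity
  set V : Set ℂ := (fun ζ : ℂ => x + ζ • v) ⁻¹' ball (x + ζ₀ • v) (R / 2) with hV
  have hVo : IsOpen V := isOpen_ball.preimage hline
  have hζV : ζ₀ ∈ V := mem_ball_self (half_pos hR)
  have hsub : ∀ ζ ∈ V, ball (x + ζ • v) (R / 2) ⊆ ball (x + ζ₀ • v) R := fun ζ hζ =>
    ball_subset_ball' (by
      have : dist (x + ζ • v) (x + ζ₀ • v) < R / 2 := hζ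
      linarith)
  have hdf : ∀ y ∈ ball (x + ζ₀ • v) R, DifferentiableAt ℂ f y := fun y hy =>
    hf.differentiableAt (hU.mem_nhds (hball y hy).1)
  set D : ℕ → ℂ → G := fun k ζ => ((k : ℂ) + 1) • (f (x + ζ • v + ((k : ℂ) + 1)⁻¹ • w) - f (x + ζ • v))
  have hsmall : ∀ᶠ k : ℕ in atTop, ‖((k : ℂ) + 1)⁻¹ • w‖ < R / 2 := by
    have h1 : Tendsto (fun k : ℕ => ((k : ℂ) + 1)⁻¹ • w) atTop (𝓝 ((0 : ℂ) • w)) := by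
      refine Tendsto.smul_const ?_ w
      have := tendsto_one_div_add_atTop_nhds_zero_nat (𝕜 := ℂ)
      simpa using this
    rw [zero_smul] at h1
    have := h1.norm
    rw [norm_zero] at this
    exact this.eventually (gt_mem_nhds (half_pos hR))
  have hunif : TendstoUniformlyOn D (fun ζ => fderiv ℂ f (x + ζ • v) w) atTop V := by
    rw [Metric.tendstoUniformlyOn_iff]
    intro ε hε
    have hlim : Tendsto (fun k : ℕ => 4 * C * (‖w‖ / (R / 2)) ^ 2 * (1 / ((k : ℝ) + 1))) atTop
        (𝓝 (4 * C * (‖w‖ / (R / 2)) ^ 2 * 0)) :=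
      tendsto_one_div_add_atTop_nhds_zero_nat.const_mul _
    rw [mul_zero] at hlim
    filter_upwards [hsmall, hlim.eventually (gt_mem_nhds hε)] with k hk hkε ζ hζ
    refine lt_of_le_of_lt ?_ hkε
    have hk0 : ((k : ℂ) + 1) ≠ 0 := by exact_mod_cast k.succ_ne_zero
    have hkn : ‖(k : ℂ) + 1‖ = (k : ℝ) + 1 := by
      rw [← Nat.cast_succ, Complex.norm_natCast]; simp
    have h1 := norm_sub_sub_fderiv_le_of_norm_le_ball (half_pos hR)
      (c := x + ζ • v) (C := C) (f := f) (z := x + ζ • v + ((k : ℂ) + 1)⁻¹ • w)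
      (fun y hy => (hdf y (hsub ζ hζ hy)).differentiableWithinAt)
      (fun y hy => (hball y (hsub ζ hζ hy)).2)
      (by rw [mem_ball_iff_norm, add_sub_cancel_left]; exact hk)
    rw [add_sub_cancel_left, map_smul] at h1
    rw [dist_comm, dist_eq_norm]
    have h2 : D k ζ - fderiv ℂ f (x + ζ • v) w = ((k : ℂ) + 1) •
        (f (x + ζ • v + ((k : ℂ) + 1)⁻¹ • w) - f (x + ζ • v) -
          ((k : ℂ) + 1)⁻¹ • fderiv ℂ f (x + ζ • v) w) := by
      simp only [D]
      rw [smul_sub _ (f _ - f _), smul_smul, mul_inv_cancel₀ hk0, one_smul]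
    rw [h2, norm_smul, hkn]
    have hpos : (0 : ℝ) < (k : ℝ) + 1 := by positivity
    calc ((k : ℝ) + 1) * _ ≤ ((k : ℝ) + 1) * (4 * C * (‖((k : ℂ) + 1)⁻¹ • w‖ / (R / 2)) ^ 2) := by
          gcongr
      _ = _ := by
          rw [norm_smul, norm_inv, hkn]
          field_simp
  have hdiff := hunif.tendstoLocallyUniformlyOn.differentiableOn (by
    filter_upwards [hsmall] with k hk ζ hζ
    have h1 : x + ζ • v ∈ ball (x + ζ₀ • v) R :=
      hsub ζ hζ (mem_ball_self (half_pos hR))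
    have h2 : x + ζ • v + ((k : ℂ) + 1)⁻¹ • w ∈ ball (x + ζ₀ • v) R := by
      refine hsub ζ hζ ?_
      rw [mem_ball_iff_norm, add_sub_cancel_left]; exact hk
    have e1 : DifferentiableAt ℂ (fun ζ : ℂ => f (x + ζ • v)) ζ :=
      (hdf _ h1).comp ζ (by fun_prop)
    have e2 : DifferentiableAt ℂ (fun ζ : ℂ => f (x + ζ • v + ((k : ℂ) + 1)⁻¹ • w)) ζ :=
      DifferentiableAt.comp (g := f) ζ (hdf _ h2) (by fun_prop)
    exact ((e2.sub e1).const_smul _).differentiableWithinAt) hVo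
  exact hdiff.differentiableAt (hVo.mem_nhds hζV)

end Cauchy

section Propagation

variable {E : Type*} [NormedAddCommGroup E] [NormedSpace ℂ E]

/-- Exponential smallness of a locally bounded sequence of functions that are holomorphic along
complex lines propagates through a connected open set. -/
lemma exp_small_propagates {Ω : Set E} (hΩo : IsOpen Ω) (hΩc : IsPreconnected Ω) {f : ℕ → E → ℂ}
    {K : ℕ → ℝ} (hK : Tendsto K atTop atTop)
    (hf : ∀ j x v, DifferentiableOn ℂ (fun ζ : ℂ => f j (x + ζ • v)) {ζ : ℂ | x + ζ • v ∈ Ω})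
    (hbd : ∀ x ∈ Ω, ∃ r > 0, ∃ C, ∀ j, ∀ z ∈ ball x r, ‖f j z‖ ≤ C) {x₀ : E} (hx₀ : x₀ ∈ Ω)
    (h₀ : ∃ r > 0, ∃ a > 0, ∀ᶠ j in atTop, ∀ z ∈ ball x₀ r, ‖f j z‖ ≤ Real.exp (-(a * K j)))
    {x : E} (hx : x ∈ Ω) :
    ∃ r > 0, ∃ a > 0, ∀ᶠ j in atTop, ∀ z ∈ ball x r, ‖f j z‖ ≤ Real.exp (-(a * K j)) := by
  set P : Set E :=
    {x | ∃ r > 0, ∃ a > 0, ∀ᶠ j in atTop, ∀ z ∈ ball x r, ‖f j z‖ ≤ Real.exp (-(a * K j))} with hP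
  have hPo : IsOpen P := by
    rw [Metric.isOpen_iff]
    rintro x ⟨r, hr, a, ha, h⟩
    refine ⟨r / 2, half_pos hr, fun y hy => ⟨r / 2, half_pos hr, a, ha, ?_⟩⟩
    filter_upwards [h] with j hj z hz
    refine hj z ?_
    rw [mem_ball] at *
    linarith [dist_triangle z y x]
  refine hΩc.subset_of_closure_inter_subset hPo ⟨x₀, hx₀, h₀⟩ ?_ hx
  rintro x ⟨hxcl, hxΩ⟩
  obtain ⟨r₁, hr₁, hr₁Ω⟩ := Metric.isOpen_iff.1 hΩo x hxΩ
  obtain ⟨r₂, hr₂, C₀, hC₀⟩ := hbd x hxΩ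
  set R := min r₁ r₂ with hRdef
  have hR : 0 < R := lt_min hr₁ hr₂
  have hRΩ : ball x R ⊆ Ω := (ball_subset_ball (min_le_left _ _)).trans hr₁Ω
  set C := max C₀ 1 with hCdef
  have hC1 : 1 ≤ C := le_max_right _ _
  have hC : ∀ j, ∀ z ∈ ball x R, ‖f j z‖ ≤ C := fun j z hz =>
    (hC₀ j z (ball_subset_ball (min_le_right _ _) hz)).trans (le_max_left _ _)
  obtain ⟨y, hyP, hyx⟩ := Metric.mem_closure_iff.1 hxcl (R / 4) (by positivity)
  obtain ⟨r, hr, a, ha, hsm⟩ := hyP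
  set L := max 1 (Real.log (R / r)) with hL
  have hL1 : 1 ≤ L := le_max_left _ _
  have hLr : R * Real.exp (-L) ≤ r := by
    have h1 : R / r ≤ Real.exp L := by
      rw [← Real.log_le_iff_le_exp (by positivity)]; exact le_max_right _ _
    rw [Real.exp_neg]
    rw [div_le_iff₀ hr] at h1
    rw [← div_eq_mul_inv, div_le_iff₀ (Real.exp_pos L)]
    linarith
  refine ⟨R / 4, by positivity, a / (10 * L), by positivity, ?_⟩
  have hlarge : ∀ᶠ j in atTop, Real.log C ≤ a / (10 * L) * K j :=
    (hK.const_mul_atTop (by positivity)).eventually_ge_atTop _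
  filter_upwards [hsm, hlarge, hK.eventually_ge_atTop 0] with j hj hlj hKj z hz
  have hzy : ‖z - y‖ ≤ R / 2 := by
    rw [mem_ball] at hz
    rw [← dist_eq_norm]
    have := dist_triangle z x y
    linarith
  set v : E := (5 / 4 : ℂ) • (z - y) with hv
  have hvn : ‖v‖ ≤ 5 / 8 * R := by
    rw [hv, norm_smul]; norm_num; linarith
  have hin : ∀ ζ ∈ ball (0 : ℂ) 1, y + ζ • v ∈ ball x R := by
    intro ζ hζ
    have hζ1 : ‖ζ‖ < 1 := by simpa using hζ
    rw [mem_ball]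
    have h1 : dist (y + ζ • v) y ≤ 5 / 8 * R := by
      rw [dist_eq_norm, add_sub_cancel_left, norm_smul]
      nlinarith [norm_nonneg v, norm_nonneg ζ]
    rw [dist_comm] at hyx
    linarith [dist_triangle (y + ζ • v) y x]
  have hd : DifferentiableOn ℂ (fun ζ : ℂ => f j (y + ζ • v) / C) (ball 0 1) :=
    ((hf j y v).mono fun ζ hζ => hRΩ (hin ζ hζ)).div_const _
  have hnorm : ∀ ζ : ℂ, ‖f j (y + ζ • v) / C‖ = ‖f j (y + ζ • v)‖ / C := fun ζ => by
    rw [norm_div, Complex.norm_real, Real.norm_eq_abs, abs_of_pos (by linarith)]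
  have main := (hasHolomorphicSupport_norm isOpen_ball hd).le_exp (L := L) (M := a * K j)
    (fun ζ hζ => by
      rw [hnorm, div_le_one (by linarith)]
      exact hC j _ (hin ζ hζ)) hL1 (by positivity)
    (fun ζ hζ hζL => by
      rw [hnorm]
      refine (div_le_self (norm_nonneg _) hC1).trans (hj _ ?_)
      rw [mem_ball_iff_norm, add_sub_cancel_left, norm_smul]
      calc ‖ζ‖ * ‖v‖ ≤ Real.exp (-L) * (5 / 8 * R) := by gcongr
        _ < R * Real.exp (-L) := by nlinarith [mul_pos hR (Real.exp_pos (-L))]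
        _ ≤ r := hLr)
    (z := (4 / 5 : ℂ)) (by simp; norm_num)
  have hyz : y + (4 / 5 : ℂ) • v = z := by
    rw [hv, smul_smul]; norm_num
  rw [hnorm, hyz, div_le_iff₀ (by linarith)] at main
  have h45 : ‖(4 / 5 : ℂ)‖ = 4 / 5 := by norm_num
  rw [h45] at main
  calc ‖f j z‖ ≤ _ := main
    _ = Real.exp (-(a * K j / L * (1 - 4 / 5)) + Real.log C) := by
        rw [Real.exp_add, Real.exp_log (by linarith)]
    _ ≤ _ := by
        apply Real.exp_le_exp.2
        have h1 : a * K j / L * (1 - 4 / 5) = 2 * (a / (10 * L) * K j) := by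
          field_simp; ring
        rw [h1]; linarith

/-- A map that is holomorphic on a connected open set and vanishes near a point vanishes
identically. -/
lemma eq_zero_of_eventually_eq_zero {G : Type*} [NormedAddCommGroup G] [NormedSpace ℂ G]
    {Ω : Set E} (hΩo : IsOpen Ω) (hΩc : IsPreconnected Ω) {f : E → G}
    (hf : DifferentiableOn ℂ f Ω) {x₀ : E} (hx₀ : x₀ ∈ Ω) (h₀ : ∀ᶠ x in 𝓝 x₀, f x = 0) {x : E}
    (hx : x ∈ Ω) : f x = 0 := by
  by_contra hne
  obtain ⟨g, -, hg⟩ := exists_dual_vector ℂ (f x) (norm_ne_zero_iff.2 hne)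
  have hgf : DifferentiableOn ℂ (fun y => g (f y)) Ω := g.differentiable.comp_differentiableOn hf
  obtain ⟨r, hr, a, ha, h⟩ := exp_small_propagates hΩo hΩc (f := fun _ y => g (f y))
    (K := fun j => (j : ℝ)) tendsto_natCast_atTop_atTop
    (fun j y v => by
      refine hgf.comp (g := fun y => g (f y)) (by fun_prop) fun ζ hζ => hζ)
    (fun y hy => by
      have hc : ContinuousAt (fun y => ‖g (f y)‖) y :=
        (hgf.continuousOn.continuousAt (hΩo.mem_nhds hy)).norm
      obtain ⟨r, hr, h⟩ := Metric.eventually_nhds_iff_ball.1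
        (hc.eventually (gt_mem_nhds (lt_add_one _)))
      exact ⟨r, hr, _, fun _ z hz => (h z hz).le⟩)
    hx₀ (by
      obtain ⟨r, hr, h⟩ := Metric.eventually_nhds_iff_ball.1 h₀
      exact ⟨r, hr, 1, one_pos, Eventually.of_forall fun j z hz => by
        rw [h z hz, map_zero, norm_zero]; positivity⟩) hx
  have hlim : Tendsto (fun j : ℕ => Real.exp (-(a * (j : ℝ)))) atTop (𝓝 0) :=
    Real.tendsto_exp_neg_atTop_nhds_zero.comp
      ((tendsto_natCast_atTop_atTop).const_mul_atTop ha)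
  have h0 : ‖g (f x)‖ ≤ 0 := by
    refine ge_of_tendsto hlim ?_
    filter_upwards [h] with j hj using hj x (mem_ball_self hr)
  rw [hg] at h0
  apply hne
  simpa using h0

end Propagation

section LinearAlgebra

variable {E : Type*} [NormedAddCommGroup E] [NormedSpace ℂ E] [FiniteDimensional ℂ E]

lemma eq_zero_of_forall_nat_mul_le {x D : ℝ} (hx : 0 ≤ x) (h : ∀ k : ℕ, k * x ≤ D) : x = 0 := by
  by_contra hne
  have hpos : 0 < x := lt_of_le_of_ne hx (Ne.symm hne)
  obtain ⟨k, hk⟩ := exists_nat_gt (D / x)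
  rw [div_lt_iff₀ hpos] at hk
  linarith [h k]

/-- A power-bounded endomorphism either contracts volume, or is the identity, or has a
left eigenvector for a unimodular eigenvalue different from `1`. -/
lemma power_bounded_trichotomy {A : E →L[ℂ] E} {C : ℝ} (hA : ∀ k : ℕ, ‖A ^ k‖ ≤ C) :
    ‖LinearMap.det (A : E →ₗ[ℂ] E)‖ < 1 ∨ A = 1 ∨
      ∃ μ : ℂ, ‖μ‖ = 1 ∧ μ ≠ 1 ∧ ∃ ℓ : E →L[ℂ] ℂ, ℓ ≠ 0 ∧ ∀ x, ℓ (A x) = μ * ℓ x := by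
  set T : Module.End ℂ E := (A : E →ₗ[ℂ] E) with hT
  have heig : ∀ μ : ℂ, T.HasEigenvalue μ → ‖μ‖ ≤ 1 := by
    intro μ hμ
    obtain ⟨v, hv⟩ := hμ.exists_hasEigenvector
    have hAv : A v = μ • v := hv.apply_eq_smul
    have hv0 : 0 < ‖v‖ := norm_pos_iff.2 hv.2
    have hpow : ∀ k : ℕ, (A ^ k) v = μ ^ k • v := by
      intro k
      induction k with
      | zero => simp
      | succ k ih =>
        rw [pow_succ', mul_apply_eq_comp, ih, map_smul, hAv, smul_smul, pow_succ]
    by_contra hlt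
    push Not at hlt
    obtain ⟨k, hk⟩ := ((tendsto_pow_atTop_atTop_of_one_lt hlt).eventually_gt_atTop C).exists
    have h1 := (A ^ k).le_of_opNorm_le (hA k) v
    rw [hpow, norm_smul, norm_pow] at h1
    nlinarith
  have hsplit : T.charpoly.Splits := IsAlgClosed.splits _
  have hdet := Module.End.det_eq_prod_roots_charpoly_of_splits hsplit
  have hroot : ∀ μ ∈ T.charpoly.roots, T.HasEigenvalue μ := fun μ hμ =>
    (Module.End.hasEigenvalue_iff_isRoot_charpoly T μ).2 (Polynomial.isRoot_of_mem_roots hμ)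
  have hle : ∀ s : Multiset ℂ, (∀ μ ∈ s, ‖μ‖ ≤ 1) → ‖s.prod‖ ≤ 1 := by
    intro s
    induction s using Multiset.induction_on with
    | empty => simp
    | cons a s ih =>
      intro h
      rw [Multiset.prod_cons, norm_mul]
      exact mul_le_one₀ (h a (Multiset.mem_cons_self a s)) (norm_nonneg _)
        (ih fun μ hμ => h μ (Multiset.mem_cons_of_mem hμ))
  by_cases h1 : ‖LinearMap.det T‖ < 1
  · exact Or.inl h1
  right
  push Not at h1
  have hone : ∀ μ ∈ T.charpoly.roots, ‖μ‖ = 1 := by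
    intro μ hμ
    refine le_antisymm (heig μ (hroot μ hμ)) ?_
    obtain ⟨s, hs⟩ := Multiset.exists_cons_of_mem hμ
    rw [hdet, hs, Multiset.prod_cons, norm_mul] at h1
    have h2 := hle s fun ν hν => heig ν (hroot ν (hs ▸ Multiset.mem_cons_of_mem hν))
    nlinarith [norm_nonneg μ]
  by_cases h2 : ∃ μ ∈ T.charpoly.roots, μ ≠ 1
  · right
    obtain ⟨μ, hμ, hμ1⟩ := h2
    refine ⟨μ, hone μ hμ, hμ1, ?_⟩
    have hev := hroot μ hμ
    set S : E →ₗ[ℂ] E := T - algebraMap ℂ (Module.End ℂ E) μ with hS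
    have hrange : LinearMap.range S < ⊤ := by
      rw [lt_top_iff_ne_top]
      intro htop
      have hinj : LinearMap.ker S = ⊥ :=
        (LinearMap.ker_eq_bot_iff_range_eq_top (f := S)).2 htop
      obtain ⟨v, hv⟩ := hev.exists_hasEigenvector
      apply hv.2
      have : v ∈ LinearMap.ker S := by
        rw [LinearMap.mem_ker, hS, LinearMap.sub_apply, hv.apply_eq_smul]
        simp
      rw [hinj] at this
      simpa using this
    obtain ⟨φ, hφ0, hφ⟩ := Submodule.exists_le_ker_of_lt_top _ hrange
    refine ⟨LinearMap.toContinuousLinearMap φ, ?_, fun x => ?_⟩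
    · intro h0
      apply hφ0
      ext x
      have := congrArg (fun l : E →L[ℂ] ℂ => l x) h0
      simpa using this
    · have : S x ∈ LinearMap.ker φ := hφ ⟨x, rfl⟩
      rw [LinearMap.mem_ker, hS, LinearMap.sub_apply, map_sub] at this
      have h3 := sub_eq_zero.1 this
      simpa [hT] using h3
  · left
    push Not at h2
    have hall : T.charpoly.roots = Multiset.replicate (Multiset.card T.charpoly.roots) 1 :=
      Multiset.eq_replicate_card.2 h2
    set N : Module.End ℂ E := T - 1 with hN
    have hnil : N ^ (Multiset.card T.charpoly.roots) = 0 := by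
      have h3 := LinearMap.aeval_self_charpoly T
      rw [hsplit.eq_prod_roots_of_monic (LinearMap.charpoly_monic T), hall] at h3
      simpa [hN] using h3
    have hred : ∀ x, N (N x) = 0 → N x = 0 := by
      intro x hx
      have hpow : ∀ k : ℕ, (A ^ k) x = x + (k : ℂ) • N x := by
        intro k
        induction k with
        | zero => simp
        | succ k ih =>
          have hAN : ∀ y, A y = y + N y := by intro y; simp [hN, hT]
          rw [pow_succ', mul_apply_eq_comp, ih, hAN, map_add, map_smul, hx]
          push_cast
          module
      have h3 : ∀ k : ℕ, k * ‖N x‖ ≤ C * ‖x‖ + ‖x‖ := by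
        intro k
        have h4 := (A ^ k).le_of_opNorm_le (hA k) x
        have h5 : (k : ℂ) • N x = (A ^ k) x - x := by rw [hpow]; abel
        calc (k : ℝ) * ‖N x‖ = ‖(k : ℂ) • N x‖ := by rw [norm_smul]; simp
          _ ≤ ‖(A ^ k) x‖ + ‖x‖ := by rw [h5]; exact norm_sub_le _ _
          _ ≤ _ := by linarith
      exact norm_eq_zero.1 (eq_zero_of_forall_nat_mul_le (norm_nonneg _) h3)
    have hdown : ∀ k : ℕ, ∀ x, (N ^ (k + 1)) x = 0 → N x = 0 := by
      intro k
      induction k with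
      | zero => intro x hx; simpa using hx
      | succ k ih =>
        intro x hx
        refine ih x ?_
        rw [pow_succ', Module.End.mul_apply]
        apply hred
        rw [← Module.End.mul_apply, ← Module.End.mul_apply, ← pow_two, ← pow_add]
        rw [show 2 + k = k + 1 + 1 by ring]
        exact hx
    ext x
    have h6 : N x = 0 := by
      refine hdown (Multiset.card T.charpoly.roots) x ?_
      rw [pow_succ', hnil]; simp
    have h7 : A x = x + N x := by simp [hN, hT]
    rw [h7, h6]; simp

end LinearAlgebra

section Iterates

variable {E : Type*} [NormedAddCommGroup E] [NormedSpace ℂ E]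

lemma differentiableOn_iterate {Ω : Set E} {F : E → E} (hF : DifferentiableOn ℂ F Ω)
    (hm : MapsTo F Ω Ω) (k : ℕ) : DifferentiableOn ℂ F^[k] Ω := by
  induction k with
  | zero => exact differentiableOn_id
  | succ k ih => rw [iterate_succ]; exact ih.comp hF hm

lemma eventually_eq_self_of_fderiv_eq_one {Ω : Set E} (hΩ : IsOpen Ω) {F : E → E}
    (hF : DifferentiableOn ℂ F Ω) (hm : MapsTo F Ω Ω) {C : ℝ} (hC : ∀ x ∈ Ω, ‖x‖ ≤ C) {q : E}
    (hq : q ∈ Ω) (hfix : F q = q) (hA : fderiv ℂ F q = 1) : ∀ᶠ x in 𝓝 q, F x = x := by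
  obtain ⟨R, hR, hRΩ⟩ := Metric.isOpen_iff.1 hΩ q hq
  have hC0 : 0 ≤ C := (norm_nonneg q).trans (hC q hq)
  have hder : ∀ k, fderiv ℂ F^[k] q = 1 := fun k => by
    have := ((hF.differentiableAt (hΩ.mem_nhds hq)).hasFDerivAt.iterate hfix k).fderiv
    rw [this, hA, one_pow]
  set δ := min (R / 4) (R ^ 2 / (64 * (C + 1))) with hδ
  have hδ0 : 0 < δ := by positivity
  have hlip : ∀ k, ∀ x ∈ ball q δ, ∀ y ∈ ball q δ,
      ‖F^[k] y - F^[k] x - (y - x)‖ ≤ 1 / 2 * ‖y - x‖ := by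
    intro k x hx y hy
    have hdk : DifferentiableOn ℂ F^[k] (ball q R) := (differentiableOn_iterate hF hm k).mono hRΩ
    have hsub : ball q δ ⊆ ball q (R / 4) := ball_subset_ball (min_le_left _ _)
    refine (convex_ball q δ).norm_image_sub_le_of_norm_fderiv_le' (𝕜 := ℂ) (φ := 1)
      (fun z hz => hdk.differentiableAt (isOpen_ball.mem_nhds
        (ball_subset_ball (by linarith) (hsub hz)))) (fun z hz => ?_) hx hy
    have h1 := norm_fderiv_sub_fderiv_le (C := C) hR hdk
      (fun w hw => hC _ (hm.iterate k (hRΩ hw))) (mem_ball_self (by linarith)) (hsub hz)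
    rw [hder] at h1
    refine h1.trans ?_
    have h2 : ‖z - q‖ ≤ R ^ 2 / (64 * (C + 1)) :=
      (mem_ball_iff_norm.1 hz).le.trans (min_le_right _ _)
    calc 32 * C / R ^ 2 * ‖z - q‖ ≤ 32 * C / R ^ 2 * (R ^ 2 / (64 * (C + 1))) := by gcongr
      _ = C / (C + 1) / 2 := by field_simp; ring
      _ ≤ 1 / 2 := by
        gcongr
        rw [div_le_one (by linarith)]; linarith
  have hcont : ContinuousAt F q := hF.continuousOn.continuousAt (hΩ.mem_nhds hq)
  have hev : ∀ᶠ x in 𝓝 q, F x ∈ ball q δ := hcont.eventually (by rw [hfix]; exact ball_mem_nhds q hδ0)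
  filter_upwards [hev, ball_mem_nhds q hδ0, hΩ.mem_nhds hq] with x hFx hx hxΩ
  have hdrift : ∀ k : ℕ, ‖F^[k] x - x - (k : ℂ) • (F x - x)‖ ≤ k * (1 / 2 * ‖F x - x‖) := by
    intro k
    induction k with
    | zero => simp
    | succ k ih =>
      have h1 := hlip k x hx _ hFx
      rw [iterate_succ_apply]
      calc _ = ‖(F^[k] (F x) - F^[k] x - (F x - x)) + (F^[k] x - x - (k : ℂ) • (F x - x))‖ := by
            congr 1; push_cast; module
        _ ≤ 1 / 2 * ‖F x - x‖ + k * (1 / 2 * ‖F x - x‖) := norm_add_le_of_le h1 ih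
        _ = _ := by push_cast; ring
  have hz : 1 / 2 * ‖F x - x‖ = 0 := by
    refine eq_zero_of_forall_nat_mul_le (D := 2 * C) (by positivity) fun k => ?_
    have h1 := hdrift k
    have h2 : ‖(k : ℂ) • (F x - x)‖ = k * ‖F x - x‖ := by rw [norm_smul]; simp
    have h3 := norm_sub_norm_le ((k : ℂ) • (F x - x)) (F^[k] x - x)
    rw [norm_sub_rev] at h1
    have h4 := norm_sub_le (F^[k] x) x
    linarith [hC _ (hm.iterate k hxΩ), hC x hxΩ]
  have : ‖F x - x‖ = 0 := by linarith
  exact sub_eq_zero.1 (norm_eq_zero.1 this)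

end Iterates

section Discs

variable {E : Type*} [NormedAddCommGroup E] [InnerProductSpace ℂ E]

lemma mem_ball_of_orthogonal {p a v : E} (ha : a ≠ 0) (hv : inner ℂ a v = 0) {η : ℂ}
    (hη : (1 + ‖v‖ ^ 2 / ‖a‖ ^ 2) * ‖η‖ ^ 2 < 2 * η.re) :
    p + η • (v - a) ∈ ball (p - a) ‖a‖ := by
  have ha0 : 0 < ‖a‖ := norm_pos_iff.2 ha
  rw [mem_ball_iff_norm]
  have h1 : p + η • (v - a) - (p - a) = η • v + (1 - η) • a := by module
  rw [h1]
  refine lt_of_pow_lt_pow_left₀ 2 ha0.le ?_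
  have h2 : inner ℂ (η • v) ((1 - η) • a) = (0 : ℂ) := by
    rw [inner_smul_left, inner_smul_right, inner_eq_zero_symm.1 hv]; simp
  have h3 := norm_add_sq_eq_norm_sq_add_norm_sq_of_inner_eq_zero (𝕜 := ℂ) _ _ h2
  have h4 : ‖1 - η‖ ^ 2 = 1 - 2 * η.re + ‖η‖ ^ 2 := by
    simp only [← Complex.normSq_eq_norm_sq, Complex.normSq_apply]
    simp; ring
  simp only [norm_smul] at h3
  have h5 : (1 + ‖v‖ ^ 2 / ‖a‖ ^ 2) * ‖η‖ ^ 2 * ‖a‖ ^ 2 =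
      ‖η‖ ^ 2 * ‖a‖ ^ 2 + ‖η‖ ^ 2 * ‖v‖ ^ 2 := by field_simp
  have h6 := mul_lt_mul_of_pos_right hη (pow_pos ha0 2)
  rw [pow_two, h3]
  nlinarith

/-- Parametrisation of the slice through `p` in direction `v - a` by the unit disc. -/
lemma mem_ball_of_norm_lt_one {p a v : E} (ha : a ≠ 0) (hv : inner ℂ a v = 0) {ξ : ℂ}
    (hξ : ‖ξ‖ < 1) :
    p + ((1 - ξ) / (1 + ‖v‖ ^ 2 / ‖a‖ ^ 2 : ℝ)) • (v - a) ∈ ball (p - a) ‖a‖ := by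
  apply mem_ball_of_orthogonal ha hv
  set β : ℝ := 1 + ‖v‖ ^ 2 / ‖a‖ ^ 2 with hβ
  have hβ0 : 0 < β := by positivity
  rw [norm_div, Complex.norm_real, Real.norm_eq_abs, abs_of_pos hβ0, Complex.div_ofReal_re]
  have h1 : ‖1 - ξ‖ ^ 2 = 2 * (1 - ξ).re - (1 - ‖ξ‖ ^ 2) := by
    simp only [← Complex.normSq_eq_norm_sq, Complex.normSq_apply]
    simp; ring
  have h2 : β * (‖1 - ξ‖ / β) ^ 2 = ‖1 - ξ‖ ^ 2 / β := by field_simp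
  rw [h2, h1, mul_div_assoc']
  gcongr
  nlinarith [norm_nonneg ξ]

/-- Points near `p - a / 2` lie on slices through `p` close to the normal one. -/
lemma exists_orthogonal_slice {p a x : E} (ha : a ≠ 0)
    (hx : x ∈ ball (p - (1 / 2 : ℂ) • a) (‖a‖ / 64)) :
    ∃ (η : ℂ) (v : E), inner ℂ a v = 0 ∧ ‖v‖ ≤ ‖a‖ / 15 ∧ ‖1 / 2 - η‖ ≤ 1 / 64 ∧
      x = p + η • (v - a) := by
  have hR : 0 < ‖a‖ := norm_pos_iff.2 ha
  obtain ⟨h, hh⟩ : ∃ h : E, h = x - (p - (1 / 2 : ℂ) • a) := ⟨_, rfl⟩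
  have hhn : ‖h‖ < ‖a‖ / 64 := by rw [hh]; exact mem_ball_iff_norm.1 hx
  obtain ⟨θ, hθ⟩ : ∃ θ : ℂ, θ = inner ℂ a h / (‖a‖ : ℂ) ^ 2 := ⟨_, rfl⟩
  have haC : (‖a‖ : ℂ) ≠ 0 := by exact_mod_cast hR.ne'
  have hθn : ‖θ‖ ≤ 1 / 64 := by
    rw [hθ, norm_div, norm_pow, Complex.norm_real, norm_norm, div_le_iff₀ (by positivity)]
    have := norm_inner_le_norm (𝕜 := ℂ) a h
    nlinarith
  obtain ⟨η, hη⟩ : ∃ η : ℂ, η = 1 / 2 - θ := ⟨_, rfl⟩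
  have hη1 : ‖1 / 2 - η‖ ≤ 1 / 64 := by rw [hη, sub_sub_cancel]; exact hθn
  have hηlow : 31 / 64 ≤ ‖η‖ := by
    have h1 := norm_sub_norm_le (1 / 2 : ℂ) (1 / 2 - η)
    rw [sub_sub_cancel] at h1
    have h2 : ‖(1 / 2 : ℂ)‖ = 1 / 2 := by norm_num
    linarith
  have hη0 : η ≠ 0 := by
    intro h0; rw [h0, norm_zero] at hηlow; linarith
  obtain ⟨w, hw⟩ : ∃ w : E, w = h - θ • a := ⟨_, rfl⟩
  have hwn : ‖w‖ ≤ ‖a‖ / 32 := by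
    rw [hw]
    refine (norm_sub_le _ _).trans ?_
    rw [norm_smul]; nlinarith
  have hwo : inner ℂ a w = (0 : ℂ) := by
    rw [hw, inner_sub_right, inner_smul_right, inner_self_eq_norm_sq_to_K, hθ]
    simp only [coe_algebraMap]
    field_simp
    simp
  refine ⟨η, η⁻¹ • w, ?_, ?_, hη1, ?_⟩
  · rw [inner_smul_right, hwo, mul_zero]
  · rw [norm_smul, norm_inv, inv_mul_le_iff₀ (by linarith)]
    nlinarith
  · rw [smul_sub, smul_smul, mul_inv_cancel₀ hη0, one_smul, hw, hη]
    have : x = h + (p - (1 / 2 : ℂ) • a) := by rw [hh]; abel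
    rw [this]; module

/-- Smallness near a point `p - t a` close to the boundary point `p` propagates to a fixed ball. -/
lemma norm_le_exp_on_ball_of_small {Ω : Set E} {p a : E} (ha : a ≠ 0)
    (hball : ball (p - a) ‖a‖ ⊆ Ω) {f : E → ℂ} (hf : DifferentiableOn ℂ f Ω)
    (hf1 : ∀ x ∈ Ω, ‖f x‖ ≤ 1) {t M : ℝ} (ht0 : 0 < t) (ht : t ≤ 1 / 2) (hM : 0 ≤ M)
    (hsmall : ∀ x ∈ ball (p - (t : ℂ) • a) (‖a‖ * t / 4), ‖f x‖ ≤ Real.exp (-M)) {x : E}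
    (hx : x ∈ ball (p - (1 / 2 : ℂ) • a) (‖a‖ / 64)) : ‖f x‖ ≤ Real.exp (-(M * t / 100)) := by
  have hR : 0 < ‖a‖ := norm_pos_iff.2 ha
  obtain ⟨η, v, hvo, hvn, hη1, hxv⟩ := exists_orthogonal_slice ha hx
  obtain ⟨β, hβ⟩ : ∃ β : ℝ, β = 1 + ‖v‖ ^ 2 / ‖a‖ ^ 2 := ⟨_, rfl⟩
  have hβ1 : 1 ≤ β := by rw [hβ]; linarith [show 0 ≤ ‖v‖ ^ 2 / ‖a‖ ^ 2 by positivity]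
  have hβ2 : β ≤ 1 + 1 / 100 := by
    have : ‖v‖ ^ 2 / ‖a‖ ^ 2 ≤ 1 / 100 := by
      rw [div_le_iff₀ (by positivity)]
      nlinarith [norm_nonneg v]
    linarith
  have hβC : (β : ℂ) ≠ 0 := by exact_mod_cast (by linarith : β ≠ 0)
  obtain ⟨φ, hφ⟩ : ∃ φ : ℂ → E, ∀ ξ, φ ξ = p + ((1 - ξ) / (β : ℂ)) • (v - a) :=
    ⟨_, fun _ => rfl⟩
  have hφm : MapsTo φ (ball 0 1) Ω := fun ξ hξ => by
    rw [hφ, hβ]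
    exact hball (mem_ball_of_norm_lt_one ha hvo (by simpa using hξ))
  have hφd : Differentiable ℂ φ := by
    rw [funext hφ]; fun_prop
  obtain ⟨ξ₀, hξ₀⟩ : ∃ ξ₀ : ℂ, ξ₀ = 1 - β * η := ⟨_, rfl⟩
  have hξ₀n : ‖ξ₀‖ ≤ 3 / 4 := by
    have h1 : ξ₀ = 1 / 2 + (1 / 2 - η) - (((β - 1 : ℝ) : ℂ)) * η := by
      rw [hξ₀]; push_cast; ring
    have h2 : ‖(1 / 2 : ℂ)‖ = 1 / 2 := by norm_num
    have h3 : ‖η‖ ≤ 1 := by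
      have := norm_sub_le (1 / 2 : ℂ) (1 / 2 - η)
      rw [sub_sub_cancel] at this
      linarith
    have h4 : ‖(((β - 1 : ℝ) : ℂ)) * η‖ ≤ 1 / 100 := by
      rw [norm_mul, Complex.norm_real, Real.norm_eq_abs, abs_of_nonneg (by linarith)]
      nlinarith [norm_nonneg η]
    rw [h1]
    have h5 := norm_sub_le (1 / 2 + (1 / 2 - η)) ((((β - 1 : ℝ) : ℂ)) * η)
    have h6 := norm_add_le (1 / 2 : ℂ) (1 / 2 - η)
    linarith
  have hφξ : φ ξ₀ = x := by
    rw [hxv, hφ, hξ₀, sub_sub_cancel, mul_div_cancel_left₀ _ hβC]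
  have hcomp : DifferentiableOn ℂ (fun ξ => f (φ ξ)) (ball 0 1) :=
    hf.comp hφd.differentiableOn hφm
  obtain ⟨b, hb⟩ : ∃ b : ℝ, b = 1 - β * t := ⟨_, rfl⟩
  have hb0 : 0 ≤ b := by nlinarith
  have hb1 : b ≤ 1 - t := by nlinarith
  have main := (hasHolomorphicSupport_norm isOpen_ball hcomp).le_exp_poisson
    (fun ξ hξ => hf1 _ (hφm hξ)) (a := b) (M := M) hb0 (by linarith) hM
    (fun ξ hξ hξa => by
      refine hsmall _ ?_
      obtain ⟨η', hη'⟩ : ∃ η' : ℂ, η' = (1 - ξ) / β := ⟨_, rfl⟩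
      have h1 : ‖η' - t‖ ≤ t / 8 := by
        have h2 : ξ - (b : ℂ) = -(β * (η' - t)) := by
          rw [hη', mul_sub, mul_div_cancel₀ _ hβC, hb]; push_cast; ring
        rw [h2, norm_neg, norm_mul, Complex.norm_real, Real.norm_eq_abs,
          abs_of_pos (by linarith)] at hξa
        rw [hb] at hξa
        nlinarith
      have h3 : ‖η'‖ ≤ 9 / 8 * t := by
        have h4 := norm_add_le (η' - t) (t : ℂ)
        rw [sub_add_cancel, Complex.norm_real, Real.norm_eq_abs, abs_of_pos ht0] at h4
        linarith
      rw [mem_ball_iff_norm]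
      have h5 : φ ξ - (p - (t : ℂ) • a) = η' • v - (η' - t) • a := by
        rw [hφ, ← hη']; module
      rw [h5]
      calc ‖η' • v - (η' - t) • a‖ ≤ ‖η'‖ * ‖v‖ + ‖η' - t‖ * ‖a‖ := by
            rw [← norm_smul, ← norm_smul]; exact norm_sub_le _ _
        _ ≤ 9 / 8 * t * (‖a‖ / 15) + t / 8 * ‖a‖ := by gcongr
        _ < ‖a‖ * t / 4 := by nlinarith [mul_pos hR ht0])
    (z := ξ₀) (by
      rw [mem_ball_zero_iff]; linarith)
  simp only [hφξ] at main
  refine main.trans (Real.exp_le_exp.2 ?_)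
  have hbξ : ‖(b : ℂ) * ξ₀‖ ≤ 3 / 4 := by
    rw [norm_mul, Complex.norm_real, Real.norm_eq_abs, abs_of_nonneg hb0]
    nlinarith [norm_nonneg ξ₀]
  have hden : ‖1 - (b : ℂ) * ξ₀‖ ≤ 2 := by
    have := norm_sub_le (1 : ℂ) (b * ξ₀)
    rw [norm_one] at this
    linarith
  have hden0 : 0 < ‖1 - (b : ℂ) * ξ₀‖ := by
    have := norm_sub_norm_le (1 : ℂ) (b * ξ₀)
    rw [norm_one] at this
    linarith
  have hnum : t * (7 / 16) ≤ (1 - b ^ 2) * (1 - ‖ξ₀‖ ^ 2) := by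
    have h1 : t ≤ 1 - b ^ 2 := by nlinarith only [hb0, hb1, ht0, ht]
    have h2 : 7 / 16 ≤ 1 - ‖ξ₀‖ ^ 2 := by nlinarith only [norm_nonneg ξ₀, hξ₀n]
    exact mul_le_mul h1 h2 (by norm_num) (by linarith)
  have hq : t * (7 / 64) ≤ (1 - b ^ 2) * (1 - ‖ξ₀‖ ^ 2) / ‖1 - (b : ℂ) * ξ₀‖ ^ 2 := by
    rw [le_div_iff₀ (by positivity)]
    have h3 : ‖1 - (b : ℂ) * ξ₀‖ ^ 2 ≤ 4 := by nlinarith only [hden, hden0]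
    nlinarith only [mul_le_mul_of_nonneg_left h3 ht0.le, hnum]
  have := mul_le_mul_of_nonneg_left hq (by positivity : 0 ≤ M / 8)
  have h4 := mul_nonneg hM ht0.le
  linarith

end Discs

section Unimodular

variable {E : Type*} [NormedAddCommGroup E]

/-- Functions that are almost multiplied by `μ ≠ 1` under a map very close to the identity are
tiny. -/
lemma norm_le_exp_of_almost_eigenfunction [NormedSpace ℂ E] {F : E → E} {f : E → ℂ} {z : E}
    {r e τ : ℝ} {μ : ℂ}
    (hμ : ‖μ‖ = 1) (hμ1 : 0 < ‖1 - μ‖) (hr : 0 < r) (hf : DifferentiableOn ℂ f (ball z r))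
    (hf1 : ∀ x ∈ ball z r, ‖f x‖ ≤ 1) (hF : ∀ x ∈ ball z (r / 2), ‖F x - x‖ ≤ e)
    (hfF : ∀ x ∈ ball z (r / 2), ‖f (F x) - μ * f x‖ ≤ τ) {m : ℕ} (hm : 0 < m)
    (he : 96 * m * e ≤ ‖1 - μ‖ * r) (hτ : τ ≤ ‖1 - μ‖ * Real.exp (-m) / 2) :
    ∀ x ∈ ball z (r / 4), ‖f x‖ ≤ Real.exp (-m) := by
  have hm0 : (0 : ℝ) < m := by exact_mod_cast hm
  set g : ℝ := r / (4 * m) with hg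
  have hg0 : 0 < g := by positivity
  have hgm : m * g = r / 4 := by rw [hg]; field_simp
  have hμ2 : ‖1 - μ‖ ≤ 2 := by
    refine (norm_sub_le _ _).trans ?_
    rw [norm_one, hμ]; norm_num
  have heg : 24 * e ≤ ‖1 - μ‖ * g := by
    have : 96 * m * e = 4 * m * (24 * e) := by ring
    rw [this] at he
    have h2 : ‖1 - μ‖ * r = 4 * m * (‖1 - μ‖ * g) := by rw [hg]; field_simp
    rw [h2] at he
    exact le_of_mul_le_mul_left he (by positivity)
  have key : ∀ i : ℕ, i ≤ m → ∀ x ∈ ball z (r / 2 - i * g), ‖f x‖ ≤ Real.exp (-i) := by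
    intro i
    induction i with
    | zero =>
      intro _ x hx
      simp only [Nat.cast_zero, zero_mul, sub_zero] at hx
      simpa using hf1 x (ball_subset_ball (by linarith) hx)
    | succ i ih =>
      intro him x hx
      have hi := ih (by omega)
      push_cast at hx
      have hx' : dist x z < r / 2 - (i + 1) * g := hx
      have hi0 : (0 : ℝ) ≤ i := by positivity
      have hsub : ball x g ⊆ ball z (r / 2 - i * g) :=
        ball_subset_ball' (by linarith)
      have hsub2 : ball z (r / 2 - i * g) ⊆ ball z r :=
        ball_subset_ball (by nlinarith)
      have hxr : x ∈ ball z (r / 2) := by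
        rw [mem_ball]; nlinarith
      have hFx := hF x hxr
      have h1 := norm_sub_le_of_norm_le_ball hg0 (hf.mono (hsub.trans hsub2))
        (fun y hy => hi y (hsub hy)) (mem_ball_self (half_pos hg0))
        (z := F x) (by rw [mem_ball_iff_norm]; nlinarith)
      have h2 := hfF x hxr
      have h3 : (1 - μ) * f x = (f (F x) - μ * f x) - (f (F x) - f x) := by ring
      have h4 : ‖1 - μ‖ * ‖f x‖ ≤ τ + 4 * Real.exp (-i) / g * e := by
        rw [← norm_mul, h3]
        refine (norm_sub_le _ _).trans (add_le_add h2 (h1.trans ?_))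
        gcongr
      have h5 : 4 * Real.exp (-i) / g * e ≤ ‖1 - μ‖ * Real.exp (-i) / 6 := by
        rw [div_mul_eq_mul_div, div_le_iff₀ hg0]
        nlinarith [Real.exp_pos (-(i : ℝ))]
      have h6 : Real.exp (-(i : ℝ)) ≤ 3 * Real.exp (-((i : ℝ) + 1)) := by
        have : Real.exp (-(i : ℝ)) = Real.exp 1 * Real.exp (-((i : ℝ) + 1)) := by
          rw [← Real.exp_add]; congr 1; ring
        rw [this]
        have := Real.exp_one_lt_d9
        gcongr
        linarith
      have h7 : Real.exp (-(m : ℝ)) ≤ Real.exp (-((i : ℝ) + 1)) := by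
        apply Real.exp_le_exp.2
        have : ((i + 1 : ℕ) : ℝ) ≤ m := by exact_mod_cast him
        push_cast at this
        linarith
      push_cast
      refine le_of_mul_le_mul_left ?_ hμ1
      nlinarith
  intro x hx
  refine key m le_rfl x ?_
  rwa [hgm, show r / 2 - r / 4 = r / 4 by ring]

lemma exists_almost_eigenfunctions [NormedSpace ℂ E] {Ω : Set E} (hΩ : IsOpen Ω) {F : E → E}
    (hF : DifferentiableOn ℂ F Ω) (hm : MapsTo F Ω Ω) {C : ℝ} (hC : ∀ x ∈ Ω, ‖x‖ ≤ C) {q : E}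
    (hq : q ∈ Ω) (hfix : F q = q) {μ : ℂ} (hμ : ‖μ‖ = 1) {ℓ : E →L[ℂ] ℂ} (hℓ : ℓ ≠ 0)
    (hℓA : ∀ x, ℓ (fderiv ℂ F q x) = μ * ℓ x) :
    ∃ f : ℕ → E → ℂ, (∀ N, DifferentiableOn ℂ (f N) Ω) ∧ (∀ N, ∀ x ∈ Ω, ‖f N x‖ ≤ 1) ∧
      (∀ N : ℕ, ∀ x ∈ Ω, ‖f N (F x) - μ * f N x‖ ≤ 2 / (N + 1)) ∧
      ∃ w : E, ∃ c : ℂ, c ≠ 0 ∧ ∀ N, fderiv ℂ (f N) q w = c := by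
  have hC0 : 0 ≤ C := (norm_nonneg q).trans (hC q hq)
  have hμ0 : μ ≠ 0 := by intro h; rw [h, norm_zero] at hμ; norm_num at hμ
  set s : ℝ := (‖ℓ‖ * (2 * C) + 1)⁻¹ with hs
  have hs0 : 0 < s := by positivity
  set b : ℕ → E → ℂ := fun k x => (s : ℂ) * ((μ ^ k)⁻¹ * ℓ (F^[k] x - q)) with hb
  have hb1 : ∀ k, ∀ x ∈ Ω, ‖b k x‖ ≤ 1 := by
    intro k x hx
    simp only [hb]
    rw [norm_mul, norm_mul, norm_inv, norm_pow, hμ, one_pow, inv_one, one_mul, Complex.norm_real,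
      Real.norm_eq_abs, abs_of_pos hs0, hs, inv_mul_le_iff₀ (by positivity), mul_one]
    have h1 := ℓ.le_opNorm (F^[k] x - q)
    have h2 := norm_sub_le (F^[k] x) q
    have h3 : ‖F^[k] x - q‖ ≤ 2 * C := by linarith [hC _ (hm.iterate k hx), hC q hq]
    nlinarith [norm_nonneg ℓ]
  have hbd : ∀ k, DifferentiableOn ℂ (b k) Ω := fun k =>
    ((ℓ.differentiable.comp_differentiableOn
      ((differentiableOn_iterate hF hm k).sub_const q)).const_mul _).const_mul _
  have hbF : ∀ k x, b k (F x) = μ * b (k + 1) x := by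
    intro k x
    simp only [hb, iterate_succ_apply]
    rw [pow_succ]
    field_simp
  refine ⟨fun N x => (∑ k ∈ Finset.range (N + 1), b k x) / (N + 1), fun N => ?_, fun N x hx => ?_,
    fun N x hx => ?_, ?_⟩
  · simp only [div_eq_mul_inv]
    exact (DifferentiableOn.fun_sum fun k _ => hbd k).mul_const _
  · have hN : ‖((N : ℂ) + 1)‖ = (N : ℝ) + 1 := by
      rw [← Nat.cast_succ, Complex.norm_natCast]; simp
    rw [norm_div, hN, div_le_one (by positivity)]
    refine (norm_sum_le_of_le _ fun k _ => hb1 k x hx).trans ?_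
    simp
  · have hN : ‖((N : ℂ) + 1)‖ = (N : ℝ) + 1 := by
      rw [← Nat.cast_succ, Complex.norm_natCast]; simp
    have h1 : (∑ k ∈ Finset.range (N + 1), b k (F x)) / ((N : ℂ) + 1) -
        μ * ((∑ k ∈ Finset.range (N + 1), b k x) / (N + 1)) =
        μ * (b (N + 1) x - b 0 x) / (N + 1) := by
      rw [← Finset.sum_range_sub (fun k => b k x), Finset.sum_sub_distrib]
      simp only [hbF, ← Finset.mul_sum]
      ring
    rw [h1, norm_div, norm_mul, hμ, one_mul, hN]
    gcongr
    linarith [norm_sub_le (b (N + 1) x) (b 0 x), hb1 (N + 1) x hx, hb1 0 x hx]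
  · obtain ⟨w, hw⟩ : ∃ w, ℓ w ≠ 0 := by
      by_contra hcon
      push Not at hcon
      exact hℓ (by ext x; simpa using hcon x)
    refine ⟨w, s * ℓ w, mul_ne_zero (by exact_mod_cast hs0.ne') hw, fun N => ?_⟩
    have hFq := (hF.differentiableAt (hΩ.mem_nhds hq)).hasFDerivAt
    have hpow : ∀ k : ℕ, ℓ ((fderiv ℂ F q ^ k) w) = μ ^ k * ℓ w := by
      intro k
      induction k with
      | zero => simp
      | succ k ih => rw [pow_succ', mul_apply_eq_comp, hℓA, ih, pow_succ]; ring
    have hbder : ∀ k, HasFDerivAt (b k)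
        ((s : ℂ) • ((μ ^ k)⁻¹ • (ℓ.comp (fderiv ℂ F q ^ k)))) q := by
      intro k
      exact ((ℓ.hasFDerivAt.comp q ((hFq.iterate hfix k).sub_const q)).const_mul _).const_mul _
    have hsum : HasFDerivAt (fun x => (∑ k ∈ Finset.range (N + 1), b k x) / ((N : ℂ) + 1))
        (((N : ℂ) + 1)⁻¹ • ∑ k ∈ Finset.range (N + 1),
          (s : ℂ) • ((μ ^ k)⁻¹ • (ℓ.comp (fderiv ℂ F q ^ k)))) q := by
      simp only [div_eq_inv_mul]
      exact (HasFDerivAt.fun_sum fun k _ => hbder k).const_mul _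
    rw [hsum.fderiv]
    have hN : ((N : ℂ) + 1) ≠ 0 := by exact_mod_cast N.succ_ne_zero
    have hterm : ∀ k : ℕ, (s : ℂ) * ((μ ^ k)⁻¹ * (μ ^ k * ℓ w)) = s * ℓ w := by
      intro k
      rw [inv_mul_cancel_left₀ (pow_ne_zero k hμ0)]
    simp only [smul_apply, sum_apply,
      ContinuousLinearMap.comp_apply, smul_eq_mul, hpow, hterm, Finset.sum_const,
      Finset.card_range, nsmul_eq_mul]
    push_cast
    field_simp

/-- The derivative at the fixed point has no left eigenvector for a unimodular eigenvalue
other than `1`. -/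
lemma no_unimodular_eigenvalue [InnerProductSpace ℂ E] {Ω : Set E} (hΩ : IsOpen Ω)
    (hΩc : IsPreconnected Ω) {F : E → E}
    (hF : DifferentiableOn ℂ F Ω) (hm : MapsTo F Ω Ω) {C : ℝ} (hC : ∀ x ∈ Ω, ‖x‖ ≤ C) {q : E}
    (hq : q ∈ Ω) (hfix : F q = q) {p a : E} (ha : a ≠ 0) (hball : ball (p - a) ‖a‖ ⊆ Ω)
    (ho : ∀ ε > 0, ∃ δ > 0, ∀ x ∈ Ω, ‖x - p‖ < δ → ‖F x - x‖ ≤ ε * ‖x - p‖ ^ 2)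
    {μ : ℂ} (hμ : ‖μ‖ = 1) (hμ1 : μ ≠ 1) {ℓ : E →L[ℂ] ℂ} (hℓ : ℓ ≠ 0)
    (hℓA : ∀ x, ℓ (fderiv ℂ F q x) = μ * ℓ x) : False := by
  have hR : 0 < ‖a‖ := norm_pos_iff.2 ha
  have hν : 0 < ‖1 - μ‖ := norm_pos_iff.2 (sub_ne_zero.2 hμ1.symm)
  obtain ⟨f, hfd, hf1, hfF, w, c, hc, hfw⟩ :=
    exists_almost_eigenfunctions hΩ hF hm hC hq hfix hμ hℓ hℓA
  set c₀ : ℝ := ‖1 - μ‖ / (768 * ‖a‖) with hc₀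
  have hc₀pos : 0 < c₀ := by positivity
  have hex : ∀ j : ℕ, ∃ N : ℕ, ∀ x ∈ ball (p - (1 / 2 : ℂ) • a) (‖a‖ / 64),
      ‖f N x‖ ≤ Real.exp (-(1 / 100 * (c₀ * (j + 1)))) := by
    intro j
    set ε : ℝ := 1 / (j + 1) with hε
    have hε0 : 0 < ε := by positivity
    obtain ⟨δ, hδ, hδF⟩ := ho ε hε0
    set t : ℝ := min (1 / 2) (min (δ / (4 * ‖a‖)) (‖1 - μ‖ / (384 * ε * ‖a‖))) with ht
    have ht0 : 0 < t := by positivity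
    have ht1 : t ≤ 1 / 2 := min_le_left _ _
    have ht2 : t ≤ δ / (4 * ‖a‖) := (min_le_right _ _).trans (min_le_left _ _)
    have ht3 : t ≤ ‖1 - μ‖ / (384 * ε * ‖a‖) := (min_le_right _ _).trans (min_le_right _ _)
    rw [le_div_iff₀ (by positivity)] at ht2 ht3
    set r : ℝ := ‖a‖ * t with hr
    have hr0 : 0 < r := by positivity
    set y : ℝ := ‖1 - μ‖ / (384 * ε * r) with hy
    have hy1 : 1 ≤ y := by
      rw [hy, le_div_iff₀ (by positivity), hr]; linarith
    set m : ℕ := ⌊y⌋₊ with hmdef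
    have hm1 : 1 ≤ m := Nat.le_floor (by exact_mod_cast hy1)
    have hmy : (m : ℝ) ≤ y := Nat.floor_le (by linarith)
    have hym : y ≤ 2 * m := by
      have h1 := Nat.lt_floor_add_one y
      have h2 : (1 : ℝ) ≤ m := by exact_mod_cast hm1
      rw [← hmdef] at h1
      linarith
    obtain ⟨N, hN⟩ := exists_nat_gt (2 / (‖1 - μ‖ * Real.exp (-m) / 2))
    have hNτ : 2 / ((N : ℝ) + 1) ≤ ‖1 - μ‖ * Real.exp (-m) / 2 := by
      have hpos : 0 < ‖1 - μ‖ * Real.exp (-m) / 2 := by positivity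
      rw [div_lt_iff₀ hpos] at hN
      rw [div_le_iff₀ (by positivity)]
      nlinarith
    refine ⟨N, fun x hx => ?_⟩
    have hzΩ : ball (p - (t : ℂ) • a) r ⊆ Ω := by
      refine subset_trans (ball_subset_ball' ?_) hball
      have h1 : dist (p - (t : ℂ) • a) (p - a) = (1 - t) * ‖a‖ := by
        rw [dist_eq_norm, show p - (t : ℂ) • a - (p - a) = ((1 - t : ℝ) : ℂ) • a by
          push_cast; module, norm_smul, Complex.norm_real, Real.norm_eq_abs,
          abs_of_pos (by linarith)]
      rw [h1, hr]; linarith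
    have hzp : ∀ x ∈ ball (p - (t : ℂ) • a) (r / 2), ‖x - p‖ < 2 * r := by
      intro x hx
      rw [mem_ball_iff_norm] at hx
      have h1 : x - p = (x - (p - (t : ℂ) • a)) - (t : ℂ) • a := by abel
      rw [h1]
      refine (norm_sub_le _ _).trans_lt ?_
      rw [norm_smul, Complex.norm_real, Real.norm_eq_abs, abs_of_pos ht0]
      linarith [mul_comm t ‖a‖]
    have hsub : ball (p - (t : ℂ) • a) (r / 2) ⊆ ball (p - (t : ℂ) • a) r :=
      ball_subset_ball (by linarith)
    have hsm := norm_le_exp_of_almost_eigenfunction (F := F) (f := f N)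
      (z := p - (t : ℂ) • a) (r := r) (e := ε * (2 * r) ^ 2) (τ := 2 / (N + 1)) hμ hν hr0
      ((hfd N).mono hzΩ) (fun x hx => hf1 N x (hzΩ hx))
      (fun x hx => by
        have h1 := hzp x hx
        refine (hδF x (hzΩ (hsub hx)) (by nlinarith)).trans ?_
        gcongr)
      (fun x hx => hfF N x (hzΩ (hsub hx))) (m := m) hm1
      (by
        have h1 : y * (384 * ε * r) = ‖1 - μ‖ := by rw [hy]; field_simp
        have h2 : (m : ℝ) * (384 * ε * r) ≤ ‖1 - μ‖ := by
          rw [← h1]; gcongr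
        nlinarith)
      hNτ
    have h3 := norm_le_exp_on_ball_of_small ha hball (hfd N) (hf1 N) ht0 ht1
      (M := m) (by positivity) hsm hx
    refine h3.trans (Real.exp_le_exp.2 ?_)
    have h4 : c₀ * (j + 1) = y * t / 2 := by
      rw [hc₀, hy, hr, hε]; field_simp; norm_num
    rw [h4]
    nlinarith
  choose N hN using hex
  have hx₀ : p - (1 / 2 : ℂ) • a ∈ Ω := by
    apply hball
    rw [mem_ball_iff_norm, show p - (1 / 2 : ℂ) • a - (p - a) = (1 / 2 : ℂ) • a by module,
      norm_smul]
    norm_num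
    linarith
  have hK : Tendsto (fun j : ℕ => c₀ * ((j : ℝ) + 1)) atTop atTop :=
    (tendsto_atTop_add_const_right _ _ tendsto_natCast_atTop_atTop).const_mul_atTop hc₀pos
  obtain ⟨r, hr, b, hb, hsm⟩ := exp_small_propagates hΩ hΩc (f := fun j => f (N j)) hK
    (fun j x v => (hfd (N j)).comp (by fun_prop) fun ζ hζ => hζ)
    (fun x hx => by
      obtain ⟨r, hr, hrΩ⟩ := Metric.isOpen_iff.1 hΩ x hx
      exact ⟨r, hr, 1, fun j z hz => hf1 _ z (hrΩ hz)⟩)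
    hx₀ ⟨‖a‖ / 64, by positivity, 1 / 100, by norm_num, Eventually.of_forall hN⟩ hq
  obtain ⟨r', hr', hr'Ω⟩ := Metric.isOpen_iff.1 hΩ q hq
  set s := min r r' with hs
  have hs0 : 0 < s := lt_min hr hr'
  have hlim : Tendsto (fun j : ℕ => 2 * Real.exp (-(b * (c₀ * ((j : ℝ) + 1)))) / s * ‖w‖) atTop
      (𝓝 (2 * 0 / s * ‖w‖)) := by
    refine Tendsto.mul_const _ (Tendsto.div_const (Tendsto.const_mul _ ?_) _)
    exact Real.tendsto_exp_neg_atTop_nhds_zero.comp (hK.const_mul_atTop hb)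
  have hle : ‖c‖ ≤ 2 * 0 / s * ‖w‖ := by
    refine ge_of_tendsto hlim ?_
    filter_upwards [hsm] with j hj
    rw [← hfw (N j)]
    refine ContinuousLinearMap.le_of_opNorm_le _ (norm_fderiv_le_of_norm_le_ball hs0
      ((hfd (N j)).mono ((ball_subset_ball (min_le_right _ _)).trans hr'Ω)) fun z hz => ?_) w
    exact hj z (ball_subset_ball (min_le_left _ _) hz)
  simp at hle
  exact hc hle

end Unimodular

section Geometry

lemma taylor_two {E : Type*} [NormedAddCommGroup E] [NormedSpace ℝ E] {ρ : E → ℝ}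
    (hρ : ContDiff ℝ 2 ρ) (p : E) {ε : ℝ} (hε : 0 < ε) :
    ∃ δ > 0, ∀ x, ‖x‖ < δ →
      |ρ (p + x) - ρ p - fderiv ℝ ρ p x - 1 / 2 * fderiv ℝ (fderiv ℝ ρ) p x x| ≤
        ε * ‖x‖ ^ 2 := by
  have hd : Differentiable ℝ ρ := hρ.differentiable (by norm_num)
  have hd2 : Differentiable ℝ (fderiv ℝ ρ) :=
    (hρ.fderiv_right (m := 1) (by norm_num)).differentiable (by norm_num)
  set H := fderiv ℝ (fderiv ℝ ρ) p with hH
  have hsymm : ∀ x y, H x y = H y x := fun x y =>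
    second_derivative_symmetric (fun y => (hd y).hasFDerivAt) (hd2 p).hasFDerivAt x y
  have h1 := (hasFDerivAt_iff_isLittleO_nhds_zero.1 (hd2 p).hasFDerivAt).def hε
  obtain ⟨δ, hδ, h2⟩ := Metric.eventually_nhds_iff_ball.1 h1
  refine ⟨δ, hδ, fun x hx => ?_⟩
  set g : E → ℝ := fun x => ρ (p + x) - ρ p - fderiv ℝ ρ p x - 1 / 2 * H x x with hg
  have hgd : ∀ y, HasFDerivAt g (fderiv ℝ ρ (p + y) - fderiv ℝ ρ p - H y) y := by
    intro y
    have e1 : HasFDerivAt (fun x => ρ (p + x)) (fderiv ℝ ρ (p + y)) y :=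
      ((hd (p + y)).hasFDerivAt.comp y ((hasFDerivAt_id y).const_add p)).congr_fderiv (by ext; rfl)
    have e2 : HasFDerivAt (fun x => H x x) (H y + H.flip y) y :=
      (H.hasFDerivAt.clm_apply (hasFDerivAt_id y)).congr_fderiv (by ext; rfl)
    refine (((e1.sub_const (ρ p)).sub (fderiv ℝ ρ p).hasFDerivAt).sub
      (e2.const_mul (1 / 2))).congr_fderiv ?_
    refine ContinuousLinearMap.ext fun v => ?_
    have h5 : (fderiv ℝ ρ (p + y) - fderiv ℝ ρ p - (1 / 2 : ℝ) • (H y + H.flip y)) v =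
      fderiv ℝ ρ (p + y) v - fderiv ℝ ρ p v - 1 / 2 * (H y v + H v y) := rfl
    have h6 : (fderiv ℝ ρ (p + y) - fderiv ℝ ρ p - H y) v =
      fderiv ℝ ρ (p + y) v - fderiv ℝ ρ p v - H y v := rfl
    rw [h5, h6, hsymm v y]
    ring
  have h3 := (convex_closedBall (0 : E) ‖x‖).norm_image_sub_le_of_norm_hasFDerivWithin_le
    (f := g) (x := 0) (y := x) (C := ε * ‖x‖) (fun y _ => (hgd y).hasFDerivWithinAt)
    (fun y hy => by
      rw [mem_closedBall_zero_iff] at hy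
      refine (h2 y (by rw [mem_ball_zero_iff]; linarith)).trans ?_
      gcongr) (by simp) (by simp)
  have h4 : g 0 = 0 := by simp [hg]
  rw [h4, sub_zero, sub_zero, Real.norm_eq_abs] at h3
  calc _ ≤ ε * ‖x‖ * ‖x‖ := h3
    _ = _ := by ring

/-- The Hermitian-free part of a real bilinear form. -/
lemma exists_complex_bilinear {E : Type*} [NormedAddCommGroup E] [NormedSpace ℂ E]
    [NormedSpace ℝ E] [IsScalarTower ℝ ℂ E] (H : E →L[ℝ] E →L[ℝ] ℝ) :
    ∃ B : E →L[ℂ] E →L[ℂ] ℂ, ∀ x, (B x x).re = 1 / 4 * (H x x - H (I • x) (I • x)) := by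
  have hc : ∀ (c : ℂ) (x : E), c • x = c.re • x + c.im • (I • x) := by
    intro c x
    rw [← algebraMap_smul ℂ c.re x, ← algebraMap_smul ℂ c.im (I • x), smul_smul, ← add_smul]
    congr 1
    simp
  have hI : ∀ x : E, I • I • x = -x := fun x => by rw [smul_smul, I_mul_I, neg_one_smul]
  have hIc : ∀ (c : ℂ) (x : E), I • c • x = c.re • (I • x) - c.im • x := fun c x => by
    rw [smul_comm, hc, hI, smul_neg, sub_eq_add_neg]
  let f : E → E → ℂ := fun x y =>
    ((1 / 4 * (H x y - H (I • x) (I • y)) : ℝ) : ℂ) -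
      I * ((1 / 4 * (H (I • x) y + H x (I • y)) : ℝ) : ℂ)
  let B₀ : E →ₗ[ℂ] E →ₗ[ℂ] ℂ := LinearMap.mk₂ ℂ f
    (by
      intro x y z
      simp only [f, smul_add, map_add, add_apply]
      push_cast; ring)
    (by
      intro c x y
      simp only [f]
      rw [hIc c x, hc c x]
      simp only [map_add, map_sub, map_smul,
        add_apply, sub_apply, smul_apply, smul_eq_mul]
      apply Complex.ext <;> simp <;> ring)
    (by
      intro x y z
      simp only [f, smul_add, map_add]
      push_cast; ring)
    (by
      intro c x y
      simp only [f]
      rw [hIc c y, hc c y]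
      simp only [map_add, map_sub, map_smul,
        smul_eq_mul]
      apply Complex.ext <;> simp <;> ring)
  refine ⟨B₀.mkContinuous₂ ‖H‖ fun x y => ?_, fun x => ?_⟩
  · have hb : ∀ x y, |H x y| ≤ ‖H‖ * ‖x‖ * ‖y‖ := fun x y => H.le_opNorm₂ x y
    have hIn : ∀ x : E, ‖I • x‖ = ‖x‖ := fun x => by simp [norm_smul]
    have h1 := hb x y
    have h2 := hb (I • x) (I • y)
    have h3 := hb (I • x) y
    have h4 := hb x (I • y)
    simp only [hIn] at h2 h3 h4
    change ‖f x y‖ ≤ _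
    refine (norm_sub_le _ _).trans ?_
    rw [norm_mul, norm_I, one_mul, Complex.norm_real, Complex.norm_real, Real.norm_eq_abs,
      Real.norm_eq_abs, abs_mul, abs_mul]
    have h5 := abs_sub (H x y) (H (I • x) (I • y))
    have h6 := abs_add_le (H (I • x) y) (H x (I • y))
    rw [abs_of_pos (by norm_num : (0 : ℝ) < 1 / 4)]
    linarith
  · change (f x x).re = _
    simp [f]

/-- A Levi-type form positive on the kernel of `ℓ` becomes positive after adding a multiple
of `|ℓ|²`. -/
lemma exists_pos_add_mul_norm_sq {E : Type*} [NormedAddCommGroup E] [NormedSpace ℝ E]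
    [FiniteDimensional ℝ E] (L : E → ℝ) (hL : Continuous L)
    (hLh : ∀ (t : ℝ) (x : E), L (t • x) = t ^ 2 * L x) (ℓ : E →L[ℝ] ℂ)
    (hpos : ∀ x, x ≠ 0 → ℓ x = 0 → 0 < L x) :
    ∃ M c : ℝ, 0 ≤ M ∧ 0 < c ∧ ∀ x, c * ‖x‖ ^ 2 ≤ L x + M * ‖ℓ x‖ ^ 2 := by
  have : ProperSpace E := FiniteDimensional.proper_real E
  have hK : IsCompact (sphere (0 : E) 1) := isCompact_sphere _ _
  have hne : ∀ x ∈ sphere (0 : E) 1, x ≠ 0 := by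
    rintro x hx rfl; simp at hx
  have hK' : IsCompact (sphere (0 : E) 1 ∩ {x | L x ≤ 0}) :=
    hK.inter_right (isClosed_le hL continuous_const)
  obtain ⟨m, hm, hmle⟩ := hK'.exists_forall_le' (f := fun x => ‖ℓ x‖ ^ 2) (a := 0)
    (by fun_prop) (by
      rintro x ⟨hx, hLx⟩
      have : ℓ x ≠ 0 := fun h => absurd (hpos x (hne x hx) h) (not_lt.2 hLx)
      positivity)
  obtain ⟨Λ, hΛ⟩ := hK.exists_bound_of_continuousOn hL.continuousOn
  have hM : 0 ≤ (|Λ| + 1) / m := by positivity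
  obtain ⟨c, hc, hcle⟩ := hK.exists_forall_le' (f := fun x => L x + (|Λ| + 1) / m * ‖ℓ x‖ ^ 2)
    (a := 0) (by fun_prop) (by
      intro x hx
      rcases le_or_gt (L x) 0 with h | h
      · have h1 := mul_le_mul_of_nonneg_left (hmle x ⟨hx, h⟩) hM
        rw [div_mul_cancel₀ _ hm.ne'] at h1
        have h2 := (abs_le.1 (hΛ x hx)).1
        have h3 := le_abs_self Λ
        linarith
      · positivity)
  refine ⟨(|Λ| + 1) / m, c, hM, hc, fun x => ?_⟩
  rcases eq_or_ne x 0 with rfl | hx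
  · have := hLh 0 0
    simp at this
    simp [this]
  · have hx0 : 0 < ‖x‖ := norm_pos_iff.2 hx
    have h1 := hcle (‖x‖⁻¹ • x) (by simp [norm_smul, hx0.ne'])
    simp only [hLh, map_smul, norm_smul, norm_inv, norm_norm] at h1
    have h2 := mul_le_mul_of_nonneg_left h1 (sq_nonneg ‖x‖)
    calc c * ‖x‖ ^ 2 = ‖x‖ ^ 2 * c := by ring
      _ ≤ _ := h2
      _ = _ := by field_simp

set_option maxHeartbeats 1000000 in
/-- At a strongly pseudoconvex boundary point there are an interior tangent ball and a quadratic
holomorphic support function. -/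
lemma exists_support_function {n : ℕ} {Ω : Set (En n)} {ρ : En n → ℝ} (hρ : ContDiff ℝ 2 ρ)
    (hΩ : Ω = {z | ρ z < 0}) {p : En n} (hp : ρ p = 0) (hdρ : fderiv ℝ ρ p ≠ 0)
    (hs : StronglyPcxAt ρ p) :
    ∃ (a : En n) (ψ : En n → ℂ) (C M c R : ℝ), a ≠ 0 ∧ ball (p - a) ‖a‖ ⊆ Ω ∧ ContDiff ℂ 2 ψ ∧
      (∀ y, ‖ψ y + inner ℂ a (y - p) / (‖a‖ : ℂ) ^ 2‖ ≤ C * ‖y - p‖ ^ 2) ∧ 0 ≤ C ∧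
      0 ≤ M ∧ 0 < c ∧ 0 < R ∧
      ∀ y ∈ closure Ω, ‖y - p‖ < R → c * ‖y - p‖ ^ 2 ≤ (ψ y).re + M * ‖ψ y‖ ^ 2 := by
  have hcl : ∀ y ∈ closure Ω, ρ y ≤ 0 := by
    intro y hy
    refine closure_minimal (fun z hz => ?_) (isClosed_le hρ.continuous continuous_const) hy
    rw [hΩ] at hz
    exact (show ρ z < 0 from hz).le
  set H := fderiv ℝ (fderiv ℝ ρ) p with hH
  have hLevi : ∀ x, LeviForm ρ p x = 1 / 4 * (H x x + H (I • x) (I • x)) := by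
    intro x
    simp only [LeviForm, iteratedFDeriv_two_apply]
    rfl
  obtain ⟨B, hB⟩ := exists_complex_bilinear H
  set ℓ : En n →L[ℂ] ℂ := StrongDual.extendRCLike (𝕜 := ℂ) (fderiv ℝ ρ p) with hℓ
  have hℓre : ∀ x, (ℓ x).re = fderiv ℝ ρ p x := fun x =>
    StrongDual.re_extendRCLike_apply (𝕜 := ℂ) (fderiv ℝ ρ p) x
  have hℓim : ∀ x, (ℓ x).im = -fderiv ℝ ρ p (I • x) := fun x =>
    StrongDual.im_extendRCLike_apply (𝕜 := ℂ) (fderiv ℝ ρ p) x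
  obtain ⟨g, hg⟩ : ∃ g : En n, ∀ x, inner ℂ g x = ℓ x :=
    ⟨(InnerProductSpace.toDual ℂ (En n)).symm ℓ, fun x => InnerProductSpace.toDual_symm_apply⟩
  have hg0 : g ≠ 0 := by
    rintro rfl
    refine hdρ (ContinuousLinearMap.ext fun x => ?_)
    rw [← hℓre, ← hg, inner_zero_left]
    rfl
  have hgn : 0 < ‖g‖ := norm_pos_iff.2 hg0
  obtain ⟨M₀, c₁, hM₀, hc₁, hLM⟩ := exists_pos_add_mul_norm_sq
    (fun x => 1 / 4 * (H x x + H (I • x) (I • x))) (by fun_prop)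
    (fun t x => by
      simp only [smul_comm I t x, map_smul, smul_apply, smul_eq_mul]
      ring)
    (ℓ.restrictScalars ℝ)
    (fun x hx hℓx => by
      have h0 : ℓ x = 0 := hℓx
      have := hs x hx ⟨by rw [← hℓre, h0]; rfl, by
        have := hℓim x
        rw [h0, Complex.zero_im] at this
        linarith⟩
      rwa [hLevi] at this)
  obtain ⟨δ₁, hδ₁, hT⟩ := taylor_two hρ p (show 0 < c₁ / 4 by positivity)
  have hBn : ∀ x, ‖B x x‖ ≤ ‖B‖ * ‖x‖ ^ 2 := fun x => by
    have := B.le_opNorm₂ x x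
    linarith [show ‖B‖ * ‖x‖ * ‖x‖ = ‖B‖ * ‖x‖ ^ 2 by ring]
  set K : ℝ := c₁ / 4 + ‖H‖ + 1 with hK
  have hK0 : 0 < K := by positivity
  have hup : ∀ x, ‖x‖ < δ₁ → ρ (p + x) ≤ fderiv ℝ ρ p x + K * ‖x‖ ^ 2 := by
    intro x hx
    have h1 := (abs_le.1 (hT x hx)).2
    have h2 : H x x ≤ ‖H‖ * ‖x‖ * ‖x‖ := (le_abs_self _).trans (H.le_opNorm₂ x x)
    rw [hp] at h1
    have h3 : 0 ≤ ‖H‖ * ‖x‖ * ‖x‖ := by positivity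
    rw [hK]
    nlinarith [sq_nonneg ‖x‖]
  have hlow : ∀ x, ‖x‖ < δ₁ → (ℓ x).re + (B x x).re + 1 / 4 * (H x x + H (I • x) (I • x)) -
      c₁ / 4 * ‖x‖ ^ 2 ≤ ρ (p + x) := by
    intro x hx
    have h1 := (abs_le.1 (hT x hx)).1
    rw [hp] at h1
    rw [hB, hℓre]
    linarith
  set τ : ℝ := min (1 / (2 * K)) (δ₁ / (2 * ‖g‖)) with hτ
  have hτ0 : 0 < τ := by positivity
  have hτ1 : τ * (2 * K) ≤ 1 := by
    rw [← le_div_iff₀ (by positivity)]; exact min_le_left _ _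
  have hτ2 : τ * (2 * ‖g‖) ≤ δ₁ := by
    rw [← le_div_iff₀ (by positivity)]; exact min_le_right _ _
  set a : En n := (τ : ℂ) • g with ha
  have han : ‖a‖ = τ * ‖g‖ := by
    rw [ha, norm_smul, Complex.norm_real, Real.norm_eq_abs, abs_of_pos hτ0]
  have ha0 : a ≠ 0 := smul_ne_zero (by exact_mod_cast hτ0.ne') hg0
  have hain : ∀ x, inner ℂ a x = (τ : ℂ) * ℓ x := by
    intro x
    rw [ha, inner_smul_left, Complex.conj_ofReal, hg]
  set s : ℝ := 1 / (τ * ‖g‖ ^ 2) with hs'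
  have hs0 : 0 < s := by positivity
  have hℓa : ∀ x, inner ℂ a x / (‖a‖ : ℂ) ^ 2 = (s : ℂ) * ℓ x := by
    intro x
    have h1 : (τ : ℂ) ≠ 0 := by exact_mod_cast hτ0.ne'
    have h2 : (‖g‖ : ℂ) ≠ 0 := by exact_mod_cast hgn.ne'
    rw [hain, han, hs']
    push_cast
    field_simp
  set ψ : En n → ℂ := fun y => -((s : ℂ) * (ℓ (y - p) + B (y - p) (y - p))) with hψ
  obtain ⟨R₂, hR₂, hR₂le⟩ : ∃ R₂ > 0, M₀ * (2 * ‖B‖ ^ 2) * R₂ ^ 2 ≤ c₁ / 4 := by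
    set A : ℝ := M₀ * (2 * ‖B‖ ^ 2) with hA
    have hA0 : 0 ≤ A := by positivity
    refine ⟨min 1 (c₁ / 4 / (A + 1)), by positivity, ?_⟩
    set m := min 1 (c₁ / 4 / (A + 1)) with hm
    have hm0 : 0 < m := by positivity
    have h1 : m ≤ 1 := min_le_left _ _
    have h2 : m * (A + 1) ≤ c₁ / 4 := by
      rw [← le_div_iff₀ (by positivity)]; exact min_le_right _ _
    nlinarith [mul_nonneg hA0 hm0.le]
  refine ⟨a, ψ, s * ‖B‖, 2 * M₀ / s, s * (c₁ / 2), min δ₁ R₂, ha0, ?_, ?_, ?_, by positivity,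
    by positivity, by positivity, by positivity, ?_⟩
  · intro y hy
    rw [hΩ]
    change ρ y < 0
    obtain ⟨x, rfl⟩ : ∃ x, y = p + x := ⟨y - p, by abel⟩
    rw [mem_ball_iff_norm, show p + x - (p - a) = x + a by abel] at hy
    have h1 : ‖x + a‖ ^ 2 = ‖x‖ ^ 2 + 2 * (inner ℂ a x).re + ‖a‖ ^ 2 := by
      rw [@norm_add_sq ℂ, ← inner_re_symm]
      rfl
    have h2 : ‖x + a‖ ^ 2 < ‖a‖ ^ 2 := by gcongr
    have h3 : (inner ℂ a x).re = τ * fderiv ℝ ρ p x := by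
      rw [hain, Complex.re_ofReal_mul, hℓre]
    have h4 : ‖x‖ < δ₁ := by
      have := norm_sub_le (x + a) a
      rw [add_sub_cancel_right] at this
      rw [han] at *
      linarith
    have h5 := hup x h4
    have h6 : τ * (fderiv ℝ ρ p x + K * ‖x‖ ^ 2) < 0 := by
      nlinarith [sq_nonneg ‖x‖]
    have h7 : fderiv ℝ ρ p x + K * ‖x‖ ^ 2 < 0 := by
      by_contra hcon
      push Not at hcon
      exact absurd (mul_nonneg hτ0.le hcon) (not_le.2 h6)
    linarith
  · have h1 : ContDiff ℂ 2 fun y : En n => y - p := by fun_prop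
    exact (((ℓ.contDiff.comp h1).add ((B.contDiff.comp h1).clm_apply h1)).const_smul (s : ℂ)).neg
  · intro y
    rw [hℓa, hψ]
    have : -((s : ℂ) * (ℓ (y - p) + B (y - p) (y - p))) + s * ℓ (y - p) =
      -(s * B (y - p) (y - p)) := by ring
    simp only [this]
    rw [norm_neg, norm_mul, Complex.norm_real, Real.norm_eq_abs, abs_of_pos hs0, mul_assoc]
    exact mul_le_mul_of_nonneg_left (hBn _) hs0.le
  · intro y hy hyR
    obtain ⟨x, rfl⟩ : ∃ x, y = p + x := ⟨y - p, by abel⟩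
    have hψx : ψ (p + x) = -((s : ℂ) * (ℓ x + B x x)) := by simp only [hψ, add_sub_cancel_left]
    rw [add_sub_cancel_left] at hyR ⊢
    have h1 := hlow x (hyR.trans_le (min_le_left _ _))
    have h2 := hcl _ hy
    have h3 : c₁ * ‖x‖ ^ 2 ≤ 1 / 4 * (H x x + H (I • x) (I • x)) + M₀ * ‖ℓ x‖ ^ 2 := hLM x
    have h4 : ‖ℓ x‖ ^ 2 ≤ 2 * ‖ℓ x + B x x‖ ^ 2 + 2 * ‖B x x‖ ^ 2 := by
      have := norm_sub_le (ℓ x + B x x) (B x x)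
      rw [add_sub_cancel_right] at this
      nlinarith [norm_nonneg (ℓ x), sq_nonneg (‖ℓ x + B x x‖ - ‖B x x‖)]
    have h5 : ‖B x x‖ ^ 2 ≤ ‖B‖ ^ 2 * ‖x‖ ^ 2 * ‖x‖ ^ 2 := by
      calc ‖B x x‖ ^ 2 ≤ (‖B‖ * ‖x‖ ^ 2) ^ 2 := by gcongr; exact hBn x
        _ = _ := by ring
    have h6 : M₀ * (2 * ‖B‖ ^ 2) * ‖x‖ ^ 2 ≤ c₁ / 4 := by
      refine le_trans ?_ hR₂le
      have := hyR.trans_le (min_le_right _ _)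
      gcongr
    have h7 : (ψ (p + x)).re = -(s * ((ℓ x).re + (B x x).re)) := by
      rw [hψx, Complex.neg_re, Complex.re_ofReal_mul, Complex.add_re]
    have h8 : ‖ψ (p + x)‖ = s * ‖ℓ x + B x x‖ := by
      rw [hψx, norm_neg, norm_mul, Complex.norm_real, Real.norm_eq_abs, abs_of_pos hs0]
    rw [h7, h8]
    have h9 : 2 * M₀ / s * (s * ‖ℓ x + B x x‖) ^ 2 = s * (2 * M₀ * ‖ℓ x + B x x‖ ^ 2) := by
      field_simp
    have h10 : c₁ / 2 * ‖x‖ ^ 2 ≤ -((ℓ x).re + (B x x).re) + 2 * M₀ * ‖ℓ x + B x x‖ ^ 2 := by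
      have e1 := mul_le_mul_of_nonneg_left h4 hM₀
      have e2 := mul_le_mul_of_nonneg_left h5 hM₀
      have e3 := mul_le_mul_of_nonneg_right h6 (sq_nonneg ‖x‖)
      linarith
    rw [h9, mul_assoc]
    linarith [mul_le_mul_of_nonneg_left h10 hs0.le]

end Geometry

section Barrier

/-- Uniform quadratic Taylor estimate near a compact set. -/
lemma exists_quadratic_bound {E : Type*} [NormedAddCommGroup E] [NormedSpace ℝ E] {f : E → ℝ}
    {K : Set E} (hK : IsCompact K) (hf : ∀ x ∈ K, ContDiffAt ℝ 2 f x) :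
    ∃ B : ℝ, 0 ≤ B ∧ ∀ x ∈ K, ∀ᶠ y in 𝓝 x,
      |f y - f x - fderiv ℝ f x (y - x)| ≤ B * ‖y - x‖ ^ 2 := by
  refine hK.induction_on (p := fun s => ∃ B : ℝ, 0 ≤ B ∧ ∀ x ∈ s, ∀ᶠ y in 𝓝 x,
      |f y - f x - fderiv ℝ f x (y - x)| ≤ B * ‖y - x‖ ^ 2) ⟨0, le_rfl, by simp⟩ ?_ ?_ ?_
  · rintro s t hst ⟨B, hB, h⟩
    exact ⟨B, hB, fun x hx => h x (hst hx)⟩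
  · rintro s t ⟨B, hB, h⟩ ⟨B', hB', h'⟩
    refine ⟨max B B', hB.trans (le_max_left _ _), fun x hx => ?_⟩
    rcases hx with hx | hx
    · filter_upwards [h x hx] with y hy
      exact hy.trans (by gcongr; exact le_max_left _ _)
    · filter_upwards [h' x hx] with y hy
      exact hy.trans (by gcongr; exact le_max_right _ _)
  · intro x hx
    have hfx := hf x hx
    obtain ⟨B, t, ht, hlip⟩ := (hfx.fderiv_right (m := 1) (by norm_num)).exists_lipschitzOnWith
    have hd : ∀ᶠ y in 𝓝 x, DifferentiableAt ℝ f y := by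
      filter_upwards [hfx.eventually (by simp)] with y hy
      exact hy.differentiableAt (by norm_num)
    obtain ⟨r, hr, hrt⟩ := Metric.mem_nhds_iff.1 (inter_mem ht hd)
    refine ⟨ball x r, mem_nhdsWithin_of_mem_nhds (ball_mem_nhds x hr), B, B.coe_nonneg,
      fun y hy => ?_⟩
    filter_upwards [isOpen_ball.mem_nhds hy] with z hz
    have hseg : segment ℝ y z ⊆ ball x r := (convex_ball x r).segment_subset hy hz
    have h1 := (convex_segment y z).norm_image_sub_le_of_norm_fderiv_le' (𝕜 := ℝ) (f := f)
      (φ := fderiv ℝ f y) (C := B * ‖z - y‖) (fun w hw => (hrt (hseg hw)).2)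
      (fun w hw => by
        refine (hlip.norm_sub_le (hrt (hseg hw)).1 (hrt hy).1).trans ?_
        gcongr
        exact norm_sub_le_of_mem_segment hw)
      (left_mem_segment ℝ y z) (right_mem_segment ℝ y z)
    rw [Real.norm_eq_abs] at h1
    calc _ ≤ _ := h1
      _ = _ := by ring

lemma exists_plurisubharmonic_barrier {n : ℕ} {Ω : Set (En n)} (hΩ : IsOpen Ω) {p : En n}
    (hp : p ∉ Ω) {D : ℝ} (hD : ∀ y ∈ Ω, ‖y - p‖ ≤ D) {ψ : En n → ℂ} (hψ : ContDiff ℂ 2 ψ)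
    {M c R : ℝ} (hM : 0 ≤ M) (hc : 0 < c) (hR : 0 < R)
    (hψR : ∀ y ∈ closure Ω, ‖y - p‖ < R → c * ‖y - p‖ ^ 2 ≤ (ψ y).re + M * ‖ψ y‖ ^ 2) :
    ∃ (u : En n → ℝ) (R₁ Q C : ℝ), 0 < R₁ ∧ 0 < Q ∧ 0 < C ∧ ContinuousOn u Ω ∧
      (∀ y ∈ Ω, u y ≤ 0) ∧
      (∀ y ∈ Ω, ∃ h : En n → ℂ, (∀ᶠ z in 𝓝 y, DifferentiableAt ℂ h z ∧ (h z).re ≤ u z) ∧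
        (h y).re = u y) ∧
      (∀ y ∈ Ω, ‖y - p‖ < R₁ → u y ≤ -(ψ y)⁻¹.re) ∧
      ∀ y ∈ Ω, ∀ t, Q ≤ t → u y ≤ -t → ‖ψ y‖ ≤ C / t ∧ ‖y - p‖ ^ 2 ≤ C / t := by
  have hne : ∀ y ∈ closure Ω, ‖y - p‖ < R → y ≠ p → ψ y ≠ 0 := by
    intro y hy hyR hyp h0
    have h1 := hψR y hy hyR
    have h2 : 0 < ‖y - p‖ := norm_pos_iff.2 (sub_ne_zero.2 hyp)
    rw [h0, norm_zero, Complex.zero_re] at h1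
    have : 0 < c * ‖y - p‖ ^ 2 := by positivity
    nlinarith
  have hinv : ∀ y ∈ closure Ω, ‖y - p‖ < R → y ≠ p → 0 ≤ (ψ y)⁻¹.re + M := by
    intro y hy hyR hyp
    have h1 := hψR y hy hyR
    have h2 : 0 < normSq (ψ y) := normSq_pos.2 (hne y hy hyR hyp)
    have h4 : 0 ≤ c * ‖y - p‖ ^ 2 := by positivity
    rw [← normSq_eq_norm_sq] at h1
    rw [Complex.inv_re, div_add' _ _ _ h2.ne']
    apply div_nonneg _ h2.le
    linarith
  have hpΩ : ∀ y ∈ Ω, y ≠ p := fun y hy h => hp (h ▸ hy)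
  let χ : ContDiffBump p := ⟨R / 4, R / 2, by positivity, by linarith⟩
  have hχin : ∀ y, ‖y - p‖ ≤ R / 4 → χ y = 1 := fun y hy =>
    χ.one_of_mem_closedBall (mem_closedBall_iff_norm.2 hy)
  have hχout : ∀ y, R / 2 ≤ ‖y - p‖ → χ y = 0 := fun y hy =>
    χ.zero_of_le_dist (by rwa [dist_eq_norm])
  set f : En n → ℝ := fun y => χ y * ((ψ y)⁻¹.re + M) with hf
  have hψr : ContDiff ℝ 2 ψ := hψ.restrict_scalars ℝ
  have hfC : ∀ y ∈ closure Ω, y ≠ p → ContDiffAt ℝ 2 f y := by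
    intro y hy hyp
    rcases lt_or_ge ‖y - p‖ R with hyR | hyR
    · have h1 : ContDiffAt ℝ 2 (fun y => (ψ y)⁻¹) y := hψr.contDiffAt.inv (hne y hy hyR hyp)
      exact χ.contDiff.contDiffAt.mul ((reCLM.contDiff.contDiffAt.comp y h1).add contDiffAt_const)
    · have : f =ᶠ[𝓝 y] fun _ => 0 := by
        have : ∀ᶠ z in 𝓝 y, R / 2 < ‖z - p‖ :=
          (continuous_id.sub continuous_const).norm.continuousAt.eventually
            (lt_mem_nhds (by change R / 2 < ‖y - p‖; linarith))
        filter_upwards [this] with z hz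
        simp [hf, hχout z hz.le]
      exact contDiffAt_const.congr_of_eventuallyEq this
  have hf0 : ∀ y ∈ Ω, 0 ≤ f y := by
    intro y hy
    rcases lt_or_ge ‖y - p‖ R with hyR | hyR
    · exact mul_nonneg χ.nonneg (hinv y (subset_closure hy) hyR (hpΩ y hy))
    · simp [hf, hχout y (by linarith)]
  have hcpt : IsCompact (closure Ω ∩ {y | R / 8 ≤ ‖y - p‖}) := by
    refine IsCompact.inter_right ?_ (isClosed_le continuous_const (by fun_prop))
    refine isCompact_of_isClosed_isBounded isClosed_closure (Bornology.IsBounded.closure ?_)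
    exact (isBounded_iff_subset_closedBall p).2 ⟨D, fun y hy => mem_closedBall_iff_norm.2 (hD y hy)⟩
  obtain ⟨B, hB, hBf⟩ := exists_quadratic_bound hcpt (f := f) (fun y hy => hfC y hy.1 (by
    rintro rfl
    have : R / 8 ≤ ‖y - y‖ := hy.2
    rw [sub_self, norm_zero] at this
    linarith))
  have hDsq : ∀ y ∈ Ω, B * ‖y - p‖ ^ 2 ≤ B * D ^ 2 := by
    intro y hy
    have := hD y hy
    gcongr
  set u : En n → ℝ := fun y => -f y + B * ‖y - p‖ ^ 2 - B * D ^ 2 with hu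
  have hnsq : ∀ y z : En n, ‖z - p‖ ^ 2 =
      ‖y - p‖ ^ 2 + 2 * (inner ℂ (y - p) (z - y)).re + ‖z - y‖ ^ 2 := by
    intro y z
    have : z - p = (y - p) + (z - y) := by abel
    rw [this, @norm_add_sq ℂ]
    rfl
  have hre : ∀ (y z : En n) (t : ℝ), (B * (2 * inner ℂ (y - p) (z - y)) + (t : ℂ) : ℂ).re =
      B * (2 * (inner ℂ (y - p) (z - y)).re) + t := by
    intro y z t
    rw [Complex.add_re, Complex.re_ofReal_mul, Complex.ofReal_re]
    simp only [Complex.mul_re, Complex.re_ofNat, Complex.im_ofNat, zero_mul, sub_zero]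
  set Q : ℝ := 2 * B * D ^ 2 + 4 * M + 1 with hQ
  have hBD : 0 ≤ 2 * B * D ^ 2 := by positivity
  refine ⟨u, R / 4, Q, 4 + (4 + 16 * M) / c, by positivity, by positivity, by positivity, ?_, ?_,
    ?_, ?_, ?_⟩
  · intro y hy
    have h1 := (hfC y (subset_closure hy) (hpΩ y hy)).continuousAt
    refine ContinuousAt.continuousWithinAt ?_
    exact (h1.neg.add (by fun_prop)).sub continuousAt_const
  · intro y hy
    have := hf0 y hy
    have := hDsq y hy
    simp only [hu]
    linarith
  · intro y hy
    rcases lt_or_ge ‖y - p‖ (R / 4) with hyR | hyR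
    · have hyR' : ∀ᶠ z in 𝓝 y, ‖z - p‖ < R / 4 :=
        (continuous_id.sub continuous_const).norm.continuousAt.eventually (gt_mem_nhds hyR)
      refine ⟨fun z => -(ψ z)⁻¹ + (B * (2 * inner ℂ (y - p) (z - y)) +
        ((B * ‖y - p‖ ^ 2 - M - B * D ^ 2 : ℝ) : ℂ)), ?_, ?_⟩
      · filter_upwards [hyR', hΩ.mem_nhds hy] with z hz hzΩ
        constructor
        · have h1 : DifferentiableAt ℂ (fun z => (ψ z)⁻¹) z :=
            (hψ.differentiable (by norm_num) z).inv
              (hne z (subset_closure hzΩ) (by linarith) (hpΩ z hzΩ))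
          have h2 : DifferentiableAt ℂ (fun z => inner ℂ (y - p) (z - y)) z :=
            (innerSL ℂ (y - p)).differentiableAt.comp z (differentiableAt_id.sub_const y)
          exact h1.neg.add (((h2.const_mul _).const_mul _).add_const _)
        · simp only [hu, hf, hχin z hz.le, hnsq y z]
          rw [Complex.add_re, Complex.neg_re, hre]
          linarith [mul_nonneg hB (sq_nonneg ‖z - y‖)]
      · simp only [hu, hf, hχin y hyR.le]
        rw [Complex.add_re, Complex.neg_re, hre, sub_self, inner_zero_right, Complex.zero_re]
        ring
    · refine ⟨fun z => -(StrongDual.extendRCLike (𝕜 := ℂ) (fderiv ℝ f y) (z - y)) +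
        (B * (2 * inner ℂ (y - p) (z - y)) +
        ((-f y + B * ‖y - p‖ ^ 2 - B * D ^ 2 : ℝ) : ℂ)), ?_, ?_⟩
      · filter_upwards [hBf y ⟨subset_closure hy, by
          change R / 8 ≤ ‖y - p‖
          linarith⟩] with z hz
        constructor
        · have h1 : DifferentiableAt ℂ
              (fun z => StrongDual.extendRCLike (𝕜 := ℂ) (fderiv ℝ f y) (z - y)) z :=
            (ContinuousLinearMap.differentiableAt _).comp z (differentiableAt_id.sub_const y)
          have h2 : DifferentiableAt ℂ (fun z => inner ℂ (y - p) (z - y)) z :=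
            (innerSL ℂ (y - p)).differentiableAt.comp z (differentiableAt_id.sub_const y)
          exact h1.neg.add (((h2.const_mul _).const_mul _).add_const _)
        · have h3 := (abs_le.1 hz).2
          have h4 : (StrongDual.extendRCLike (𝕜 := ℂ) (fderiv ℝ f y) (z - y)).re =
            fderiv ℝ f y (z - y) := StrongDual.re_extendRCLike_apply (𝕜 := ℂ) _ _
          simp only [hu, hnsq y z]
          rw [Complex.add_re, Complex.neg_re, hre, h4]
          linarith
      · simp only [hu]
        rw [Complex.add_re, Complex.neg_re, hre, sub_self, inner_zero_right, map_zero,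
          Complex.zero_re]
        ring
  · intro y hy hyR
    simp only [hu, hf, hχin y hyR.le]
    linarith [hDsq y hy]
  · intro y hy t hQt hut
    have hsq := sq_nonneg ‖y - p‖
    have h0 : 0 ≤ B * ‖y - p‖ ^ 2 := by positivity
    have ht0 : 0 < t := by linarith
    have ht1 : 1 ≤ t := by linarith
    have h1 : t / 2 ≤ f y := by
      simp only [hu] at hut
      linarith
    have hyR : ‖y - p‖ < R := by
      by_contra hcon
      push Not at hcon
      have : f y = 0 := by simp [hf, hχout y (by linarith)]
      linarith
    have hy' := subset_closure hy
    have hyp := hpΩ y hy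
    have h2 : f y ≤ (ψ y)⁻¹.re + M :=
      mul_le_of_le_one_left (hinv y hy' hyR hyp) χ.le_one
    have h3 : t / 4 ≤ ‖ψ y‖⁻¹ := by
      rw [← norm_inv]
      refine le_trans ?_ (Complex.re_le_norm _)
      linarith
    have h4 : 0 < ‖ψ y‖ := norm_pos_iff.2 (hne y hy' hyR hyp)
    have h5 : ‖ψ y‖ ≤ 4 / t := by
      rw [le_inv_comm₀ (by positivity) h4] at h3
      rwa [inv_div] at h3
    refine ⟨h5.trans ?_, ?_⟩
    · gcongr
      have : 0 ≤ (4 + 16 * M) / c := by positivity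
      linarith
    · have h6 := hψR y hy' hyR
      have h7 : (ψ y).re ≤ 4 / t := (Complex.re_le_norm _).trans h5
      have h8 : ‖ψ y‖ ^ 2 ≤ 16 / t := by
        calc ‖ψ y‖ ^ 2 ≤ (4 / t) ^ 2 := by gcongr
          _ = 16 / t / t := by field_simp; norm_num
          _ ≤ 16 / t := div_le_self (by positivity) ht1
      have h9 : c * ‖y - p‖ ^ 2 ≤ (4 + 16 * M) / t := by
        have := mul_le_mul_of_nonneg_left h8 hM
        calc _ ≤ _ := h6
          _ ≤ 4 / t + M * (16 / t) := by linarith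
          _ = _ := by ring
      calc ‖y - p‖ ^ 2 = c * ‖y - p‖ ^ 2 / c := by field_simp
        _ ≤ (4 + 16 * M) / t / c := by gcongr
        _ = (4 + 16 * M) / c / t := by ring
        _ ≤ _ := by gcongr; linarith

end Barrier

section Slices

lemma Complex.le_inv_re_of_norm_sub_le {w : ℂ} {r : ℝ} (hr : 0 < r) (h : ‖w - r‖ ≤ r / 4) :
    1 / (4 * r) ≤ w⁻¹.re := by
  have h1 : |(w - r).re| ≤ r / 4 := (Complex.abs_re_le_norm _).trans h
  have h2 : 3 / 4 * r ≤ w.re := by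
    have := (abs_le.1 h1).1
    simp at this
    linarith
  have h3 : ‖w‖ ≤ 5 / 4 * r := by
    have := norm_add_le (w - r) (r : ℂ)
    rw [sub_add_cancel, Complex.norm_real, Real.norm_of_nonneg hr.le] at this
    linarith
  have h4 : 0 < Complex.normSq w := by
    rw [Complex.normSq_pos]
    rintro rfl
    simp at h2
    linarith
  rw [Complex.inv_re, div_le_div_iff₀ (by positivity) h4, Complex.normSq_eq_norm_sq]
  have h5 : ‖w‖ ^ 2 ≤ (5 / 4 * r) ^ 2 := by gcongr
  nlinarith only [h5, h2, hr, mul_le_mul_of_nonneg_right h2 hr.le]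

lemma norm_iterate_sub_le {E : Type*} [NormedAddCommGroup E] {Ω : Set E} {F : E → E}
    (hm : MapsTo F Ω Ω) {p : E}
    (ho : ∀ ε > 0, ∃ δ > 0, ∀ x ∈ Ω, ‖x - p‖ < δ → ‖F x - x‖ ≤ ε * ‖x - p‖ ^ 2) (k : ℕ) :
    ∀ ε > 0, ∃ δ > 0, ∀ x ∈ Ω, ‖x - p‖ < δ → ‖F^[k] x - x‖ ≤ ε * ‖x - p‖ ^ 2 := by
  induction k with
  | zero =>
    intro ε hε
    refine ⟨1, one_pos, fun x _ _ => ?_⟩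
    simp only [iterate_zero, id, sub_self, norm_zero]
    positivity
  | succ k ih =>
    intro ε hε
    obtain ⟨δ₁, hδ₁, h₁⟩ := ih (ε / 8) (by positivity)
    obtain ⟨δ₂, hδ₂, h₂⟩ := ho (min (ε / 2) 1) (by positivity)
    refine ⟨min (min (δ₁ / 2) δ₂) 1, by positivity, fun x hx hxδ => ?_⟩
    have hx1 : ‖x - p‖ < δ₁ / 2 := hxδ.trans_le ((min_le_left _ _).trans (min_le_left _ _))
    have hx2 : ‖x - p‖ < δ₂ := hxδ.trans_le ((min_le_left _ _).trans (min_le_right _ _))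
    have hx3 : ‖x - p‖ < 1 := hxδ.trans_le (min_le_right _ _)
    have h3 := h₂ x hx hx2
    have h4 : ‖F x - x‖ ≤ ‖x - p‖ := by
      refine h3.trans ?_
      have : min (ε / 2) 1 * ‖x - p‖ ^ 2 ≤ 1 * ‖x - p‖ ^ 2 := by gcongr; exact min_le_right _ _
      nlinarith [norm_nonneg (x - p)]
    have h5 : ‖F x - p‖ ≤ 2 * ‖x - p‖ := by
      have := norm_add_le (F x - x) (x - p)
      rw [sub_add_sub_cancel] at this
      linarith
    have h6 := h₁ (F x) (hm hx) (by linarith)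
    rw [iterate_succ_apply]
    calc ‖F^[k] (F x) - x‖ = ‖(F^[k] (F x) - F x) + (F x - x)‖ := by rw [sub_add_sub_cancel]
      _ ≤ _ := norm_add_le _ _
      _ ≤ ε / 8 * (2 * ‖x - p‖) ^ 2 + ε / 2 * ‖x - p‖ ^ 2 := by
        refine add_le_add (h6.trans (by gcongr)) (h3.trans ?_)
        gcongr
        exact min_le_left _ _
      _ = _ := by ring

variable {n : ℕ} {Ω : Set (En n)} {p a : En n} {ψ : En n → ℂ} {u : En n → ℝ} {G : En n → En n}
  {C R₁ : ℝ}

lemma norm_support_sub_le (ha : a ≠ 0)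
    (hψ : ∀ y, ‖ψ y + inner ℂ a (y - p) / (‖a‖ : ℂ) ^ 2‖ ≤ C * ‖y - p‖ ^ 2) (hC : 0 ≤ C)
    {v : En n} (hv : inner ℂ a v = 0) {η : ℂ} {y : En n}
    (hy : ‖y - (p + η • (v - a))‖ ≤ ‖η • (v - a)‖ ^ 2) (hη : ‖η • (v - a)‖ ≤ 1) :
    ‖ψ y - η‖ ≤ (4 * C + 1 / ‖a‖) * ‖v - a‖ ^ 2 * ‖η‖ ^ 2 := by
  have hR : 0 < ‖a‖ := norm_pos_iff.2 ha
  obtain ⟨x, hx⟩ : ∃ x, x = η • (v - a) := ⟨_, rfl⟩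
  rw [← hx] at hy hη
  have h1 : inner ℂ a x = -η * (‖a‖ : ℂ) ^ 2 := by
    rw [hx, inner_smul_right, inner_sub_right, hv, inner_self_eq_norm_sq_to_K]
    simp
  have hRc : (‖a‖ : ℂ) ≠ 0 := by exact_mod_cast hR.ne'
  have h2 : inner ℂ a (y - p) / (‖a‖ : ℂ) ^ 2 = inner ℂ a (y - (p + x)) / (‖a‖ : ℂ) ^ 2 - η := by
    have : y - p = (y - (p + x)) + x := by abel
    rw [this, inner_add_right, h1]
    field_simp
    ring
  have h3 : ‖y - p‖ ≤ 2 * ‖x‖ := by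
    have h4 : y - p = (y - (p + x)) + x := by abel
    rw [h4]
    refine (norm_add_le _ _).trans ?_
    nlinarith [norm_nonneg x]
  have h4 : ‖inner ℂ a (y - (p + x)) / (‖a‖ : ℂ) ^ 2‖ ≤ 1 / ‖a‖ * ‖x‖ ^ 2 := by
    rw [norm_div, norm_pow, Complex.norm_real, norm_norm]
    calc _ ≤ ‖a‖ * ‖x‖ ^ 2 / ‖a‖ ^ 2 := by
          gcongr
          exact (norm_inner_le_norm _ _).trans (by gcongr)
      _ = _ := by field_simp
  have h5 := hψ y
  rw [h2] at h5
  have h6 : ψ y - η = (ψ y + (inner ℂ a (y - (p + x)) / (‖a‖ : ℂ) ^ 2 - η))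
      - inner ℂ a (y - (p + x)) / (‖a‖ : ℂ) ^ 2 := by ring
  rw [h6]
  calc _ ≤ C * ‖y - p‖ ^ 2 + 1 / ‖a‖ * ‖x‖ ^ 2 := (norm_sub_le _ _).trans (add_le_add h5 h4)
    _ ≤ C * (2 * ‖x‖) ^ 2 + 1 / ‖a‖ * ‖x‖ ^ 2 := by gcongr
    _ = (4 * C + 1 / ‖a‖) * ‖x‖ ^ 2 := by ring
    _ = _ := by rw [hx, norm_smul]; ring

lemma hasHolomorphicSupport_exp_comp (hu : ContinuousOn u Ω)
    (hus : ∀ y ∈ Ω, ∃ h : En n → ℂ, (∀ᶠ z in 𝓝 y, DifferentiableAt ℂ h z ∧ (h z).re ≤ u z) ∧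
        (h y).re = u y) {γ : ℂ → En n} {U : Set ℂ} (hU : IsOpen U)
    (hγ : DifferentiableOn ℂ γ U) (hγm : MapsTo γ U Ω) :
    HasHolomorphicSupport (fun ξ => Real.exp (u (γ ξ))) U := by
  refine ⟨Real.continuous_exp.comp_continuousOn (hu.comp hγ.continuousOn hγm), fun c hc => ?_⟩
  obtain ⟨h, hh, hhc⟩ := hus (γ c) (hγm hc)
  refine ⟨fun ξ => Complex.exp (h (γ ξ)), ?_, by simp only [Complex.norm_exp, hhc]⟩
  have hγc : ContinuousAt γ c := (hγ.differentiableAt (hU.mem_nhds hc)).continuousAt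
  filter_upwards [hγc.eventually hh, hU.mem_nhds hc] with ξ hξ hξU
  refine ⟨(hξ.1.comp ξ (hγ.differentiableAt (hU.mem_nhds hξU))).cexp, ?_⟩
  rw [Complex.norm_exp]
  exact Real.exp_le_exp.2 hξ.2

/-- Poisson-type upper bound for the barrier along the slices through `p`, uniform over all
self-maps of `Ω` that agree with the identity to second order at `p`. -/
lemma barrier_comp_le_on_slice (ha : a ≠ 0) (hball : ball (p - a) ‖a‖ ⊆ Ω)
    (hψ : ∀ y, ‖ψ y + inner ℂ a (y - p) / (‖a‖ : ℂ) ^ 2‖ ≤ C * ‖y - p‖ ^ 2) (hC : 0 ≤ C)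
    (hu : ContinuousOn u Ω) (hu0 : ∀ y ∈ Ω, u y ≤ 0)
    (hus : ∀ y ∈ Ω, ∃ h : En n → ℂ, (∀ᶠ z in 𝓝 y, DifferentiableAt ℂ h z ∧ (h z).re ≤ u z) ∧
        (h y).re = u y) (hR₁ : 0 < R₁) (huψ : ∀ y ∈ Ω, ‖y - p‖ < R₁ → u y ≤ -(ψ y)⁻¹.re)
    (hG : DifferentiableOn ℂ G Ω) (hGm : MapsTo G Ω Ω)
    (ho : ∀ ε > 0, ∃ δ > 0, ∀ x ∈ Ω, ‖x - p‖ < δ → ‖G x - x‖ ≤ ε * ‖x - p‖ ^ 2)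
    {v : En n} (hv : inner ℂ a v = 0) {η : ℂ}
    (hη : (1 + ‖v‖ ^ 2 / ‖a‖ ^ 2) * ‖η‖ ^ 2 < 2 * η.re) :
    u (G (p + η • (v - a))) ≤
      -(1 / 32 * ((2 * η.re - (1 + ‖v‖ ^ 2 / ‖a‖ ^ 2) * ‖η‖ ^ 2) / ‖η‖ ^ 2)) := by
  obtain ⟨β, hβ⟩ : ∃ β : ℝ, β = 1 + ‖v‖ ^ 2 / ‖a‖ ^ 2 := ⟨_, rfl⟩
  rw [← hβ] at hη ⊢
  have hβ0 : 0 < β := by rw [hβ]; positivity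
  have hβc : (β : ℂ) ≠ 0 := by exact_mod_cast hβ0.ne'
  obtain ⟨γ, hγ⟩ : ∃ γ : ℂ → En n, γ = fun ξ => p + ((1 - ξ) / (β : ℂ)) • (v - a) := ⟨_, rfl⟩
  have hγm : MapsTo γ (ball 0 1) Ω := fun ξ hξ => by
    rw [hγ, hβ]
    exact hball (mem_ball_of_norm_lt_one ha hv (by simpa using hξ))
  have hγd : Differentiable ℂ γ := by rw [hγ]; fun_prop
  have hS := hasHolomorphicSupport_exp_comp hu hus isOpen_ball
    (hG.comp hγd.differentiableOn hγm) (hGm.comp hγm)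
  have hS1 : ∀ ξ ∈ ball (0 : ℂ) 1, Real.exp (u ((G ∘ γ) ξ)) ≤ 1 := fun ξ hξ =>
    Real.exp_le_one_iff.2 (hu0 _ (hGm (hγm hξ)))
  obtain ⟨ξ, hξ⟩ : ∃ ξ : ℂ, ξ = 1 - β * η := ⟨_, rfl⟩
  have hγξ : γ ξ = p + η • (v - a) := by
    rw [hγ, hξ]
    simp only [sub_sub_cancel]
    rw [mul_div_cancel_left₀ _ hβc]
  have hξn : 1 - ‖ξ‖ ^ 2 = β * (2 * η.re - β * ‖η‖ ^ 2) := by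
    rw [hξ, ← Complex.normSq_eq_norm_sq, ← Complex.normSq_eq_norm_sq, Complex.normSq_apply,
      Complex.normSq_apply]
    simp
    ring
  have hξ1 : ‖ξ‖ < 1 := by
    have : 0 < β * (2 * η.re - β * ‖η‖ ^ 2) := mul_pos hβ0 (by linarith)
    nlinarith [norm_nonneg ξ]
  have hη0 : η ≠ 0 := by rintro rfl; simp at hη
  have hηn : 0 < ‖η‖ := norm_pos_iff.2 hη0
  -- the estimate for a fixed small disc
  obtain ⟨δ, hδ, hδG⟩ := ho 1 one_pos
  obtain ⟨N, hN⟩ : ∃ N : ℝ, N = ‖v - a‖ := ⟨_, rfl⟩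
  have hN0 : 0 ≤ N := hN ▸ norm_nonneg _
  obtain ⟨K, hK⟩ : ∃ K : ℝ, K = (4 * C + 1 / ‖a‖) * N ^ 2 := ⟨_, rfl⟩
  have hK0 : 0 ≤ K := by rw [hK]; positivity
  have hev : ∀ᶠ r : ℝ in 𝓝[>] 0, u (G (γ ξ)) ≤
      -(β / 32 * ((1 - ‖ξ‖ ^ 2) / ‖1 - ((1 - β * r : ℝ) : ℂ) * ξ‖ ^ 2)) := by
    have hsm : ∀ c : ℝ, 0 < c → ∀ B : ℝ, ∀ᶠ r : ℝ in 𝓝[>] 0, B * r < c := by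
      intro c hc B
      have : Tendsto (fun r : ℝ => B * r) (𝓝[>] 0) (𝓝 0) := by
        have h : Continuous fun r : ℝ => B * r := by fun_prop
        simpa using (h.tendsto 0).mono_left nhdsWithin_le_nhds
      exact this.eventually_lt_const hc
    filter_upwards [self_mem_nhdsWithin, hsm 1 one_pos β, hsm δ hδ (2 * N), hsm R₁ hR₁ (4 * N),
      hsm 1 one_pos (2 * N), hsm (1 / 8) (by norm_num) (4 * K)] with r hr0 hr1 hr2 hr3 hr4 hr5
    have hr0 : 0 < r := hr0
    have hsmall : ∀ z ∈ ball (0 : ℂ) 1, ‖z - (1 - β * r : ℝ)‖ ≤ (1 - (1 - β * r)) / 8 →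
        Real.exp (u ((G ∘ γ) z)) ≤ Real.exp (-(1 / (4 * r))) := by
      intro z hz hzr
      obtain ⟨w, hw⟩ : ∃ w : ℂ, w = (1 - z) / β := ⟨_, rfl⟩
      have hzw : z = 1 - β * w := by rw [hw]; field_simp; ring
      have hwr : ‖w - r‖ ≤ r / 8 := by
        have h1 : z - (1 - β * r : ℝ) = -(β * (w - r)) := by
          rw [hzw]; push_cast; ring
        rw [h1, norm_neg, norm_mul, Complex.norm_real, Real.norm_of_nonneg hβ0.le] at hzr
        have : β * ‖w - r‖ ≤ β * (r / 8) := hzr.trans_eq (by ring)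
        exact le_of_mul_le_mul_left this hβ0
      have hwn : ‖w‖ ≤ 2 * r := by
        have := norm_add_le (w - r) (r : ℂ)
        rw [sub_add_cancel, Complex.norm_real, Real.norm_of_nonneg hr0.le] at this
        linarith
      have hγz : γ z = p + w • (v - a) := by rw [hγ, hw]
      have hzΩ : γ z ∈ Ω := hγm hz
      have hx : ‖w • (v - a)‖ ≤ 2 * N * r := by
        rw [norm_smul, ← hN]
        calc _ ≤ 2 * r * N := by gcongr
          _ = _ := by ring
      have hGz : ‖G (γ z) - (p + w • (v - a))‖ ≤ ‖w • (v - a)‖ ^ 2 := by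
        have := hδG (γ z) hzΩ (by rw [hγz, add_sub_cancel_left]; linarith)
        rw [hγz, add_sub_cancel_left, one_mul] at this
        rwa [hγz]
      have h1 := norm_support_sub_le ha hψ hC hv hGz (by linarith)
      rw [← hN, ← hK] at h1
      have h2 : ‖ψ (G (γ z)) - r‖ ≤ r / 4 := by
        have h3 : ψ (G (γ z)) - r = (ψ (G (γ z)) - w) + (w - r) := by ring
        rw [h3]
        have h4 : K * ‖w‖ ^ 2 ≤ r / 8 := by
          calc K * ‖w‖ ^ 2 ≤ K * (2 * r) ^ 2 := by gcongr
            _ = 4 * K * r * r := by ring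
            _ ≤ 1 / 8 * r := by gcongr
            _ = _ := by ring
        exact (norm_add_le _ _).trans (by linarith)
      have h5 := Complex.le_inv_re_of_norm_sub_le hr0 h2
      have h6 : ‖G (γ z) - p‖ < R₁ := by
        have h7 : G (γ z) - p = (G (γ z) - (p + w • (v - a))) + w • (v - a) := by abel
        rw [h7]
        have h8 := norm_nonneg (w • (v - a))
        have h9 : ‖w • (v - a)‖ ^ 2 ≤ ‖w • (v - a)‖ := by nlinarith
        exact (norm_add_le _ _).trans_lt (by linarith)
      exact Real.exp_le_exp.2 ((huψ _ (hGm hzΩ) h6).trans (by linarith))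
    have h1 := Real.exp_le_exp.1 (hS.le_exp_poisson hS1 (by linarith)
      (by nlinarith [mul_pos hβ0 hr0]) (by positivity) hsmall (z := ξ) (by simpa using hξ1))
    refine h1.trans (neg_le_neg ?_)
    rw [mul_div_assoc, ← mul_assoc]
    have h2 : 0 ≤ 1 - ‖ξ‖ ^ 2 := by nlinarith [norm_nonneg ξ]
    gcongr
    have h3 : 1 / (4 * r) / 8 * (1 - (1 - β * r) ^ 2) = β / 32 * (2 - β * r) := by
      field_simp; ring
    rw [h3]
    nlinarith
  have hlim : Tendsto (fun r : ℝ => -(β / 32 * ((1 - ‖ξ‖ ^ 2) /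
      ‖1 - ((1 - β * r : ℝ) : ℂ) * ξ‖ ^ 2))) (𝓝[>] 0)
      (𝓝 (-(β / 32 * ((1 - ‖ξ‖ ^ 2) / ‖1 - ((1 - β * (0 : ℝ) : ℝ) : ℂ) * ξ‖ ^ 2)))) := by
    have hne : ‖1 - ((1 - β * (0 : ℝ) : ℝ) : ℂ) * ξ‖ ^ 2 ≠ 0 := by
      have : (1 : ℂ) - ξ = β * η := by rw [hξ]; ring
      simp [this, hβ0.ne', hη0]
    have hc : ContinuousAt (fun r : ℝ => -(β / 32 * ((1 - ‖ξ‖ ^ 2) /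
        ‖1 - ((1 - β * r : ℝ) : ℂ) * ξ‖ ^ 2))) 0 := by
      refine ContinuousAt.neg (continuousAt_const.mul (continuousAt_const.div ?_ hne))
      fun_prop
    exact hc.tendsto.mono_left nhdsWithin_le_nhds
  have hfin := ge_of_tendsto hlim hev
  rw [hγξ] at hfin
  refine hfin.trans_eq ?_
  have h1 : (1 : ℂ) - ((1 - β * (0 : ℝ) : ℝ) : ℂ) * ξ = β * η := by rw [hξ]; push_cast; ring
  rw [h1, hξn, norm_mul, Complex.norm_real, Real.norm_of_nonneg hβ0.le]
  field_simp

end Slices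

section Straighten

lemma Matrix.norm_det_le_of_norm_le_mul {n : ℕ} {M : Matrix (Fin n) (Fin n) ℂ} {r c : Fin n → ℝ}
    (h : ∀ i j, ‖M i j‖ ≤ r i * c j) :
    ‖M.det‖ ≤ n.factorial * ((∏ i, r i) * ∏ j, c j) := by
  rw [Matrix.det_apply]
  refine (norm_sum_le _ _).trans ?_
  have h1 : ∀ σ ∈ (Finset.univ : Finset (Equiv.Perm (Fin n))),
      ‖Equiv.Perm.sign σ • ∏ i, M (σ i) i‖ ≤ (∏ i, r i) * ∏ j, c j := by
    intro σ _
    have h2 : ‖Equiv.Perm.sign σ • ∏ i, M (σ i) i‖ = ‖∏ i, M (σ i) i‖ := by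
      rcases Int.units_eq_one_or (Equiv.Perm.sign σ) with hs | hs <;> simp [hs]
    rw [h2, norm_prod, ← Equiv.prod_comp σ r, ← Finset.prod_mul_distrib]
    exact Finset.prod_le_prod (fun _ _ => norm_nonneg _) fun i _ => h _ _
  refine (Finset.sum_le_card_nsmul _ _ _ h1).trans_eq ?_
  rw [Finset.card_univ, Fintype.card_perm, Fintype.card_fin, nsmul_eq_mul]

lemma norm_inner_fderiv_apply_le {E : Type*} [NormedAddCommGroup E] [InnerProductSpace ℂ E]
    {H : E → E} {x w b : E} {s B : ℝ} (hs : 0 < s)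
    (hd : ∀ ζ ∈ ball (0 : ℂ) s, DifferentiableAt ℂ H (x + ζ • w))
    (hB : ∀ ζ ∈ ball (0 : ℂ) s, ‖inner ℂ b (H (x + ζ • w))‖ ≤ B) :
    ‖inner ℂ b (fderiv ℂ H x w)‖ ≤ 2 * B / s := by
  have hl : ∀ ζ : ℂ, HasFDerivAt (fun ζ : ℂ => x + ζ • w)
      ((ContinuousLinearMap.id ℂ ℂ).smulRight w) ζ := fun ζ =>
    ((hasFDerivAt_id ζ).smul_const w).const_add x
  have hc : ∀ ζ ∈ ball (0 : ℂ) s, HasFDerivAt (fun ζ : ℂ => inner ℂ b (H (x + ζ • w)))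
      ((innerSL ℂ b).comp ((fderiv ℂ H (x + ζ • w)).comp
        ((ContinuousLinearMap.id ℂ ℂ).smulRight w))) ζ := fun ζ hζ =>
    (innerSL ℂ b).hasFDerivAt.comp ζ ((hd ζ hζ).hasFDerivAt.comp ζ (hl ζ))
  have h1 := norm_fderiv_le_of_norm_le_ball hs
    (fun ζ hζ => (hc ζ hζ).differentiableAt.differentiableWithinAt) hB
  rw [(hc 0 (mem_ball_self hs)).fderiv] at h1
  have h2 := (ContinuousLinearMap.le_opNorm _ (1 : ℂ)).trans
    (mul_le_mul_of_nonneg_right h1 (norm_nonneg _))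
  simpa using h2

variable {n : ℕ} {Ω : Set (En n)} {p a : En n} {ψ : En n → ℂ} {C : ℝ}

/-- The change of coordinates, tangent to the identity at `p`, whose `a`-component is `ψ`. -/
def straighten (p a : En n) (ψ : En n → ℂ) (y : En n) : En n :=
  y - p - (inner ℂ a (y - p) / (‖a‖ : ℂ) ^ 2 + ψ y) • a

lemma inner_straighten (ha : a ≠ 0) (y : En n) :
    inner ℂ a (straighten p a ψ y) = -(‖a‖ : ℂ) ^ 2 * ψ y := by
  have hR : (‖a‖ : ℂ) ≠ 0 := by exact_mod_cast (norm_pos_iff.2 ha).ne'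
  rw [straighten, inner_sub_right, inner_smul_right, inner_self_eq_norm_sq_to_K]
  simp only [Complex.coe_algebraMap]
  field_simp
  ring

lemma inner_straighten_of_orthogonal {b : En n} (hb : inner ℂ b a = 0) (y : En n) :
    inner ℂ b (straighten p a ψ y) = inner ℂ b (y - p) := by
  rw [straighten, inner_sub_right, inner_smul_right, hb, mul_zero, sub_zero]

lemma contDiff_straighten (hψ : ContDiff ℂ 2 ψ) : ContDiff ℂ 2 (straighten p a ψ) := by
  have h1 : ContDiff ℂ 2 fun y : En n => inner ℂ a (y - p) :=
    (innerSL ℂ a).contDiff.comp (contDiff_id.sub contDiff_const)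
  exact (contDiff_id.sub contDiff_const).sub (((h1.div_const _).add hψ).smul contDiff_const)

lemma fderiv_straighten (hψ : ∀ y, ‖ψ y + inner ℂ a (y - p) / (‖a‖ : ℂ) ^ 2‖ ≤ C * ‖y - p‖ ^ 2) :
    fderiv ℂ (straighten p a ψ) p = 1 := by
  have h1 : HasFDerivAt (𝕜 := ℂ) (fun y : En n => inner ℂ a (y - p) / (‖a‖ : ℂ) ^ 2 + ψ y) 0 p := by
    refine Asymptotics.IsBigO.hasFDerivAt (n := 2) ?_ one_lt_two
    refine Asymptotics.IsBigO.of_bound C (Eventually.of_forall fun y => ?_)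
    rw [norm_pow, norm_norm, add_comm]
    exact hψ y
  have h2 := ((hasFDerivAt_id (𝕜 := ℂ) p).sub_const p).sub (h1.smul_const a)
  refine (HasFDerivAt.congr_fderiv h2 ?_).fderiv
  ext x
  simp

/-- Anisotropic Cauchy estimates bound the Jacobian determinant nontangentially at `p`. -/
lemma norm_det_fderiv_straighten_comp_le (ha : a ≠ 0) (hball : ball (p - a) ‖a‖ ⊆ Ω)
    (hΩ : IsOpen Ω) (hψ : ContDiff ℂ 2 ψ) {Q : ℝ} (hQ : 0 < Q) (hC : 0 < C) :
    ∃ σ > 0, ∃ K > 0, ∀ f : En n → En n, DifferentiableOn ℂ f Ω →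
      (∀ (v : En n) (η : ℂ), inner ℂ a v = 0 →
        0 < 2 * η.re - (1 + ‖v‖ ^ 2 / ‖a‖ ^ 2) * ‖η‖ ^ 2 →
        Q * ‖η‖ ^ 2 ≤ 2 * η.re - (1 + ‖v‖ ^ 2 / ‖a‖ ^ 2) * ‖η‖ ^ 2 →
        ‖ψ (f (p + η • (v - a)))‖ ≤
            C * ‖η‖ ^ 2 / (2 * η.re - (1 + ‖v‖ ^ 2 / ‖a‖ ^ 2) * ‖η‖ ^ 2) ∧
          ‖f (p + η • (v - a)) - p‖ ^ 2 ≤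
            C * ‖η‖ ^ 2 / (2 * η.re - (1 + ‖v‖ ^ 2 / ‖a‖ ^ 2) * ‖η‖ ^ 2)) →
      ∀ η : ℂ, 0 < η.re → ‖η‖ ^ 2 ≤ σ * η.re →
        ‖(fderiv ℂ (straighten p a ψ ∘ f) (p - η • a)).det‖ ≤ K * (‖η‖ / η.re) ^ (n + 1) := by
  have hR : 0 < ‖a‖ := norm_pos_iff.2 ha
  have hRc : (‖a‖ : ℂ) ≠ 0 := by exact_mod_cast hR.ne'
  obtain ⟨i₀, b, hb⟩ : ∃ (i₀ : Fin n) (b : OrthonormalBasis (Fin n) ℂ (En n)),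
      b i₀ = (‖a‖ : ℂ)⁻¹ • a := by
    obtain ⟨i₀, -⟩ : ∃ i, a i ≠ 0 := by
      by_contra hcon
      push Not at hcon
      exact ha (by ext i; simpa using hcon i)
    have hv : Orthonormal ℂ (({i₀} : Set (Fin n)).domRestrict fun _ : Fin n => (‖a‖ : ℂ)⁻¹ • a) := by
      constructor
      · intro i
        change ‖(‖a‖ : ℂ)⁻¹ • a‖ = 1
        rw [norm_smul, norm_inv, Complex.norm_real, norm_norm, inv_mul_cancel₀ hR.ne']
      · intro i j hij
        exact absurd (Subsingleton.elim i j) hij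
    obtain ⟨b, hb⟩ := hv.exists_orthonormalBasis_extension_of_card_eq (by simp)
    exact ⟨i₀, b, hb i₀ rfl⟩
  have hab : a = (‖a‖ : ℂ) • b i₀ := by rw [hb, smul_smul, mul_inv_cancel₀ hRc, one_smul]
  have hbo : ∀ j, j ≠ i₀ → inner ℂ (b j) a = 0 ∧ inner ℂ a (b j) = 0 := by
    intro j hj
    rw [hab, inner_smul_right, inner_smul_left, b.orthonormal.2 hj, b.orthonormal.2 hj.symm]
    simp
  obtain ⟨K₀, hK₀⟩ : ∃ K₀ : ℝ, K₀ = (8 * C + 1) * (‖a‖ + 1) := ⟨_, rfl⟩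
  have hK₀pos : 0 < K₀ := by rw [hK₀]; positivity
  refine ⟨min (1 / 8) (1 / (8 * Q)), by positivity, n.factorial * (4 * K₀ / ‖a‖) ^ n,
    by positivity, fun f hf hfb η hη hησ => ?_⟩
  obtain ⟨m, hm⟩ : ∃ m : ℝ, m = η.re := ⟨_, rfl⟩
  rw [← hm] at hη hησ ⊢
  obtain ⟨μ, hμ⟩ : ∃ μ : ℝ, μ = √m := ⟨_, rfl⟩
  have hμ0 : 0 < μ := hμ ▸ Real.sqrt_pos.2 hη
  have hμm : μ ^ 2 = m := by rw [hμ, Real.sq_sqrt hη.le]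
  have hmη : m ≤ ‖η‖ := hm ▸ Complex.re_le_norm η
  have hη0 : 0 < ‖η‖ := hη.trans_le hmη
  have hηne : η ≠ 0 := norm_pos_iff.1 hη0
  have hησ1 : ‖η‖ ^ 2 ≤ 1 / 8 * m := hησ.trans (by gcongr; exact min_le_left _ _)
  have hησ2 : 8 * (Q * ‖η‖ ^ 2) ≤ m := by
    have : ‖η‖ ^ 2 ≤ 1 / (8 * Q) * m := hησ.trans (by gcongr; exact min_le_right _ _)
    calc 8 * (Q * ‖η‖ ^ 2) ≤ 8 * (Q * (1 / (8 * Q) * m)) := by gcongr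
      _ = m := by field_simp
  obtain ⟨s, hs⟩ : ∃ s : ℝ, s = ‖η‖ / μ := ⟨_, rfl⟩
  have hs0 : 0 < s := by rw [hs]; positivity
  have hs2 : s ^ 2 = ‖η‖ ^ 2 / m := by rw [hs, div_pow, hμm]
  -- the common bound on the coordinate discs
  have hdisc : ∀ j, ∀ ζ ∈ ball (0 : ℂ) (‖a‖ / 2 * (μ * if j = i₀ then μ else 1)),
      p - η • a + ζ • b j ∈ Ω ∧ ‖ψ (f (p - η • a + ζ • b j))‖ ≤ 8 * C * s ^ 2 ∧
        ‖f (p - η • a + ζ • b j) - p‖ ^ 2 ≤ 8 * C * s ^ 2 := by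
    have key : ∀ (v : En n) (η' : ℂ), inner ℂ a v = 0 → ‖η'‖ ≤ 2 * ‖η‖ →
        m / 2 ≤ 2 * η'.re - (1 + ‖v‖ ^ 2 / ‖a‖ ^ 2) * ‖η'‖ ^ 2 →
        p + η' • (v - a) ∈ Ω ∧ ‖ψ (f (p + η' • (v - a)))‖ ≤ 8 * C * s ^ 2 ∧
          ‖f (p + η' • (v - a)) - p‖ ^ 2 ≤ 8 * C * s ^ 2 := by
      intro v η' hv hη' hd
      have h0 : ‖η'‖ ^ 2 ≤ 4 * ‖η‖ ^ 2 := by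
        calc ‖η'‖ ^ 2 ≤ (2 * ‖η‖) ^ 2 := by gcongr
          _ = _ := by ring
      have h1 : Q * ‖η'‖ ^ 2 ≤ Q * (4 * ‖η‖ ^ 2) := by gcongr
      obtain ⟨d, hdd⟩ : ∃ d : ℝ, d = 2 * η'.re - (1 + ‖v‖ ^ 2 / ‖a‖ ^ 2) * ‖η'‖ ^ 2 := ⟨_, rfl⟩
      have h2 := hfb v η' hv (by linarith) (by linarith)
      rw [← hdd] at h2 hd
      have hB : C * ‖η'‖ ^ 2 / d ≤ 8 * C * s ^ 2 := by
        rw [hs2]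
        calc C * ‖η'‖ ^ 2 / d ≤ C * (4 * ‖η‖ ^ 2) / (m / 2) := by gcongr
          _ = _ := by field_simp; ring
      exact ⟨hball (mem_ball_of_orthogonal ha hv (by linarith)), h2.1.trans hB, h2.2.trans hB⟩
    intro j ζ hζ
    rw [mem_ball_zero_iff] at hζ
    by_cases hj : j = i₀
    · rw [if_pos hj, ← pow_two, hμm] at hζ
      obtain ⟨ω, hω⟩ : ∃ ω : ℂ, ω = ζ / ‖a‖ := ⟨_, rfl⟩
      have hωn : ‖ω‖ ≤ m / 2 := by
        rw [hω, norm_div, Complex.norm_real, norm_norm, div_le_iff₀ hR]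
        linarith
      have h1 : p - η • a + ζ • b j = p + (η - ω) • (0 - a) := by
        rw [hj, hb, hω, smul_smul, ← div_eq_mul_inv]
        module
      have h2 : ‖η - ω‖ ≤ 2 * ‖η‖ := (norm_sub_le _ _).trans (by linarith)
      have h3 : ‖η - ω‖ ^ 2 ≤ 4 * ‖η‖ ^ 2 := by
        calc ‖η - ω‖ ^ 2 ≤ (2 * ‖η‖) ^ 2 := by gcongr
          _ = _ := by ring
      rw [h1]
      refine key 0 (η - ω) (inner_zero_right _) h2 ?_
      have h4 := (Complex.re_le_norm ω).trans hωn
      rw [Complex.sub_re, ← hm, norm_zero]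
      simp only [ne_eq, OfNat.ofNat_ne_zero, not_false_eq_true, zero_pow, zero_div, add_zero,
        one_mul]
      linarith
    · rw [if_neg hj, mul_one] at hζ
      have h1 : p - η • a + ζ • b j = p + η • ((ζ / η) • b j - a) := by
        rw [smul_sub, smul_smul, mul_div_cancel₀ _ hηne]
        abel
      rw [h1]
      refine key _ η (by rw [inner_smul_right, (hbo j hj).2, mul_zero]) (by linarith) ?_
      rw [norm_smul, b.norm_eq_one, mul_one, norm_div, ← hm]
      have h2 : (1 + (‖ζ‖ / ‖η‖) ^ 2 / ‖a‖ ^ 2) * ‖η‖ ^ 2 = ‖η‖ ^ 2 + ‖ζ‖ ^ 2 / ‖a‖ ^ 2 := by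
        field_simp
      have h3 : ‖ζ‖ ^ 2 / ‖a‖ ^ 2 ≤ m / 4 := by
        rw [div_le_iff₀ (by positivity)]
        calc ‖ζ‖ ^ 2 ≤ (‖a‖ / 2 * μ) ^ 2 := by gcongr
          _ = _ := by rw [mul_pow, hμm]; ring
      rw [h2]
      linarith
  have hΘ := contDiff_straighten (p := p) (a := a) hψ
  -- the entries of the matrix
  have hentry : ∀ i j, ‖inner ℂ (b i) (fderiv ℂ (straighten p a ψ ∘ f) (p - η • a) (b j))‖ ≤
      (K₀ * s * if i = i₀ then s else 1) *
        (4 / ‖a‖ * (μ⁻¹ * if j = i₀ then μ⁻¹ else 1)) := by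
    intro i j
    have hpos : 0 < ‖a‖ / 2 * (μ * if j = i₀ then μ else 1) := by split_ifs <;> positivity
    have h1 : ∀ ζ ∈ ball (0 : ℂ) (‖a‖ / 2 * (μ * if j = i₀ then μ else 1)),
        ‖inner ℂ (b i) ((straighten p a ψ ∘ f) (p - η • a + ζ • b j))‖ ≤
          K₀ * s * if i = i₀ then s else 1 := by
      intro ζ hζ
      obtain ⟨-, h2, h3⟩ := hdisc j ζ hζ
      rw [comp_apply]
      by_cases hi : i = i₀
      · rw [if_pos hi, hi, hb, inner_smul_left, inner_straighten ha, norm_mul, norm_mul, norm_neg,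
          norm_pow, map_inv₀, Complex.conj_ofReal, norm_inv, Complex.norm_real, norm_norm]
        calc ‖a‖⁻¹ * (‖a‖ ^ 2 * ‖ψ (f (p - η • a + ζ • b j))‖)
            ≤ ‖a‖⁻¹ * (‖a‖ ^ 2 * (8 * C * s ^ 2)) := by gcongr
          _ = (8 * C) * ‖a‖ * s ^ 2 := by field_simp
          _ ≤ (8 * C + 1) * (‖a‖ + 1) * s ^ 2 := by gcongr <;> linarith
          _ = _ := by rw [hK₀]; ring
      · rw [if_neg hi, inner_straighten_of_orthogonal (hbo i hi).1, mul_one]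
        refine (norm_inner_le_norm _ _).trans ?_
        rw [b.norm_eq_one, one_mul]
        refine le_of_sq_le_sq ?_ (by positivity)
        refine h3.trans ?_
        rw [mul_pow]
        gcongr
        have h4 : 8 * C + 1 ≤ K₀ := by rw [hK₀]; nlinarith
        nlinarith
    have h2 := norm_inner_fderiv_apply_le hpos (fun ζ hζ => ?_) h1
    · refine h2.trans_eq ?_
      by_cases hj : j = i₀
      · rw [if_pos hj, if_pos hj]; field_simp; ring
      · rw [if_neg hj, if_neg hj]; field_simp; ring
    · exact ((hΘ.differentiable two_ne_zero).differentiableAt).comp _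
        (hf.differentiableAt (hΩ.mem_nhds (hdisc j ζ hζ).1))
  have hdet := Matrix.norm_det_le_of_norm_le_mul (M := LinearMap.toMatrix b.toBasis b.toBasis
    (fderiv ℂ (straighten p a ψ ∘ f) (p - η • a)).toLinearMap) (fun i j => by
      rw [LinearMap.toMatrix_apply, b.coe_toBasis, b.coe_toBasis_repr_apply, b.repr_apply_apply]
      exact hentry i j)
  rw [LinearMap.det_toMatrix] at hdet
  refine hdet.trans_eq ?_
  simp only [Finset.prod_mul_distrib, Finset.prod_const, Finset.card_univ, Fintype.card_fin,
    Finset.prod_ite_eq', Finset.mem_univ, if_true]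
  rw [hs, ← hμm]
  simp only [div_pow, mul_pow, inv_pow, pow_succ]
  field_simp
  exact one_pow n

end Straighten

section Determinants

variable {n : ℕ}

lemma exists_norm_det_le (B : ℝ) : ∃ D > 0, ∀ A : En n →L[ℂ] En n, ‖A‖ ≤ B → ‖A.det‖ ≤ D := by
  have : ProperSpace (En n →L[ℂ] En n) := FiniteDimensional.proper ℂ _
  obtain ⟨D, hD⟩ := (isCompact_closedBall (0 : En n →L[ℂ] En n) B).exists_bound_of_continuousOn
    (f := fun A => A.det) ContinuousLinearMap.continuous_det.continuousOn
  refine ⟨max D 1, by positivity, fun A hA => (hD A ?_).trans (le_max_left _ _)⟩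
  simpa using hA

lemma exists_pos_le_norm_det :
    ∃ ν > 0, ∀ A : En n →L[ℂ] En n, ‖A - 1‖ < ν → 3 / 4 ≤ ‖A.det‖ := by
  have h1 : Tendsto (fun A : En n →L[ℂ] En n => ‖A.det‖) (𝓝 1) (𝓝 1) := by
    have : Continuous fun A : En n →L[ℂ] En n => ‖A.det‖ :=
      ContinuousLinearMap.continuous_det.norm
    have h2 := this.tendsto 1
    have h3 : ‖(1 : En n →L[ℂ] En n).det‖ = 1 := by
      change ‖LinearMap.det (LinearMap.id : En n →ₗ[ℂ] En n)‖ = 1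
      rw [LinearMap.det_id, norm_one]
    rwa [h3] at h2
  obtain ⟨ν, hν, h⟩ := Metric.eventually_nhds_iff.1
    (h1.eventually_const_le (show (3 / 4 : ℝ) < 1 by norm_num))
  exact ⟨ν, hν, fun A hA => h (by rwa [dist_eq_norm])⟩

lemma differentiableOn_det_fderiv_line {U : Set (En n)} (hU : IsOpen U) {H : En n → En n}
    (hH : DifferentiableOn ℂ H U) (x v : En n) :
    DifferentiableOn ℂ (fun ζ : ℂ => (fderiv ℂ H (x + ζ • v)).det) {ζ : ℂ | x + ζ • v ∈ U} := by
  obtain ⟨b, -⟩ : ∃ b : OrthonormalBasis (Fin n) ℂ (En n), b = EuclideanSpace.basisFun _ _ :=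
    ⟨_, rfl⟩
  have h1 : (fun ζ : ℂ => (fderiv ℂ H (x + ζ • v)).det) = fun ζ : ℂ =>
      ∑ σ : Equiv.Perm (Fin n), (Equiv.Perm.sign σ : ℂ) *
        ∏ i, innerSL ℂ (b (σ i)) (fderiv ℂ H (x + ζ • v) (b i)) := by
    funext ζ
    rw [ContinuousLinearMap.det, ← LinearMap.det_toMatrix b.toBasis, Matrix.det_apply']
    refine Finset.sum_congr rfl fun σ _ => ?_
    congr 1
    refine Finset.prod_congr rfl fun i _ => ?_
    rw [LinearMap.toMatrix_apply, b.coe_toBasis, b.coe_toBasis_repr_apply, b.repr_apply_apply]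
    rfl
  rw [h1]
  refine DifferentiableOn.fun_sum fun σ _ => DifferentiableOn.const_mul ?_ _
  refine DifferentiableOn.fun_finsetProd fun i _ => ?_
  exact (innerSL ℂ (b (σ i))).differentiable.comp_differentiableOn
    (differentiableOn_fderiv_line hU hH x v (b i))

lemma continuousAt_fderiv {U : Set (En n)} (hU : IsOpen U) {H : En n → En n}
    (hH : DifferentiableOn ℂ H U) {x : En n} (hx : x ∈ U) : ContinuousAt (fderiv ℂ H) x := by
  have hc : ContinuousAt H x := (hH.differentiableAt (hU.mem_nhds hx)).continuousAt
  have h1 : ∀ᶠ z in 𝓝 x, z ∈ U ∧ ‖H z‖ < ‖H x‖ + 1 :=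
    (hU.eventually_mem hx).and (hc.norm.eventually_lt_const (lt_add_one _))
  obtain ⟨R, hR, h2⟩ := Metric.eventually_nhds_iff_ball.1 h1
  refine Metric.continuousAt_iff'.2 fun ε hε => ?_
  obtain ⟨L, hL⟩ : ∃ L : ℝ, L = 32 * (‖H x‖ + 1) / R ^ 2 := ⟨_, rfl⟩
  have hL0 : 0 < L := by rw [hL]; positivity
  filter_upwards [ball_mem_nhds x (show 0 < R / 4 by positivity),
    ball_mem_nhds x (show 0 < ε / L by positivity)] with z hz hz2
  rw [dist_eq_norm]
  refine (norm_fderiv_sub_fderiv_le hR (hH.mono fun z hz => (h2 z hz).1)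
    (fun z hz => (h2 z hz).2.le) (mem_ball_self (by positivity)) hz).trans_lt ?_
  rw [← hL, mul_comm, ← lt_div_iff₀ hL0]
  exact mem_ball_iff_norm.1 hz2

/-- Exponential decay along a radius for a function with a nontangential polynomial bound. -/
lemma norm_le_exp_of_nontangential_bound {h : ℂ → ℂ} (hh : DifferentiableOn ℂ h (ball 0 1)) {N : ℕ}
    {K : ℝ} (hK : 0 < K) (hb : ∀ ζ ∈ ball (0 : ℂ) 1, ‖h ζ‖ ≤ K * (‖1 - ζ‖ / (1 - ζ.re)) ^ N)
    {L M : ℝ} (hL : 1 ≤ L) (hM : 0 ≤ M)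
    (hs : ∀ ζ ∈ ball (0 : ℂ) 1, ‖ζ‖ ≤ Real.exp (-L) → ‖h ζ‖ ≤ Real.exp (-M)) {t : ℝ}
    (ht0 : 0 < t) (ht1 : t ≤ 1) :
    ‖h (1 - t)‖ ≤ (K * 2 ^ N + 1) * 2 ^ N * Real.exp (-(M / L * (t / 2))) := by
  obtain ⟨K', hK'⟩ : ∃ K' : ℝ, K' = K * 2 ^ N + 1 := ⟨_, rfl⟩
  have hK'1 : 1 ≤ K' := by rw [hK']; linarith [show 0 < K * 2 ^ N by positivity]
  obtain ⟨s, hsd⟩ : ∃ s : ℝ, s = 1 - t / 2 := ⟨_, rfl⟩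
  have hs0 : 0 < s := by linarith
  have hmem : ∀ z ∈ ball (0 : ℂ) 1, ‖(s : ℂ) * z‖ < s ∧ ‖(s : ℂ) * z‖ ≤ ‖z‖ := by
    intro z hz
    rw [mem_ball_zero_iff] at hz
    rw [norm_mul, Complex.norm_real, Real.norm_of_nonneg hs0.le]
    constructor <;> nlinarith [norm_nonneg z]
  have hmaps : MapsTo (fun z : ℂ => (s : ℂ) * z) (ball 0 1) (ball 0 1) := fun z hz =>
    mem_ball_zero_iff.2 ((hmem z hz).1.trans_le (by linarith))
  have hden : ∀ z ∈ ball (0 : ℂ) 1, t ≤ ‖1 + t - s * z‖ := by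
    intro z hz
    have h1 : ((1 : ℂ) + t - s * z).re ≤ _ := Complex.re_le_norm _
    have h2 : ((s : ℂ) * z).re ≤ _ := Complex.re_le_norm _
    have h3 := (hmem z hz).1
    simp only [Complex.add_re, Complex.sub_re, Complex.one_re, Complex.ofReal_re] at h1
    linarith
  have hne : ∀ z ∈ ball (0 : ℂ) 1, (1 : ℂ) + t - s * z ≠ 0 := fun z hz =>
    norm_pos_iff.1 (ht0.trans_le (hden z hz))
  obtain ⟨g, hg⟩ : ∃ g : ℂ → ℂ, g = fun z => h (s * z) * (t / (1 + t - s * z)) ^ N / K' := ⟨_, rfl⟩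
  have hgd : DifferentiableOn ℂ g (ball 0 1) := by
    rw [hg]
    refine DifferentiableOn.div_const (DifferentiableOn.mul (hh.comp (by fun_prop) hmaps) ?_) _
    refine DifferentiableOn.pow (DifferentiableOn.div (by fun_prop) (by fun_prop) hne) _
  have hgn : ∀ z, ‖g z‖ = ‖h (s * z)‖ * (t / ‖1 + t - s * z‖) ^ N / K' := by
    intro z
    rw [hg]
    simp only [norm_div, norm_mul, norm_pow, Complex.norm_real, Real.norm_of_nonneg ht0.le,
      Real.norm_of_nonneg (zero_le_one.trans hK'1)]
  have hg1 : ∀ z ∈ ball (0 : ℂ) 1, ‖g z‖ ≤ 1 := by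
    intro z hz
    rw [hgn, div_le_one (by linarith)]
    have h1 := hb _ (hmaps hz)
    obtain ⟨ζ, hζ⟩ : ∃ ζ : ℂ, ζ = s * z := ⟨_, rfl⟩
    have h0 := (hmem z hz).1
    have h4 := ht0.trans_le (hden z hz)
    simp only [← hζ] at h1 h0 h4 ⊢
    have h2 : t / 2 ≤ 1 - ζ.re := by linarith [Complex.re_le_norm ζ]
    have h3 : ‖1 - ζ‖ ≤ ‖1 + t - ζ‖ := by
      rw [← sq_le_sq₀ (norm_nonneg _) (norm_nonneg _), ← Complex.normSq_eq_norm_sq,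
        ← Complex.normSq_eq_norm_sq, Complex.normSq_apply, Complex.normSq_apply]
      simp
      nlinarith
    have h5 : ‖1 - ζ‖ / (1 - ζ.re) * (t / ‖1 + t - ζ‖) ≤ 2 := by
      rw [div_mul_div_comm, div_le_iff₀ (by apply mul_pos _ h4; linarith)]
      calc ‖1 - ζ‖ * t ≤ ‖1 + t - ζ‖ * (2 * (1 - ζ.re)) := by gcongr; linarith
        _ = _ := by ring
    have h6 : 0 < 1 - ζ.re := by linarith
    calc ‖h ζ‖ * (t / ‖1 + t - ζ‖) ^ N
        ≤ K * (‖1 - ζ‖ / (1 - ζ.re)) ^ N * (t / ‖1 + t - ζ‖) ^ N := by gcongr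
      _ = K * (‖1 - ζ‖ / (1 - ζ.re) * (t / ‖1 + t - ζ‖)) ^ N := by rw [mul_pow]; ring
      _ ≤ K * 2 ^ N := by gcongr
      _ ≤ K' := by rw [hK']; linarith
  have hgs : ∀ z ∈ ball (0 : ℂ) 1, ‖z‖ ≤ Real.exp (-L) → ‖g z‖ ≤ Real.exp (-M) := by
    intro z hz hzL
    have h1 := hs _ (hmaps hz) ((hmem z hz).2.trans hzL)
    rw [hgn]
    refine (div_le_self (by positivity) hK'1).trans ((mul_le_of_le_one_right (norm_nonneg _)
      (pow_le_one₀ (by positivity) ?_)).trans h1)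
    exact div_le_one_of_le₀ (hden z hz) (norm_nonneg _)
  have hz₀ : ‖(((1 - t) / s : ℝ) : ℂ)‖ = (1 - t) / s := by
    rw [Complex.norm_real, Real.norm_of_nonneg (div_nonneg (by linarith) hs0.le)]
  have hz₀m : (((1 - t) / s : ℝ) : ℂ) ∈ ball (0 : ℂ) 1 := by
    rw [mem_ball_zero_iff, hz₀, div_lt_one hs0]
    linarith
  have hfin := (hasHolomorphicSupport_norm isOpen_ball hgd).le_exp hg1 hL hM hgs hz₀m
  rw [hgn, hz₀] at hfin
  have h1 : (s : ℂ) * (((1 - t) / s : ℝ) : ℂ) = 1 - t := by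
    rw [← Complex.ofReal_mul, mul_div_cancel₀ _ hs0.ne']
    push_cast
    ring
  have h2 : t / ‖1 + (t : ℂ) - (1 - t)‖ = 1 / 2 := by
    have : 1 + (t : ℂ) - (1 - t) = ((2 * t : ℝ) : ℂ) := by push_cast; ring
    rw [this, Complex.norm_real, Real.norm_of_nonneg (by linarith)]
    field_simp
  rw [h1, h2] at hfin
  have h3 : t / 2 ≤ 1 - (1 - t) / s := by
    rw [le_sub_iff_add_le, ← le_sub_iff_add_le', div_le_iff₀ hs0, hsd]
    nlinarith
  have h4 : Real.exp (-(M / L * (1 - (1 - t) / s))) ≤ Real.exp (-(M / L * (t / 2))) := by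
    refine Real.exp_le_exp.2 (neg_le_neg ?_)
    gcongr
  rw [← hK']
  calc ‖h (1 - t)‖ = K' * 2 ^ N * (‖h (1 - t)‖ * (1 / 2) ^ N / K') := by
        rw [div_pow, one_pow]; field_simp
    _ ≤ _ := by
        gcongr
        exact hfin.trans h4

end Determinants

section Contraction

variable {n : ℕ} {Ω : Set (En n)} {F : En n → En n} {p q a : En n} {ψ : En n → ℂ} {C : ℝ}

lemma det_fderiv_comp {G H : En n → En n} {x : En n} (hG : DifferentiableAt ℂ G (H x))
    (hH : DifferentiableAt ℂ H x) :
    (fderiv ℂ (G ∘ H) x).det = (fderiv ℂ G (H x)).det * (fderiv ℂ H x).det := by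
  rw [fderiv_comp x hG hH]
  exact LinearMap.det_comp _ _

lemma exists_norm_det_fderiv_iterate_le (hΩ : IsOpen Ω) (hF : DifferentiableOn ℂ F Ω)
    (hm : MapsTo F Ω Ω) (hC : ∀ x ∈ Ω, ‖x‖ ≤ C) (hq : q ∈ Ω) (hfix : F q = q)
    (hdet : ‖(fderiv ℂ F q).det‖ < 1) :
    ∃ r > 0, ∃ θ > 0, θ < 1 ∧ ball q r ⊆ Ω ∧
      ∀ k : ℕ, ∀ x ∈ ball q r, ‖(fderiv ℂ F^[k] x).det‖ ≤ θ ^ k := by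
  obtain ⟨R, hR, hRΩ⟩ := Metric.isOpen_iff.1 hΩ q hq
  have hC0 : 0 ≤ C := (norm_nonneg q).trans (hC q hq)
  obtain ⟨θ, hθ1, hθ2⟩ := exists_between hdet
  have hθ0 : 0 < θ := (norm_nonneg _).trans_lt hθ1
  have hc : ContinuousAt (fun x => ‖(fderiv ℂ F x).det‖) q :=
    (ContinuousLinearMap.continuous_det.continuousAt.comp (continuousAt_fderiv hΩ hF hq)).norm
  obtain ⟨r₀, hr₀, h₀⟩ := Metric.eventually_nhds_iff_ball.1 (hc.eventually_lt_const hθ1)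
  obtain ⟨L, hL⟩ : ∃ L : ℝ, L = 4 * C / R + 1 := ⟨_, rfl⟩
  have hL0 : 0 < L := by rw [hL]; positivity
  have hsub : ball q (min (R / 2) (r₀ / L)) ⊆ Ω := (ball_subset_ball
    ((min_le_left _ _).trans (by linarith))).trans hRΩ
  refine ⟨min (R / 2) (r₀ / L), by positivity, θ, hθ0, hθ2, hsub, fun k x hx => ?_⟩
  have horb : ∀ j, F^[j] x ∈ ball q r₀ := by
    intro j
    have h1 := norm_sub_le_of_norm_le_ball hR ((differentiableOn_iterate hF hm j).mono hRΩ)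
      (fun z hz => hC _ (hm.iterate j (hRΩ hz))) (mem_ball_self (by positivity))
      (ball_subset_ball (min_le_left _ _) hx)
    rw [iterate_fixed hfix] at h1
    rw [mem_ball_iff_norm] at hx ⊢
    have h2 : ‖x - q‖ < r₀ / L := hx.trans_le (min_le_right _ _)
    rw [lt_div_iff₀ hL0] at h2
    refine h1.trans_lt (lt_of_le_of_lt ?_ h2)
    rw [mul_comm]
    gcongr
    linarith
  have hxΩ := hsub hx
  induction k with
  | zero =>
    rw [iterate_zero, fderiv_id, pow_zero]
    change ‖LinearMap.det (LinearMap.id : En n →ₗ[ℂ] En n)‖ ≤ 1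
    rw [LinearMap.det_id, norm_one]
  | succ k ih =>
    rw [iterate_succ', det_fderiv_comp (hF.differentiableAt (hΩ.mem_nhds (hm.iterate k hxΩ)))
      ((differentiableOn_iterate hF hm k).differentiableAt (hΩ.mem_nhds hxΩ)), norm_mul, pow_succ']
    exact mul_le_mul (h₀ _ (horb k)).le ih (norm_nonneg _) hθ0.le

lemma norm_iterate_sub_le_mul {E : Type*} [NormedAddCommGroup E] {Ω : Set E} {F : E → E} {p : E}
    (hm : MapsTo F Ω Ω) {ε δ r : ℝ} (hδ : ∀ x ∈ Ω, ‖x - p‖ < δ → ‖F x - x‖ ≤ ε * ‖x - p‖ ^ 2)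
    (hε : 0 < ε) (hr : 0 < r) (hrδ : 2 * r < δ) {x : E} (hx : x ∈ Ω)
    (hxp : ‖x - p‖ ≤ 3 / 2 * r) {k : ℕ} (hk : k * (4 * ε * r) ≤ 1 / 2) :
    ‖F^[k] x - x‖ ≤ k * (4 * ε * r) * r := by
  induction k with
  | zero => simp
  | succ k ih =>
    have hk' : k * (4 * ε * r) ≤ 1 / 2 := by
      refine le_trans ?_ hk
      push_cast
      nlinarith [show 0 < 4 * ε * r by positivity]
    have h1 := ih hk'
    have h2 : ‖F^[k] x - p‖ ≤ 2 * r := by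
      have h3 := norm_add_le (F^[k] x - x) (x - p)
      rw [sub_add_sub_cancel] at h3
      nlinarith
    have h3 := hδ _ (hm.iterate k hx) (h2.trans_lt hrδ)
    rw [iterate_succ_apply']
    calc ‖F (F^[k] x) - x‖ = ‖(F (F^[k] x) - F^[k] x) + (F^[k] x - x)‖ := by
          rw [sub_add_sub_cancel]
      _ ≤ _ := norm_add_le _ _
      _ ≤ ε * (2 * r) ^ 2 + k * (4 * ε * r) * r := by
          refine add_le_add (h3.trans ?_) h1
          gcongr
      _ = _ := by push_cast; ring

lemma ball_sub_smul_subset (hball : ball (p - a) ‖a‖ ⊆ Ω) {τ : ℝ} (hτ1 : τ ≤ 1) :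
    ball (p - (τ : ℂ) • a) (‖a‖ * τ) ⊆ Ω := by
  refine (ball_subset_ball' ?_).trans hball
  have h1 : p - (τ : ℂ) • a - (p - a) = ((1 - τ : ℝ) : ℂ) • a := by
    push_cast
    module
  rw [dist_eq_norm, h1, norm_smul, Complex.norm_real, Real.norm_of_nonneg (by linarith)]
  exact le_of_eq (by ring)

/-- The iterates stay close to the identity near `p` for a number of steps much larger than the
inverse of the distance to `p`. -/
lemma half_le_norm_det_fderiv_straighten_comp_iterate (hΩ : IsOpen Ω) (hF : DifferentiableOn ℂ F Ω)
    (hm : MapsTo F Ω Ω) (ha : a ≠ 0) (hball : ball (p - a) ‖a‖ ⊆ Ω)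
    (ho : ∀ ε > 0, ∃ δ > 0, ∀ x ∈ Ω, ‖x - p‖ < δ → ‖F x - x‖ ≤ ε * ‖x - p‖ ^ 2)
    (hψ : ContDiff ℂ 2 ψ)
    (hψb : ∀ y, ‖ψ y + inner ℂ a (y - p) / (‖a‖ : ℂ) ^ 2‖ ≤ C * ‖y - p‖ ^ 2) :
    ∃ κ > 0, ∀ ε > 0, ∀ᶠ τ : ℝ in 𝓝[>] 0, ∀ k : ℕ, k * (4 * ε * (‖a‖ * τ)) ≤ κ →
      1 / 2 ≤ ‖(fderiv ℂ (straighten p a ψ ∘ F^[k]) (p - (τ : ℂ) • a)).det‖ := by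
  have hR : 0 < ‖a‖ := norm_pos_iff.2 ha
  obtain ⟨ν, hν, hdet⟩ := exists_pos_le_norm_det (n := n)
  have hΘ := contDiff_straighten (p := p) (a := a) hψ
  have hΘd : Differentiable ℂ (straighten p a ψ) := hΘ.differentiable two_ne_zero
  have hΘc : ContinuousAt (fderiv ℂ (straighten p a ψ)) p :=
    (hΘ.continuous_fderiv two_ne_zero).continuousAt
  obtain ⟨δ₁, hδ₁, h₁⟩ := Metric.continuousAt_iff.1 hΘc ν hν
  refine ⟨min (1 / 2) (ν / 8), by positivity, fun ε hε => ?_⟩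
  obtain ⟨δ, hδ, hδF⟩ := ho ε hε
  have hτ : ∀ᶠ τ : ℝ in 𝓝[>] 0, τ < min 1 (min (δ / (2 * ‖a‖)) (δ₁ / (2 * ‖a‖))) :=
    nhdsWithin_le_nhds (eventually_lt_nhds (by positivity))
  filter_upwards [self_mem_nhdsWithin, hτ] with τ hτ0 hτ k hk
  have hτ0 : 0 < τ := hτ0
  have hτ1 : τ ≤ 1 := (hτ.trans_le (min_le_left _ _)).le
  obtain ⟨r, hr⟩ : ∃ r : ℝ, r = ‖a‖ * τ := ⟨_, rfl⟩
  have hr0 : 0 < r := by rw [hr]; positivity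
  have hrδ : 2 * r < δ := by
    have := hτ.trans_le ((min_le_right _ _).trans (min_le_left _ _))
    rw [lt_div_iff₀ (by positivity)] at this
    rw [hr]; linarith
  have hrδ₁ : 2 * r < δ₁ := by
    have := hτ.trans_le ((min_le_right _ _).trans (min_le_right _ _))
    rw [lt_div_iff₀ (by positivity)] at this
    rw [hr]; linarith
  rw [← hr] at hk
  obtain ⟨z, hz⟩ : ∃ z, z = p - (τ : ℂ) • a := ⟨_, rfl⟩
  have hzp : ‖z - p‖ = r := by
    rw [hz, sub_sub_cancel_left, norm_neg, norm_smul, Complex.norm_real,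
      Real.norm_of_nonneg hτ0.le, hr, mul_comm]
  have hzΩ : ball z (r / 2) ⊆ Ω := by
    rw [hz]
    exact (ball_subset_ball (by rw [← hr]; linarith)).trans (ball_sub_smul_subset hball hτ1)
  have hmove : ∀ x ∈ ball z (r / 2), ‖F^[k] x - x‖ ≤ min (1 / 2) (ν / 8) * r := by
    intro x hx
    refine (norm_iterate_sub_le_mul hm hδF hε hr0 hrδ (hzΩ hx) ?_
      (hk.trans (min_le_left _ _))).trans (by gcongr)
    have h1 := norm_add_le (x - z) (z - p)
    rw [sub_add_sub_cancel] at h1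
    have h2 := mem_ball_iff_norm.1 hx
    linarith
  have hzm : z ∈ ball z (r / 2) := mem_ball_self (by positivity)
  have hFk := differentiableOn_iterate hF hm k
  have hFkz : DifferentiableAt ℂ F^[k] z := hFk.differentiableAt (hΩ.mem_nhds (hzΩ hzm))
  have hA : ‖fderiv ℂ F^[k] z - 1‖ < ν := by
    have h1 := norm_fderiv_le_of_norm_le_ball (f := fun x => F^[k] x - x) (half_pos hr0)
      ((hFk.mono hzΩ).sub differentiableOn_id) hmove
    rw [fderiv_fun_sub hFkz differentiableAt_fun_id] at h1
    have h2 : fderiv ℂ (fun x : En n => x) z = 1 := fderiv_fun_id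
    rw [h2] at h1
    refine h1.trans_lt ?_
    calc 2 * (min (1 / 2) (ν / 8) * r) / (r / 2) ≤ 2 * (ν / 8 * r) / (r / 2) := by
          gcongr; exact min_le_right _ _
      _ = ν / 2 := by field_simp; ring
      _ < ν := by linarith
  have hB : ‖fderiv ℂ (straighten p a ψ) (F^[k] z) - 1‖ < ν := by
    rw [← fderiv_straighten hψb, ← dist_eq_norm]
    refine h₁ ?_
    rw [dist_eq_norm]
    have h1 := norm_add_le (F^[k] z - z) (z - p)
    rw [sub_add_sub_cancel] at h1
    have h2 := hmove z hzm
    have h3 : min (1 / 2) (ν / 8) * r ≤ 1 / 2 * r := by gcongr; exact min_le_left _ _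
    linarith
  rw [← hz, det_fderiv_comp hΘd.differentiableAt hFkz, norm_mul]
  nlinarith [hdet _ hA, hdet _ hB]

/-- The derivative at the fixed point does not contract volume. -/
lemma not_norm_det_fderiv_lt_one (hΩ : IsOpen Ω) (hΩc : IsPreconnected Ω)
    (hF : DifferentiableOn ℂ F Ω) (hm : MapsTo F Ω Ω) {D : ℝ} (hD : ∀ x ∈ Ω, ‖x‖ ≤ D)
    (hq : q ∈ Ω) (hfix : F q = q) (hdet : ‖(fderiv ℂ F q).det‖ < 1)
    (ha : a ≠ 0) (hball : ball (p - a) ‖a‖ ⊆ Ω)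
    (ho : ∀ ε > 0, ∃ δ > 0, ∀ x ∈ Ω, ‖x - p‖ < δ → ‖F x - x‖ ≤ ε * ‖x - p‖ ^ 2)
    (hψ : ContDiff ℂ 2 ψ)
    (hψb : ∀ y, ‖ψ y + inner ℂ a (y - p) / (‖a‖ : ℂ) ^ 2‖ ≤ C * ‖y - p‖ ^ 2)
    {σ K : ℝ} (hσ : 0 < σ) (hK : 0 < K)
    (hup : ∀ (k : ℕ) (η : ℂ), 0 < η.re → ‖η‖ ^ 2 ≤ σ * η.re →
      ‖(fderiv ℂ (straighten p a ψ ∘ F^[k]) (p - η • a)).det‖ ≤ K * (‖η‖ / η.re) ^ (n + 1)) :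
    False := by
  have hR : 0 < ‖a‖ := norm_pos_iff.2 ha
  have hΘ := contDiff_straighten (p := p) (a := a) hψ
  have hΘd : Differentiable ℂ (straighten p a ψ) := hΘ.differentiable two_ne_zero
  have hFk := differentiableOn_iterate hF hm
  obtain ⟨g, hg⟩ : ∃ g : ℕ → En n → ℂ,
      g = fun k x => (fderiv ℂ (straighten p a ψ ∘ F^[k]) x).det := ⟨_, rfl⟩
  have hcomp : ∀ k, DifferentiableOn ℂ (straighten p a ψ ∘ F^[k]) Ω := fun k =>
    hΘd.comp_differentiableOn (hFk k)
  have hgl : ∀ k x v, DifferentiableOn ℂ (fun ζ : ℂ => g k (x + ζ • v))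
      {ζ : ℂ | x + ζ • v ∈ Ω} := fun k x v => by
    rw [hg]
    exact differentiableOn_det_fderiv_line hΩ (hcomp k) x v
  have hgm : ∀ k, ∀ x ∈ Ω, g k x =
      (fderiv ℂ (straighten p a ψ) (F^[k] x)).det * (fderiv ℂ F^[k] x).det := fun k x hx => by
    rw [hg]
    exact det_fderiv_comp hΘd.differentiableAt ((hFk k).differentiableAt (hΩ.mem_nhds hx))
  obtain ⟨B, hB, hBΘ⟩ : ∃ B > 0, ∀ x ∈ Ω, ‖(fderiv ℂ (straighten p a ψ) x).det‖ ≤ B := by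
    obtain ⟨B, hB⟩ := (isCompact_closedBall (0 : En n) D).exists_bound_of_continuousOn
      (hΘ.continuous_fderiv two_ne_zero).continuousOn
    obtain ⟨B', hB', h⟩ := exists_norm_det_le (n := n) B
    exact ⟨B', hB', fun x hx => h _ (hB x (by simpa using hD x hx))⟩
  have hloc : ∀ x ∈ Ω, ∃ r > 0, ∃ B', ∀ k, ∀ z ∈ ball x r, ‖g k z‖ ≤ B' := by
    intro x hx
    obtain ⟨R, hR, hRΩ⟩ := Metric.isOpen_iff.1 hΩ x hx
    obtain ⟨B', hB', h⟩ := exists_norm_det_le (n := n) (2 * D / (R / 2))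
    refine ⟨R / 2, by positivity, B * B', fun k z hz => ?_⟩
    have hzR : ball z (R / 2) ⊆ Ω := (ball_subset_ball' (by
      rw [mem_ball] at hz; linarith)).trans hRΩ
    have hzΩ : z ∈ Ω := hzR (mem_ball_self (by positivity))
    rw [hgm k z hzΩ, norm_mul]
    refine mul_le_mul (hBΘ _ (hm.iterate k hzΩ)) (h _ ?_) (norm_nonneg _) hB.le
    exact norm_fderiv_le_of_norm_le_ball (by positivity) ((hFk k).mono hzR)
      fun w hw => hD _ (hm.iterate k (hzR hw))
  -- exponential smallness near the fixed point
  have hsm₀ : ∃ r > 0, ∃ b > 0, ∀ᶠ k : ℕ in atTop, ∀ z ∈ ball q r,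
      ‖g k z‖ ≤ Real.exp (-(b * (k : ℝ))) := by
    obtain ⟨r, hr, θ, hθ0, hθ1, hrΩ, h⟩ :=
      exists_norm_det_fderiv_iterate_le hΩ hF hm hD hq hfix hdet
    have hlog : 0 < -Real.log θ := neg_pos.2 (Real.log_neg hθ0 hθ1)
    refine ⟨r, hr, -Real.log θ / 2, by positivity, ?_⟩
    filter_upwards [tendsto_natCast_atTop_atTop.eventually_ge_atTop
      (Real.log B / (-Real.log θ / 2))] with k hk z hz
    rw [div_le_iff₀ (by positivity)] at hk
    rw [hgm k z (hrΩ hz), norm_mul]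
    calc _ ≤ B * θ ^ k := mul_le_mul (hBΘ _ (hm.iterate k (hrΩ hz))) (h k z hz)
          (norm_nonneg _) hB.le
      _ = Real.exp (Real.log B + k * Real.log θ) := by
          rw [Real.exp_add, Real.exp_log hB, Real.exp_nat_mul, Real.exp_log hθ0]
      _ ≤ _ := Real.exp_le_exp.2 (by linarith)
  -- transport of the smallness to a point of the normal at `p`
  obtain ⟨s, hs⟩ : ∃ s : ℝ, s = min (σ / 2) (1 / 2) := ⟨_, rfl⟩
  have hs0 : 0 < s := by rw [hs]; positivity
  have hsσ : 2 * s ≤ σ := by linarith [hs ▸ min_le_left (σ / 2) (1 / 2)]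
  have hs1 : s ≤ 1 / 2 := hs ▸ min_le_right (σ / 2) (1 / 2)
  have hmem : ∀ ζ ∈ ball (0 : ℂ) 1, 0 < ((s : ℂ) * (1 - ζ)).re ∧
      ‖(s : ℂ) * (1 - ζ)‖ ^ 2 ≤ 2 * s * ((s : ℂ) * (1 - ζ)).re := by
    intro ζ hζ
    rw [mem_ball_zero_iff] at hζ
    have h1 := (Complex.re_le_norm ζ).trans_lt hζ
    have h2 : Complex.normSq ζ ≤ 1 := by
      rw [Complex.normSq_eq_norm_sq]; nlinarith [norm_nonneg ζ]
    rw [Complex.re_ofReal_mul, Complex.sub_re, Complex.one_re]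
    refine ⟨mul_pos hs0 (by linarith), ?_⟩
    rw [norm_mul, Complex.norm_real, Real.norm_of_nonneg hs0.le, mul_pow,
      ← Complex.normSq_eq_norm_sq]
    have h3 : Complex.normSq (1 - ζ) ≤ 2 * (1 - ζ.re) := by
      rw [Complex.normSq_apply] at h2 ⊢
      simp only [Complex.sub_re, Complex.one_re, Complex.sub_im, Complex.one_im]
      nlinarith
    calc s ^ 2 * Complex.normSq (1 - ζ) ≤ s ^ 2 * (2 * (1 - ζ.re)) := by gcongr
      _ = _ := by ring
  have hline : ∀ ζ : ℂ, p - (s : ℂ) • a + ζ • ((s : ℂ) • a) = p - ((s : ℂ) * (1 - ζ)) • a :=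
    fun ζ => by module
  have hlineΩ : ∀ ζ ∈ ball (0 : ℂ) 1, p - ((s : ℂ) * (1 - ζ)) • a ∈ Ω := by
    intro ζ hζ
    obtain ⟨h1, h2⟩ := hmem ζ hζ
    have h3 := mem_ball_of_orthogonal (p := p) ha (inner_zero_right a)
      (η := (s : ℂ) * (1 - ζ)) (by
        rw [norm_zero]
        simp only [ne_eq, OfNat.ofNat_ne_zero, not_false_eq_true, zero_pow, zero_div, add_zero,
          one_mul]
        nlinarith)
    refine hball ?_
    convert h3 using 1
    module
  have hx₀ : p - (s : ℂ) • a ∈ Ω := by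
    have := hlineΩ 0 (mem_ball_self one_pos)
    simpa using this
  obtain ⟨r, hr, b, hb, hsm⟩ := exp_small_propagates hΩ hΩc tendsto_natCast_atTop_atTop hgl hloc
    hq hsm₀ hx₀
  obtain ⟨L, hL1, hL⟩ : ∃ L : ℝ, 1 ≤ L ∧ Real.exp (-L) * (s * ‖a‖) < r := by
    have h1 : Tendsto (fun L : ℝ => Real.exp (-L) * (s * ‖a‖)) atTop (𝓝 (0 * (s * ‖a‖))) :=
      (Real.tendsto_exp_atBot.comp tendsto_neg_atTop_atBot).mul_const _
    rw [zero_mul] at h1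
    obtain ⟨L, h2, h3⟩ := ((h1.eventually_lt_const hr).and (eventually_ge_atTop 1)).exists
    exact ⟨L, h3, h2⟩
  obtain ⟨K', hK'⟩ : ∃ K' : ℝ, K' = (K * 2 ^ (n + 1) + 1) * 2 ^ (n + 1) := ⟨_, rfl⟩
  have hK'0 : 0 < K' := by rw [hK']; positivity
  have hdecay : ∀ᶠ k : ℕ in atTop, ∀ t : ℝ, 0 < t → t ≤ 1 →
      ‖g k (p - ((s * t : ℝ) : ℂ) • a)‖ ≤ K' * Real.exp (-(b * k / L * (t / 2))) := by
    filter_upwards [hsm] with k hk t ht0 ht1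
    have h1 : DifferentiableOn ℂ (fun ζ : ℂ => g k (p - ((s : ℂ) * (1 - ζ)) • a)) (ball 0 1) := by
      have := hgl k (p - (s : ℂ) • a) ((s : ℂ) • a)
      simp only [hline] at this
      exact this.mono fun ζ hζ => hlineΩ ζ hζ
    have h2 := norm_le_exp_of_nontangential_bound h1 (N := n + 1) hK (fun ζ hζ => ?_) hL1
      (M := b * k) (by positivity) (fun ζ _ hζL => ?_) ht0 ht1
    · rw [← hK'] at h2
      convert h2 using 5
      push_cast
      ring
    · obtain ⟨h2, h3⟩ := hmem ζ hζ
      have h4 := hup k _ h2 (h3.trans (by gcongr))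
      rw [Complex.re_ofReal_mul, norm_mul, Complex.norm_real, Real.norm_of_nonneg hs0.le,
        mul_div_mul_left _ _ hs0.ne', Complex.sub_re, Complex.one_re] at h4
      rw [hg]
      exact h4
    · refine hk _ ?_
      rw [← hline, mem_ball_iff_norm, add_sub_cancel_left, norm_smul, norm_smul,
        Complex.norm_real, Real.norm_of_nonneg hs0.le]
      exact lt_of_le_of_lt (by gcongr) hL
  -- comparison with the lower bound
  obtain ⟨κ, hκ, hlow⟩ :=
    half_le_norm_det_fderiv_straighten_comp_iterate hΩ hF hm ha hball ho hψ hψb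
  obtain ⟨ε, hε⟩ : ∃ ε : ℝ, ε = b * κ / (64 * L * ‖a‖ * s * K') := ⟨_, rfl⟩
  have hL0 : 0 < L := by linarith
  have hε0 : 0 < ε := by rw [hε]; positivity
  obtain ⟨k₀, hk₀⟩ := eventually_atTop.1 hdecay
  have hsmall : ∀ᶠ τ : ℝ in 𝓝[>] 0, τ < min s (κ / (4 * ε * ‖a‖ * (k₀ + 1))) :=
    nhdsWithin_le_nhds (eventually_lt_nhds (by positivity))
  obtain ⟨τ, ⟨hτlow, hτs⟩, hτ0⟩ := (((hlow ε hε0).and hsmall).and self_mem_nhdsWithin).exists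
  have hτ0 : 0 < τ := hτ0
  obtain ⟨X, hX⟩ : ∃ X : ℝ, X = κ / (4 * ε * (‖a‖ * τ)) := ⟨_, rfl⟩
  have hXk : (k₀ : ℝ) + 1 ≤ X := by
    have := hτs.trans_le (min_le_right _ _)
    rw [lt_div_iff₀ (by positivity)] at this
    rw [hX, le_div_iff₀ (by positivity)]
    linarith
  have hX0 : 0 ≤ X := by linarith [k₀.cast_nonneg (α := ℝ)]
  have hfl := Nat.floor_le hX0
  have hfl2 := Nat.lt_floor_add_one X
  have hkk : k₀ ≤ ⌊X⌋₊ := Nat.le_floor (by linarith)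
  have hlow' := hτlow ⌊X⌋₊ (by
    rw [hX] at hfl ⊢
    rwa [le_div_iff₀ (by positivity)] at hfl)
  have hup' := hk₀ _ hkk (τ / s) (by positivity)
    ((div_le_one hs0).2 (hτs.trans_le (min_le_left _ _)).le)
  rw [mul_div_cancel₀ _ hs0.ne', hg] at hup'
  have hfin := hlow'.trans hup'
  have hexp : 4 * K' ≤ b * ⌊X⌋₊ / L * (τ / s / 2) := by
    have h1 : X / 2 ≤ ⌊X⌋₊ := by
      have h2 : (1 : ℝ) ≤ X := by linarith [k₀.cast_nonneg (α := ℝ)]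
      rcases le_or_gt 2 X with h3 | h3
      · linarith
      · have : (1 : ℝ) ≤ ⌊X⌋₊ := by exact_mod_cast Nat.le_floor (by simpa using h2)
        linarith
    calc 4 * K' = b * (X / 2) / L * (τ / s / 2) := by
          rw [hX, hε]; field_simp; ring
      _ ≤ _ := by gcongr
  have h1 : Real.exp (-(b * ⌊X⌋₊ / L * (τ / s / 2))) ≤ 1 / (4 * K' + 1) := by
    rw [Real.exp_neg, ← one_div]
    gcongr
    linarith [Real.add_one_le_exp (b * ⌊X⌋₊ / L * (τ / s / 2))]
  have h2 : 1 / 2 ≤ K' * (1 / (4 * K' + 1)) := hfin.trans (by gcongr)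
  rw [mul_one_div, le_div_iff₀ (by positivity)] at h2
  linarith

end Contraction

lemma LittleOh.exists_forall_norm_sub_le {n : ℕ} {Ω : Set (En n)} {F : En n → En n} {p : En n}
    {k : ℕ} (hp : p ∉ Ω) (ho : LittleOh Ω F p k) :
    ∀ ε > 0, ∃ δ > 0, ∀ x ∈ Ω, ‖x - p‖ < δ → ‖F x - x‖ ≤ ε * ‖x - p‖ ^ k := by
  intro ε hε
  obtain ⟨δ, hδ, h⟩ := Metric.mem_nhdsWithin_iff.1 (ho.eventually_lt_const hε)
  refine ⟨δ, hδ, fun x hx hxδ => ?_⟩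
  have h1 : ‖F x - x‖ / ‖x - p‖ ^ k < ε := h ⟨mem_ball_iff_norm.2 hxδ, hx⟩
  have hxp : 0 < ‖x - p‖ := norm_pos_iff.2 (sub_ne_zero.2 fun h => hp (h ▸ hx))
  rw [div_lt_iff₀ (by positivity)] at h1
  exact h1.le

lemma norm_fderiv_pow_le {E : Type*} [NormedAddCommGroup E] [NormedSpace ℂ E] {Ω : Set E}
    (hΩ : IsOpen Ω) {F : E → E} (hF : DifferentiableOn ℂ F Ω) (hm : MapsTo F Ω Ω) {C : ℝ}
    (hC : ∀ x ∈ Ω, ‖x‖ ≤ C) {q : E} (hq : q ∈ Ω) (hfix : F q = q) :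
    ∃ B, ∀ k : ℕ, ‖(fderiv ℂ F q) ^ k‖ ≤ B := by
  obtain ⟨R, hR, hRΩ⟩ := Metric.isOpen_iff.1 hΩ q hq
  refine ⟨2 * C / R, fun k => ?_⟩
  rw [← ((hF.differentiableAt (hΩ.mem_nhds hq)).hasFDerivAt.iterate hfix k).fderiv]
  exact norm_fderiv_le_of_norm_le_ball hR ((differentiableOn_iterate hF hm k).mono hRΩ)
    fun z hz => hC _ (hm.iterate k (hRΩ hz))

theorem huang_simply_connected_interior_fixed_point
    {n : ℕ} (hn : 2 ≤ n) (Ω : Set (En n)) (ρ : En n → ℝ)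
    (hΩ : IsDomain' Ω) (hbd : Bornology.IsBounded Ω)
    (hsc : SimplyConnectedSpace ↥Ω)
    (hρ : IsPcxCinfBoundary Ω ρ)
    (p : En n) (hp : p ∈ frontier Ω) (hspc : StronglyPcxAt ρ p)
    (F : En n → En n) (hF : DifferentiableOn ℂ F Ω) (hFself : MapsTo F Ω Ω)
    (q : En n) (hq : q ∈ Ω) (hfix : F q = q)
    (ho : LittleOh Ω F p 2) :
    ∀ z ∈ Ω, F z = z := by
  obtain ⟨hΩo, hΩc⟩ := hΩ
  obtain ⟨⟨hρs, hΩρ, hfr, hdρ⟩, -⟩ := hρ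
  have hpΩ : p ∉ Ω := fun h => by
    rw [hΩo.frontier_eq] at hp
    exact hp.2 h
  have hρp : ρ p = 0 := by
    rw [hfr] at hp
    exact hp
  obtain ⟨D, hD⟩ := hbd.exists_norm_le
  have ho' := ho.exists_forall_norm_sub_le hpΩ
  obtain ⟨a, ψ, C, M, c, R, ha, hball, hψ, hψb, hC, hM, hc, hR, hψR⟩ :=
    exists_support_function (contDiff_infty.1 hρs 2) hΩρ hρp (hdρ p hp) hspc
  obtain ⟨B, hB⟩ := norm_fderiv_pow_le hΩo hF hFself hD hq hfix
  rcases power_bounded_trichotomy hB with hdet | hA | ⟨μ, hμ, hμ1, ℓ, hℓ, hℓA⟩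
  · exfalso
    obtain ⟨u, R₁, Q, C', hR₁, hQ, hC', hu, hu0, hus, huψ, huQ⟩ :=
      exists_plurisubharmonic_barrier hΩo hpΩ (D := D + ‖p‖)
        (fun y hy => (norm_sub_le _ _).trans (by linarith [hD y hy])) hψ hM hc hR hψR
    obtain ⟨σ, hσ, K, hK, hup⟩ := norm_det_fderiv_straighten_comp_le ha hball hΩo hψ
      (Q := 32 * Q) (C := 32 * C') (by positivity) (by positivity)
    refine not_norm_det_fderiv_lt_one hΩo hΩc.isPreconnected hF hFself hD hq hfix hdet ha hball
      ho' hψ hψb hσ hK fun k => hup _ (differentiableOn_iterate hF hFself k) fun v η hv hd hdQ => ?_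
    have hη0 : η ≠ 0 := by
      rintro rfl
      simp at hd
    have hηn : 0 < ‖η‖ := norm_pos_iff.2 hη0
    have h1 := barrier_comp_le_on_slice ha hball hψb hC hu hu0 hus hR₁ huψ
      (differentiableOn_iterate hF hFself k) (hFself.iterate k)
      (norm_iterate_sub_le hFself ho' k) hv (η := η) (by linarith)
    obtain ⟨d, hdd⟩ : ∃ d : ℝ, d = 2 * η.re - (1 + ‖v‖ ^ 2 / ‖a‖ ^ 2) * ‖η‖ ^ 2 := ⟨_, rfl⟩
    rw [← hdd] at h1 hd hdQ ⊢
    have hy : F^[k] (p + η • (v - a)) ∈ Ω :=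
      hFself.iterate k (hball (mem_ball_of_orthogonal ha hv (by linarith)))
    have h2 := huQ _ hy (1 / 32 * (d / ‖η‖ ^ 2)) (by
      rw [← mul_div_assoc, le_div_iff₀ (by positivity)]
      linarith) h1
    have h3 : C' / (1 / 32 * (d / ‖η‖ ^ 2)) = 32 * C' * ‖η‖ ^ 2 / d := by field_simp
    rwa [h3] at h2
  · intro z hz
    have h1 := eventually_eq_self_of_fderiv_eq_one hΩo hF hFself hD hq hfix hA
    have h2 := eq_zero_of_eventually_eq_zero hΩo hΩc.isPreconnected (f := fun x => F x - x)
      (hF.sub differentiableOn_id) hq (h1.mono fun x hx => sub_eq_zero.2 hx) hz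
    exact sub_eq_zero.1 h2
  · exact (no_unimodular_eigenvalue hΩo hΩc.isPreconnected hF hFself hD hq hfix ha hball ho' hμ hμ1
      hℓ hℓA).elim
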